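/- arXiv:2206.01574 — 2 statements merged into one kernel-verified Lean document; each statement's English description precedes it below -/
import Mathlib

section
/- For every ε > 0 and c ≥ 1 there is a constant C = C(ε, c, φ₁, φ₂) > 0 such that the following holds. Let R ≥ 2, β ∈ [1/3,1], and let r, r' be integers with R^{1/3} ≤ r ≤ min(R^{1/2}, R^β), r ≤ r' ≤ R^β, and r' ≤ R^ε r; set β₁ = log r / log(R/r) ∈ [1/2,1]. For each small cap γ at scale r for R, let h_γ : ℝ³ → ℂ be a Schwartz function whose Fourier transform is supported in cγ, and let ω_γ : ℝ³ → [0,∞) be an integrable function with ∫ ω_γ ≤ c whose Fourier transform is supported in the translate of γ by minus its centroid. Set g = ∑_γ |h_γ|² * ω_γ and g^h = g − g * ρ̌_{≤(r')^{−1}}. Then ∫_{ℝ³} |g^h|^{2 + 2/β₁} ≤ C R^{Cε} r R ∑_γ ‖h_γ‖_{L^{4 + 4/β₁}(ℝ³)}^{4 + 4/β₁}. -/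
open MeasureTheory Real Complex Set Finset
open scoped FourierTransform Convolution Pointwise

noncomputable section

abbrev R3 : Type := EuclideanSpace ℝ (Fin 3)

/-- The `l`-th small cap at scale `r` for `R`. -/
def smallCapI (R : ℝ) (r l : ℕ) : Set R3 :=
  {ξ | (l : ℝ) / r ≤ ξ 0 ∧ ξ 0 < ((l : ℝ) + 1) / r ∧
       |ξ 1 - (ξ 0)^2| ≤ ((r:ℝ)⁻¹)^2 ∧
       |ξ 2 - 3*(ξ 0)*(ξ 1) + 2*(ξ 0)^3| ≤ R⁻¹}

/-- The centroid (center of mass) of a set `A ⊆ ℝ³`. -/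
def ctr (A : Set R3) : R3 := (volume A).toReal⁻¹ • ∫ x in A, x

/-- The dilate of `A` by the factor `c` about its centroid. -/
def dilate (c : ℝ) (A : Set R3) : Set R3 :=
  (fun x => ctr A + c • (x - ctr A)) '' A

/-- The translate of `A` by minus its centroid. -/
def recenter (A : Set R3) : Set R3 := (fun ξ => ξ - ctr A) '' A

/-- The low-frequency cutoff `ρ_{≤s⁻¹}(ξ) = φ₂(s(ξ₁,ξ₂)) φ₁(ξ₃)`. -/
def cutoff (φ₁ : ℝ → ℝ) (φ₂ : ℝ × ℝ → ℝ) (s : ℝ) : R3 → ℂ :=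
  fun ξ => ((φ₂ (s * ξ 0, s * ξ 1) * φ₁ (ξ 2) : ℝ) : ℂ)

/-- The square-function piece `|h|² ∗ ω` (as a complex-valued function). -/
def piece (h : R3 → ℂ) (ω : R3 → ℝ) : R3 → ℂ :=
  convolution (fun x => ((‖h x‖ ^ 2 : ℝ) : ℂ)) (fun x => ((ω x : ℝ) : ℂ))
    (ContinuousLinearMap.mul ℂ ℂ) volume

/-- The low part `g ∗ ρ̌_{≤s⁻¹}` of a function `g`. -/
def lowPart (φ₁ : ℝ → ℝ) (φ₂ : ℝ × ℝ → ℝ) (s : ℝ) (g : R3 → ℂ) : R3 → ℂ :=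
  convolution g (𝓕⁻ (cutoff φ₁ φ₂ s)) (ContinuousLinearMap.mul ℂ ℂ) volume

/-!
The high part is `∑ |h_γ|² ∗ K_γ` with `K_γ = ω_γ - ω_γ ∗ ρ̌`, where `ρ` is the cutoff at scale
`s⁻¹`. The Fourier transform of `K_γ` lives on the recentred cap, away from the unit level set of
`ρ`. The `l`-th recentred cap lies in the slab `|ξ₂ - 2 (l / r) ξ₁| ≤ 4 r⁻²`, and once
`|ξ₁| ≳ (E r)⁻¹` these slabs separate in `l`, so that for `s ≤ E r` every frequency is seen by
`O(E)` of the `K_γ`. Plancherel and Cauchy-Schwarz then make the summands almost orthogonal in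
`L²`.

To reach `L^p` with `p > 2`, split `|h_γ|²` at height comparable to `t / r`: the `r` low pieces add
up to at most `t / 2`, while the high pieces are controlled in `L²` by Chebyshev. Integrating over
`t` gives the bound with constant `E r ^ (p - 2)`, and for `p = 2 + 2 / β₁` one has
`r ^ (p - 2) = (R / r)² ≤ r R`, because `R ≤ r³`.
-/

section Convolution

variable {𝕜 G E E' F : Type*} [NontriviallyNormedField 𝕜]
  [NormedAddCommGroup E] [NormedSpace 𝕜 E] [NormedAddCommGroup E'] [NormedSpace 𝕜 E']
  [NormedAddCommGroup F] [NormedSpace 𝕜 F]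
  [AddCommGroup G] [MeasurableSpace G] [MeasurableAdd₂ G] [MeasurableNeg G]
  {μ : Measure G} [μ.IsAddLeftInvariant]
  {f : G → E} {g : G → E'}

lemma integral_norm_convolution_le [NormedSpace ℝ F] [SFinite μ]
    (L : E →L[𝕜] E' →L[𝕜] F) (hf : Integrable f μ) (hg : Integrable g μ) :
    ∫ x, ‖(f ⋆[L, μ] g) x‖ ∂μ ≤ ‖L‖ * ((∫ x, ‖f x‖ ∂μ) * ∫ x, ‖g x‖ ∂μ) := by
  have hfg := integral_convolution (ContinuousLinearMap.mul ℝ ℝ) hf.norm hg.norm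
  rw [ContinuousLinearMap.mul_apply'] at hfg
  rw [← hfg, ← integral_const_mul]
  refine integral_mono_of_nonneg (.of_forall fun _ ↦ norm_nonneg _)
    ((hf.norm.integrable_convolution _ hg.norm).const_mul _) ?_
  filter_upwards [hf.norm.ae_convolution_exists (ContinuousLinearMap.mul ℝ ℝ) hg.norm] with x hx
  refine (norm_integral_le_of_norm_le (hx.const_mul ‖L‖) (.of_forall fun t ↦ ?_)).trans_eq
    (integral_const_mul _ _)
  simpa [mul_assoc] using L.le_opNorm₂ (f t) (g (x - t))

variable [μ.IsNegInvariant]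

lemma convolutionExistsAt_of_memLp_top (L : E →L[𝕜] E' →L[𝕜] F) (hf : MemLp f ⊤ μ)
    (hg : Integrable g μ) (x : G) : ConvolutionExistsAt f g x L μ :=
  memLp_one_iff_integrable.1 <|
    L.memLp_of_bilin 1 hf (memLp_one_iff_integrable.2 (hg.comp_sub_left x))

lemma norm_convolution_le_of_ae_norm_le [NormedSpace ℝ F] (L : E →L[𝕜] E' →L[𝕜] F) {C : ℝ}
    (hf : ∀ᵐ y ∂μ, ‖f y‖ ≤ C) (hg : Integrable g μ) (x : G) :
    ‖(f ⋆[L, μ] g) x‖ ≤ ‖L‖ * C * ∫ y, ‖g y‖ ∂μ := by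
  rw [← integral_sub_left_eq_self (fun y ↦ ‖g y‖) μ x, ← integral_const_mul]
  refine norm_integral_le_of_norm_le ((hg.comp_sub_left x).norm.const_mul _) ?_
  filter_upwards [hf] with y hy
  exact (L.le_opNorm₂ _ _).trans (by gcongr)

lemma memLp_top_convolution [NormedSpace ℝ F] [SFinite μ] (L : E →L[𝕜] E' →L[𝕜] F)
    (hf : Integrable f μ) (hf_top : MemLp f ⊤ μ) (hg : Integrable g μ) :
    MemLp (f ⋆[L, μ] g) ⊤ μ :=
  memLp_top_of_bound (hf.integrable_convolution L hg).1 _ <| .of_forall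
    (norm_convolution_le_of_ae_norm_le L (ae_le_lpNorm_exponent_top hf_top) hg)

end Convolution

section ConvolutionMul

open ContinuousLinearMap (mul)

variable {G ι : Type*} [AddCommGroup G] [MeasurableSpace G] [MeasurableAdd₂ G] [MeasurableNeg G]
  {μ : Measure G} [μ.IsAddLeftInvariant] [μ.IsNegInvariant]

lemma convolution_sub_of_memLp_top {f g h : G → ℂ} (hf : MemLp f ⊤ μ) (hg : Integrable g μ)
    (hh : Integrable h μ) (x : G) :
    (f ⋆[mul ℂ ℂ, μ] (g - h)) x = (f ⋆[mul ℂ ℂ, μ] g) x - (f ⋆[mul ℂ ℂ, μ] h) x := by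
  simp only [convolution_def, Pi.sub_apply, map_sub]
  exact integral_sub (convolutionExistsAt_of_memLp_top _ hf hg x)
    (convolutionExistsAt_of_memLp_top _ hf hh x)

lemma finsetSum_convolution_of_memLp_top {s : Finset ι} {f : ι → G → ℂ} {g : G → ℂ}
    (hf : ∀ i ∈ s, MemLp (f i) ⊤ μ) (hg : Integrable g μ) (x : G) :
    ((fun y ↦ ∑ i ∈ s, f i y) ⋆[mul ℂ ℂ, μ] g) x = ∑ i ∈ s, (f i ⋆[mul ℂ ℂ, μ] g) x := by
  simp only [convolution_def, map_sum, _root_.sum_apply]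
  exact integral_finsetSum s fun i hi ↦ convolutionExistsAt_of_memLp_top _ (hf i hi) hg x

lemma convolution_assoc_of_memLp_top [SFinite μ] {f g h : G → ℂ} (hf : MemLp f ⊤ μ)
    (hg : Integrable g μ) (hh : Integrable h μ) (x : G) :
    ((f ⋆[mul ℂ ℂ, μ] g) ⋆[mul ℂ ℂ, μ] h) x = (f ⋆[mul ℂ ℂ, μ] (g ⋆[mul ℂ ℂ, μ] h)) x :=
  convolution_assoc _ _ _ _ mul_assoc hf.1 hg.1 hh.1
    (.of_forall (convolutionExistsAt_of_memLp_top _ hf hg))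
    (hg.norm.ae_convolution_exists _ hh.norm)
    (convolutionExistsAt_of_memLp_top _ hf.norm (hg.norm.integrable_convolution _ hh.norm) x)

lemma finsetSum_convolution_sub_convolution [SFinite μ] {s : Finset ι} {f w : ι → G → ℂ}
    {ρ : G → ℂ} (hf : ∀ i ∈ s, Integrable (f i) μ) (hf_top : ∀ i ∈ s, MemLp (f i) ⊤ μ)
    (hw : ∀ i ∈ s, Integrable (w i) μ) (hρ : Integrable ρ μ) (x : G) :
    ∑ i ∈ s, (f i ⋆[mul ℂ ℂ, μ] w i) x -
        ((fun y ↦ ∑ i ∈ s, (f i ⋆[mul ℂ ℂ, μ] w i) y) ⋆[mul ℂ ℂ, μ] ρ) x =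
      ∑ i ∈ s, (f i ⋆[mul ℂ ℂ, μ] (w i - w i ⋆[mul ℂ ℂ, μ] ρ)) x := by
  rw [finsetSum_convolution_of_memLp_top
    (fun i hi ↦ memLp_top_convolution _ (hf i hi) (hf_top i hi) (hw i hi)) hρ,
    ← Finset.sum_sub_distrib]
  refine Finset.sum_congr rfl fun i hi ↦ ?_
  rw [convolution_assoc_of_memLp_top (hf_top i hi) (hw i hi) hρ,
    convolution_sub_of_memLp_top (hf_top i hi) (hw i hi) ((hw i hi).integrable_convolution _ hρ)]

end ConvolutionMul

section Interpolation

variable {α ι E E' : Type*} [MeasurableSpace α] {μ : Measure α}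
  [NormedAddCommGroup E] [NormedAddCommGroup E']

lemma memLp_of_memLp_one_of_memLp_top {f : α → E} {p : ENNReal} (h₁ : MemLp f 1 μ)
    (h_top : MemLp f ⊤ μ) (hp : 1 ≤ p) : MemLp f p μ := by
  rcases eq_or_ne p ⊤ with rfl | hp_top
  · exact h_top
  have hp0 : p ≠ 0 := (zero_lt_one.trans_le hp).ne'
  have hp1 : 1 ≤ p.toReal := by simpa using ENNReal.toReal_mono hp_top hp
  refine ⟨h₁.1, (eLpNorm_lt_top_iff_lintegral_rpow_enorm_lt_top hp0 hp_top).2 ?_⟩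
  calc ∫⁻ x, ‖f x‖ₑ ^ p.toReal ∂μ
      ≤ ∫⁻ x, eLpNorm f ⊤ μ ^ (p.toReal - 1) * ‖f x‖ₑ ∂μ := by
        refine lintegral_mono_ae ?_
        filter_upwards [ae_le_eLpNormEssSup (f := f) (μ := μ)] with x hx
        calc ‖f x‖ₑ ^ p.toReal = ‖f x‖ₑ ^ (p.toReal - 1) * ‖f x‖ₑ ^ (1 : ℝ) := by
              rw [← ENNReal.rpow_add_of_nonneg _ _ (by linarith) zero_le_one, sub_add_cancel]
          _ ≤ eLpNorm f ⊤ μ ^ (p.toReal - 1) * ‖f x‖ₑ := by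
              rw [ENNReal.rpow_one, eLpNorm_exponent_top]
              gcongr
    _ = eLpNorm f ⊤ μ ^ (p.toReal - 1) * ∫⁻ x, ‖f x‖ₑ ∂μ :=
        lintegral_const_mul'' _ h₁.1.enorm
    _ < ⊤ := ENNReal.mul_lt_top
        (ENNReal.rpow_lt_top_of_nonneg (by linarith) h_top.2.ne)
        (memLp_one_iff_integrable.1 h₁).2

lemma lintegral_Ioi_setLIntegral_mul_rpow {f : α → E} {a p q : ℝ}
    (hf : AEStronglyMeasurable f μ) (ha : 0 ≤ a) (hq : 0 ≤ q) (hqp : q < p) :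
    ∫⁻ t in Ioi (0 : ℝ), (∫⁻ x in {x | t < a * ‖f x‖}, ‖f x‖ₑ ^ q ∂μ) *
        ENNReal.ofReal (t ^ (p - q - 1)) =
      ENNReal.ofReal (a ^ (p - q) / (p - q)) * ∫⁻ x, ‖f x‖ₑ ^ p ∂μ := by
  have hpq : 0 < p - q := sub_pos.2 hqp
  have hf_pow : AEMeasurable (fun x ↦ ‖f x‖ₑ ^ q) μ := hf.enorm.pow_const q
  have haf : AEMeasurable (fun x ↦ a * ‖f x‖) μ := (hf.norm.const_mul a).aemeasurable
  set ν := μ.withDensity fun x ↦ ‖f x‖ₑ ^ q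
  have hν (t : ℝ) : ν {x | t < a * ‖f x‖} = ∫⁻ x in {x | t < a * ‖f x‖}, ‖f x‖ₑ ^ q ∂μ :=
    withDensity_apply₀ _ (nullMeasurableSet_lt aemeasurable_const haf)
  have layer_cake := lintegral_rpow_eq_lintegral_meas_lt_mul ν
    (.of_forall fun x ↦ by positivity) (haf.mono_ac (withDensity_absolutelyContinuous _ _)) hpq
  have h_density : ∫⁻ x, ENNReal.ofReal ((a * ‖f x‖) ^ (p - q)) ∂ν =
      ENNReal.ofReal (a ^ (p - q)) * ∫⁻ x, ‖f x‖ₑ ^ p ∂μ := by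
    rw [lintegral_withDensity_eq_lintegral_mul₀ hf_pow (haf.pow_const _).ennreal_ofReal,
      ← lintegral_const_mul'' _ (hf.enorm.pow_const p)]
    congr with x
    rw [Pi.mul_apply, Real.mul_rpow ha (norm_nonneg _), ENNReal.ofReal_mul (by positivity),
      ← ENNReal.ofReal_rpow_of_nonneg (norm_nonneg _) hpq.le, ofReal_norm, mul_left_comm,
      ← ENNReal.rpow_add_of_nonneg _ _ hq hpq.le, add_sub_cancel]
  simp_rw [← hν]
  rw [div_eq_mul_inv, mul_comm (a ^ _), ENNReal.ofReal_mul (by positivity), mul_assoc,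
    ← h_density, layer_cake, ← mul_assoc, ← ENNReal.ofReal_mul (by positivity),
    inv_mul_cancel₀ hpq.ne', ENNReal.ofReal_one, one_mul]

lemma lintegral_Ioi_sum_setLIntegral_mul_rpow {s : Finset ι} {f : ι → α → E} {a p q : ℝ}
    (hf : ∀ i ∈ s, AEStronglyMeasurable (f i) μ) (ha : 0 ≤ a) (hq : 0 ≤ q) (hqp : q < p) :
    ∫⁻ t in Ioi (0 : ℝ), ∑ i ∈ s,
        (∫⁻ x in {x | t < a * ‖f i x‖}, ‖f i x‖ₑ ^ q ∂μ) * ENNReal.ofReal (t ^ (p - q - 1)) =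
      ENNReal.ofReal (a ^ (p - q) / (p - q)) * ∑ i ∈ s, ∫⁻ x, ‖f i x‖ₑ ^ p ∂μ := by
  have h_meas (i : ι) : Measurable fun t : ℝ ↦
      (∫⁻ x in {x | t < a * ‖f i x‖}, ‖f i x‖ₑ ^ q ∂μ) * ENNReal.ofReal (t ^ (p - q - 1)) := by
    refine Measurable.mul (Antitone.measurable fun t₁ t₂ ht ↦ ?_) (by fun_prop)
    exact lintegral_mono_set fun x hx ↦ ht.trans_lt hx
  rw [lintegral_finsetSum _ fun i _ ↦ h_meas i, Finset.mul_sum]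
  exact Finset.sum_congr rfl fun i hi ↦
    lintegral_Ioi_setLIntegral_mul_rpow (hf i hi) ha hq hqp

lemma lintegral_enorm_rpow_le_of_meas_lt_norm_le {F : α → E'} {s : Finset ι} {f : ι → α → E}
    {C a p q : ℝ} (hF : AEStronglyMeasurable F μ)
    (hf : ∀ i ∈ s, AEStronglyMeasurable (f i) μ)
    (hC : 0 ≤ C) (ha : 0 ≤ a) (hq : 0 ≤ q) (hqp : q < p)
    (h_weak : ∀ t > 0, μ {x | t < ‖F x‖} ≤
      ENNReal.ofReal (C / t ^ q) * ∑ i ∈ s, ∫⁻ x in {x | t < a * ‖f i x‖}, ‖f i x‖ₑ ^ q ∂μ) :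
    ∫⁻ x, ‖F x‖ₑ ^ p ∂μ ≤
      ENNReal.ofReal (p / (p - q) * C * a ^ (p - q)) * ∑ i ∈ s, ∫⁻ x, ‖f i x‖ₑ ^ p ∂μ := by
  have hp : 0 < p := hq.trans_lt hqp
  have h_layer (t : ℝ) (ht : t ∈ Set.Ioi (0 : ℝ)) :
      μ {x | t < ‖F x‖} * ENNReal.ofReal (t ^ (p - 1)) ≤ ENNReal.ofReal C * ∑ i ∈ s,
        (∫⁻ x in {x | t < a * ‖f i x‖}, ‖f i x‖ₑ ^ q ∂μ) * ENNReal.ofReal (t ^ (p - q - 1)) := by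
    have ht0 : 0 < t := ht
    have h_pow : C / t ^ q * t ^ (p - 1) = C * t ^ (p - q - 1) := by
      rw [sub_right_comm, Real.rpow_sub ht0 (p - 1) q, div_mul_eq_mul_div, mul_div_assoc]
    grw [h_weak t ht0]
    rw [mul_right_comm, ← ENNReal.ofReal_mul (by positivity), h_pow, ENNReal.ofReal_mul hC,
      mul_assoc, mul_comm (ENNReal.ofReal _) (∑ i ∈ s, _), Finset.sum_mul]
  calc ∫⁻ x, ‖F x‖ₑ ^ p ∂μ = ∫⁻ x, ENNReal.ofReal (‖F x‖ ^ p) ∂μ := by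
        simp_rw [← ENNReal.ofReal_rpow_of_nonneg (norm_nonneg _) hp.le, ofReal_norm]
    _ = ENNReal.ofReal p *
          ∫⁻ t in Ioi (0 : ℝ), μ {x | t < ‖F x‖} * ENNReal.ofReal (t ^ (p - 1)) :=
        lintegral_rpow_eq_lintegral_meas_lt_mul μ (.of_forall fun _ ↦ norm_nonneg _)
          hF.norm.aemeasurable hp
    _ ≤ ENNReal.ofReal p * ∫⁻ t in Ioi (0 : ℝ), ENNReal.ofReal C * ∑ i ∈ s,
          (∫⁻ x in {x | t < a * ‖f i x‖}, ‖f i x‖ₑ ^ q ∂μ) * ENNReal.ofReal (t ^ (p - q - 1)) := by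
        gcongr ENNReal.ofReal p * ?_
        exact setLIntegral_mono' measurableSet_Ioi h_layer
    _ = ENNReal.ofReal p * (ENNReal.ofReal C *
          (ENNReal.ofReal (a ^ (p - q) / (p - q)) * ∑ i ∈ s, ∫⁻ x, ‖f i x‖ₑ ^ p ∂μ)) := by
        rw [lintegral_const_mul' _ _ ENNReal.ofReal_ne_top,
          lintegral_Ioi_sum_setLIntegral_mul_rpow hf ha hq hqp]
    _ = ENNReal.ofReal (p / (p - q) * C * a ^ (p - q)) * ∑ i ∈ s, ∫⁻ x, ‖f i x‖ₑ ^ p ∂μ := by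
        rw [← mul_assoc, ← mul_assoc, ← ENNReal.ofReal_mul hp.le,
          ← ENNReal.ofReal_mul (by positivity)]
        congr 2
        ring

end Interpolation

section Fourier

variable {V F ι : Type*} [NormedAddCommGroup V] [InnerProductSpace ℝ V] [FiniteDimensional ℝ V]
  [MeasurableSpace V] [BorelSpace V] [NormedAddCommGroup F]

section NormedSpace

variable [NormedSpace ℂ F]

lemma fourier_finsetSum_apply {s : Finset ι} {f : ι → V → F} (hf : ∀ i ∈ s, Integrable (f i))
    (ξ : V) : 𝓕 (fun x ↦ ∑ i ∈ s, f i x) ξ = ∑ i ∈ s, 𝓕 (f i) ξ := by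
  simp only [Real.fourier_eq, Finset.smul_sum]
  exact integral_finsetSum _ fun i hi ↦ (Real.fourierIntegral_convergent_iff ξ).2 (hf i hi)

lemma fourier_sub_apply {f g : V → F} (hf : Integrable f) (hg : Integrable g) (ξ : V) :
    𝓕 (f - g) ξ = 𝓕 f ξ - 𝓕 g ξ := by
  simp only [Real.fourier_eq, Pi.sub_apply, smul_sub]
  exact integral_sub ((Real.fourierIntegral_convergent_iff ξ).2 hf)
    ((Real.fourierIntegral_convergent_iff ξ).2 hg)

lemma continuous_fourier_of_integrable {f : V → F} (hf : Integrable f) : Continuous (𝓕 f) :=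
  VectorFourier.fourierIntegral_continuous Real.continuous_fourierChar continuous_inner hf

end NormedSpace

variable [InnerProductSpace ℂ F] [CompleteSpace F] {f : V → F}

lemma fourier_toLp_ae_eq (h₁ : Integrable f) (h₂ : MemLp f 2) :
    (𝓕 (h₂.toLp f) : Lp F 2 (volume : Measure V)) =ᵐ[volume] 𝓕 f := by
  refine ae_eq_of_integral_contDiff_smul_eq ((Lp.memLp _).locallyIntegrable (by norm_num))
    (continuous_fourier_of_integrable h₁).locallyIntegrable fun g hg hg_supp ↦ ?_
  have hg_supp' : HasCompactSupport (Complex.ofRealCLM ∘ g) := hg_supp.comp_left rfl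
  set φ : SchwartzMap V ℂ := hg_supp'.toSchwartzMap (by fun_prop)
  have h_tempered : ∫ x, φ x • (𝓕 (h₂.toLp f) : Lp F 2 (volume : Measure V)) x =
      ∫ x, 𝓕 φ x • h₂.toLp f x := by
    simpa only [TemperedDistribution.fourier_apply, Lp.toTemperedDistribution_apply] using
      (DFunLike.congr_fun (Lp.fourier_toTemperedDistribution_eq (h₂.toLp f)) φ).symm
  have h_toLp : ∫ x, 𝓕 φ x • h₂.toLp f x = ∫ x, 𝓕 (φ : V → ℂ) x • f x := by
    rw [← SchwartzMap.fourier_coe]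
    refine integral_congr_ae ?_
    filter_upwards [h₂.coeFn_toLp] with x hx
    rw [hx]
  have h_selfAdjoint : ∫ x, 𝓕 (φ : V → ℂ) x • f x = ∫ x, φ x • 𝓕 f x := by
    simpa using! VectorFourier.integral_bilin_fourierIntegral_eq_flip
      (ContinuousLinearMap.lsmul ℂ ℂ) (L := innerₗ V) Real.continuous_fourierChar
      continuous_inner φ.integrable h₁
  simpa [φ] using! h_tempered.trans (h_toLp.trans h_selfAdjoint)

lemma eLpNorm_two_fourier (h₁ : Integrable f) (h₂ : MemLp f 2) :
    eLpNorm (𝓕 f) 2 = eLpNorm f 2 := by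
  rw [← eLpNorm_congr_ae (fourier_toLp_ae_eq h₁ h₂), ← Lp.enorm_def, ← ofReal_norm,
    Lp.norm_fourier_eq, ofReal_norm, Lp.enorm_toLp]

lemma lintegral_enorm_fourier_sq (h₁ : Integrable f) (h₂ : MemLp f 2) :
    ∫⁻ ξ, ‖𝓕 f ξ‖ₑ ^ 2 = ∫⁻ x, ‖f x‖ₑ ^ 2 := by
  have h (g : V → F) : ∫⁻ x, ‖g x‖ₑ ^ 2 = eLpNorm g 2 ^ 2 := by
    simpa using (eLpNorm_nnreal_pow_eq_lintegral (f := g) (p := 2) two_ne_zero).symm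
  rw [h, h, eLpNorm_two_fourier h₁ h₂]

end Fourier

section AlmostOrthogonality

open ContinuousLinearMap (mul)

variable {V ι : Type*} [NormedAddCommGroup V] [InnerProductSpace ℝ V] [FiniteDimensional ℝ V]
  [MeasurableSpace V] [BorelSpace V] {s : Finset ι} {A κ : ℝ}

lemma norm_convolution_mul_le {f K : V → ℂ} {B : ℝ} (hB : 0 ≤ B)
    (hf : ∀ᵐ x, ‖f x‖ ≤ B) (hK : Integrable K) (hκ : ∫ x, ‖K x‖ ≤ κ) (x : V) :
    ‖(f ⋆[mul ℂ ℂ] K) x‖ ≤ B * κ := by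
  have h := norm_convolution_le_of_ae_norm_le (mul ℂ ℂ) hf hK x
  rw [ContinuousLinearMap.opNorm_mul, one_mul] at h
  exact h.trans (by gcongr)

lemma memLp_two_convolution {f K : V → ℂ} (hf : Integrable f) (hf_top : MemLp f ⊤)
    (hK : Integrable K) : MemLp (f ⋆[mul ℂ ℂ] K) 2 :=
  memLp_of_memLp_one_of_memLp_top (memLp_one_iff_integrable.2 (hf.integrable_convolution _ hK))
    (memLp_top_convolution _ hf hf_top hK) one_le_two

lemma sq_norm_sum_mul_le {a b : ι → ℂ} (hb : ∀ i ∈ s, ‖b i‖ ≤ κ)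
    (hA : (#{i ∈ s | b i ≠ 0} : ℝ) ≤ A) :
    ‖∑ i ∈ s, a i * b i‖ ^ 2 ≤ A * κ ^ 2 * ∑ i ∈ s, ‖a i‖ ^ 2 := by
  have hA0 : 0 ≤ A := (Nat.cast_nonneg _).trans hA
  calc ‖∑ i ∈ s, a i * b i‖ ^ 2 = ‖∑ i ∈ s with b i ≠ 0, a i * b i‖ ^ 2 := by
        rw [Finset.sum_filter_of_ne fun i _ h ↦ right_ne_zero_of_mul h]
    _ ≤ (∑ i ∈ s with b i ≠ 0, κ * ‖a i‖) ^ 2 := by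
        gcongr
        refine norm_sum_le_of_le _ fun i hi ↦ ?_
        rw [norm_mul, mul_comm]
        gcongr
        exact hb i (Finset.mem_of_mem_filter i hi)
    _ ≤ #{i ∈ s | b i ≠ 0} * ∑ i ∈ s with b i ≠ 0, (κ * ‖a i‖) ^ 2 := sq_sum_le_card_mul_sum_sq
    _ ≤ A * ∑ i ∈ s, (κ * ‖a i‖) ^ 2 := by
        gcongr
        exact Finset.filter_subset _ _
    _ = A * κ ^ 2 * ∑ i ∈ s, ‖a i‖ ^ 2 := by
        simp_rw [mul_pow, ← Finset.mul_sum, mul_assoc]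

lemma lintegral_enorm_sum_convolution_sq_le {f K : ι → V → ℂ} (hf : ∀ i ∈ s, Integrable (f i))
    (hf_top : ∀ i ∈ s, MemLp (f i) ⊤) (hK : ∀ i ∈ s, Integrable (K i))
    (hκ : ∀ i ∈ s, ∫ x, ‖K i x‖ ≤ κ) (hA : ∀ ξ, (#{i ∈ s | 𝓕 (K i) ξ ≠ 0} : ℝ) ≤ A) :
    ∫⁻ x, ‖∑ i ∈ s, (f i ⋆[mul ℂ ℂ] K i) x‖ₑ ^ 2 ≤
      ENNReal.ofReal (A * κ ^ 2) * ∑ i ∈ s, ∫⁻ x, ‖f i x‖ₑ ^ 2 := by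
  have hA0 : 0 ≤ A := (Nat.cast_nonneg _).trans (hA 0)
  have hfK (i) (hi : i ∈ s) : Integrable (f i ⋆[mul ℂ ℂ] K i) :=
    (hf i hi).integrable_convolution _ (hK i hi)
  have h_meas (i) (hi : i ∈ s) : Measurable fun ξ ↦ ‖𝓕 (f i) ξ‖ₑ ^ 2 :=
    (continuous_fourier_of_integrable (hf i hi)).enorm.measurable.pow_const 2
  have h_pointwise (ξ : V) : ‖𝓕 (fun x ↦ ∑ i ∈ s, (f i ⋆[mul ℂ ℂ] K i) x) ξ‖ₑ ^ 2 ≤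
      ENNReal.ofReal (A * κ ^ 2) * ∑ i ∈ s, ‖𝓕 (f i) ξ‖ₑ ^ 2 := by
    rw [fourier_finsetSum_apply hfK, Finset.sum_congr rfl fun i hi ↦
      Real.fourier_mul_convolution_eq (hf i hi) (hK i hi) ξ]
    have h := ENNReal.ofReal_le_ofReal <| sq_norm_sum_mul_le
      (a := fun i ↦ 𝓕 (f i) ξ) (b := fun i ↦ 𝓕 (K i) ξ)
      (fun i hi ↦ (VectorFourier.norm_fourierIntegral_le_integral_norm _ _ _ _ ξ).trans (hκ i hi))
      (hA ξ)
    rw [ENNReal.ofReal_mul (by positivity),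
      ENNReal.ofReal_sum_of_nonneg fun _ _ ↦ by positivity] at h
    simpa only [ENNReal.ofReal_pow (norm_nonneg _), ofReal_norm] using h
  calc ∫⁻ x, ‖∑ i ∈ s, (f i ⋆[mul ℂ ℂ] K i) x‖ₑ ^ 2
      = ∫⁻ ξ, ‖𝓕 (fun x ↦ ∑ i ∈ s, (f i ⋆[mul ℂ ℂ] K i) x) ξ‖ₑ ^ 2 :=
        (lintegral_enorm_fourier_sq (integrable_finsetSum s hfK) <| memLp_finsetSum s fun i hi ↦
          memLp_two_convolution (hf i hi) (hf_top i hi) (hK i hi)).symm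
    _ ≤ ∫⁻ ξ, ENNReal.ofReal (A * κ ^ 2) * ∑ i ∈ s, ‖𝓕 (f i) ξ‖ₑ ^ 2 :=
        lintegral_mono h_pointwise
    _ = ENNReal.ofReal (A * κ ^ 2) * ∑ i ∈ s, ∫⁻ ξ, ‖𝓕 (f i) ξ‖ₑ ^ 2 := by
        rw [lintegral_const_mul _ (Finset.measurable_sum _ h_meas), lintegral_finsetSum _ h_meas]
    _ = ENNReal.ofReal (A * κ ^ 2) * ∑ i ∈ s, ∫⁻ x, ‖f i x‖ₑ ^ 2 := by
        congr! 2 with i hi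
        exact lintegral_enorm_fourier_sq (hf i hi) <| memLp_of_memLp_one_of_memLp_top
          (memLp_one_iff_integrable.2 (hf i hi)) (hf_top i hi) one_le_two

lemma norm_sum_convolution_le_norm_sum_indicator_add {f K : ι → V → ℂ} {N t : ℝ} (hκ0 : 0 < κ)
    (hN0 : 0 < N) (hf : ∀ i ∈ s, Integrable (f i)) (hf_top : ∀ i ∈ s, MemLp (f i) ⊤)
    (hK : ∀ i ∈ s, Integrable (K i)) (hκ : ∀ i ∈ s, ∫ x, ‖K i x‖ ≤ κ) (hN : (#s : ℝ) ≤ N)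
    (ht : 0 < t) (x : V) :
    ‖∑ i ∈ s, (f i ⋆[mul ℂ ℂ] K i) x‖ ≤
      ‖∑ i ∈ s, ({y | t < 2 * κ * N * ‖f i y‖}.indicator (f i) ⋆[mul ℂ ℂ] K i) x‖ + t / 2 := by
  set S : ι → Set V := fun i ↦ {y | t < 2 * κ * N * ‖f i y‖}
  have hS (i) (hi : i ∈ s) : NullMeasurableSet (S i) :=
    nullMeasurableSet_lt aemeasurable_const ((hf i hi).1.norm.const_mul _).aemeasurable
  have h_top {T : Set V} (i) (hi : i ∈ s) (hT : NullMeasurableSet T) :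
      MemLp (T.indicator (f i)) ⊤ := (hf_top i hi).mono ((hf i hi).indicator₀ hT).1
    (.of_forall fun x ↦ norm_indicator_le_norm_self _ _)
  have h_le (i) (y : V) : ‖(S i)ᶜ.indicator (f i) y‖ ≤ t / (2 * κ * N) := by
    rw [le_div_iff₀' (by positivity)]
    by_cases hy : y ∈ S i
    · simpa [hy] using ht.le
    · simpa [hy] using not_lt.1 hy
  have h_split : ∑ i ∈ s, (f i ⋆[mul ℂ ℂ] K i) x =
      ∑ i ∈ s, ((S i).indicator (f i) ⋆[mul ℂ ℂ] K i) x +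
        ∑ i ∈ s, ((S i)ᶜ.indicator (f i) ⋆[mul ℂ ℂ] K i) x := by
    rw [← Finset.sum_add_distrib]
    refine Finset.sum_congr rfl fun i hi ↦ ?_
    rw [← (convolutionExistsAt_of_memLp_top _ (h_top i hi (hS i hi)) (hK i hi) x).add_distrib
      (convolutionExistsAt_of_memLp_top _ (h_top i hi (hS i hi).compl) (hK i hi) x),
      Set.indicator_self_add_compl]
  have h_small : ‖∑ i ∈ s, ((S i)ᶜ.indicator (f i) ⋆[mul ℂ ℂ] K i) x‖ ≤ t / 2 :=
    calc ‖∑ i ∈ s, ((S i)ᶜ.indicator (f i) ⋆[mul ℂ ℂ] K i) x‖ ≤ ∑ i ∈ s, t / (2 * κ * N) * κ :=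
          norm_sum_le_of_le _ fun i hi ↦ norm_convolution_mul_le (by positivity)
            (.of_forall (h_le i)) (hK i hi) (hκ i hi) x
      _ = #s * (t / (2 * N)) := by rw [Finset.sum_const, nsmul_eq_mul]; field_simp
      _ ≤ N * (t / (2 * N)) := by gcongr
      _ = t / 2 := by field_simp
  rw [h_split]
  exact (norm_add_le _ _).trans (by gcongr)

lemma meas_le_norm_sum_convolution_le {f K : ι → V → ℂ} {t : ℝ} (hf : ∀ i ∈ s, Integrable (f i))
    (hf_top : ∀ i ∈ s, MemLp (f i) ⊤) (hK : ∀ i ∈ s, Integrable (K i))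
    (hκ : ∀ i ∈ s, ∫ x, ‖K i x‖ ≤ κ) (hA : ∀ ξ, (#{i ∈ s | 𝓕 (K i) ξ ≠ 0} : ℝ) ≤ A)
    (ht : 0 < t) :
    volume {x | t ≤ ‖∑ i ∈ s, (f i ⋆[mul ℂ ℂ] K i) x‖} ≤
      ENNReal.ofReal (A * κ ^ 2 / t ^ 2) * ∑ i ∈ s, ∫⁻ x, ‖f i x‖ₑ ^ 2 := by
  set G : V → ℂ := fun x ↦ ∑ i ∈ s, (f i ⋆[mul ℂ ℂ] K i) x
  have hG : Integrable G :=
    integrable_finsetSum s fun i hi ↦ (hf i hi).integrable_convolution _ (hK i hi)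
  calc volume {x | t ≤ ‖G x‖} ≤ volume {x | ENNReal.ofReal (t ^ 2) ≤ ‖G x‖ₑ ^ 2} := by
        refine measure_mono fun x hx ↦ ?_
        rw [Set.mem_ofPred_eq, ← ofReal_norm, ← ENNReal.ofReal_pow (norm_nonneg _)]
        exact ENNReal.ofReal_le_ofReal (pow_le_pow_left₀ ht.le hx 2)
    _ ≤ (∫⁻ x, ‖G x‖ₑ ^ 2) / ENNReal.ofReal (t ^ 2) :=
        meas_ge_le_lintegral_div (hG.1.enorm.pow_const 2) (by positivity) ENNReal.ofReal_ne_top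
    _ ≤ ENNReal.ofReal (A * κ ^ 2) * (∑ i ∈ s, ∫⁻ x, ‖f i x‖ₑ ^ 2) / ENNReal.ofReal (t ^ 2) := by
        gcongr
        exact lintegral_enorm_sum_convolution_sq_le hf hf_top hK hκ hA
    _ = ENNReal.ofReal (A * κ ^ 2 / t ^ 2) * ∑ i ∈ s, ∫⁻ x, ‖f i x‖ₑ ^ 2 := by
        rw [ENNReal.ofReal_div_of_pos (by positivity), ENNReal.mul_div_right_comm]

lemma meas_lt_norm_sum_convolution_le {f K : ι → V → ℂ} {N t : ℝ} (hκ0 : 0 < κ) (hN0 : 0 < N)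
    (hf : ∀ i ∈ s, Integrable (f i)) (hf_top : ∀ i ∈ s, MemLp (f i) ⊤)
    (hK : ∀ i ∈ s, Integrable (K i)) (hκ : ∀ i ∈ s, ∫ x, ‖K i x‖ ≤ κ)
    (hN : (#s : ℝ) ≤ N) (hA : ∀ ξ, (#{i ∈ s | 𝓕 (K i) ξ ≠ 0} : ℝ) ≤ A) (ht : 0 < t) :
    volume {x | t < ‖∑ i ∈ s, (f i ⋆[mul ℂ ℂ] K i) x‖} ≤
      ENNReal.ofReal (4 * A * κ ^ 2 / t ^ 2) *
        ∑ i ∈ s, ∫⁻ x in {x | t < 2 * κ * N * ‖f i x‖}, ‖f i x‖ₑ ^ 2 := by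
  set S : ι → Set V := fun i ↦ {x | t < 2 * κ * N * ‖f i x‖}
  have hS (i) (hi : i ∈ s) : NullMeasurableSet (S i) :=
    nullMeasurableSet_lt aemeasurable_const ((hf i hi).1.norm.const_mul _).aemeasurable
  have hu (i) (hi : i ∈ s) : Integrable ((S i).indicator (f i)) := (hf i hi).indicator₀ (hS i hi)
  have hu_top (i) (hi : i ∈ s) : MemLp ((S i).indicator (f i)) ⊤ :=
    (hf_top i hi).mono (hu i hi).1 (.of_forall fun x ↦ norm_indicator_le_norm_self _ _)
  have h_tail (x : V) :
      ‖∑ i ∈ s, (f i ⋆[mul ℂ ℂ] K i) x‖ ≤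
        ‖∑ i ∈ s, ((S i).indicator (f i) ⋆[mul ℂ ℂ] K i) x‖ + t / 2 :=
    norm_sum_convolution_le_norm_sum_indicator_add hκ0 hN0 hf hf_top hK hκ hN ht x
  calc volume {x | t < ‖∑ i ∈ s, (f i ⋆[mul ℂ ℂ] K i) x‖}
      ≤ volume {x | t / 2 ≤ ‖∑ i ∈ s, ((S i).indicator (f i) ⋆[mul ℂ ℂ] K i) x‖} :=
        measure_mono fun x (hx : t < _) ↦ by
          rw [Set.mem_ofPred_eq]
          linarith [h_tail x]
    _ ≤ ENNReal.ofReal (A * κ ^ 2 / (t / 2) ^ 2) *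
          ∑ i ∈ s, ∫⁻ x, ‖(S i).indicator (f i) x‖ₑ ^ 2 :=
        meas_le_norm_sum_convolution_le hu hu_top hK hκ hA (half_pos ht)
    _ = ENNReal.ofReal (4 * A * κ ^ 2 / t ^ 2) * ∑ i ∈ s, ∫⁻ x in S i, ‖f i x‖ₑ ^ 2 := by
        rw [show A * κ ^ 2 / (t / 2) ^ 2 = 4 * A * κ ^ 2 / t ^ 2 by field]
        congr! 2 with i hi
        rw [← lintegral_indicator₀ (hS i hi)]
        congr with x
        by_cases hx : x ∈ S i <;> simp [hx]

lemma lintegral_enorm_sum_convolution_rpow_le {f K : ι → V → ℂ} {N p : ℝ} (hκ0 : 0 < κ)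
    (hN0 : 0 < N) (hf : ∀ i ∈ s, Integrable (f i)) (hf_top : ∀ i ∈ s, MemLp (f i) ⊤)
    (hK : ∀ i ∈ s, Integrable (K i)) (hκ : ∀ i ∈ s, ∫ x, ‖K i x‖ ≤ κ)
    (hN : (#s : ℝ) ≤ N) (hA : ∀ ξ, (#{i ∈ s | 𝓕 (K i) ξ ≠ 0} : ℝ) ≤ A) (hp : 2 < p) :
    ∫⁻ x, ‖∑ i ∈ s, (f i ⋆[mul ℂ ℂ] K i) x‖ₑ ^ p ≤
      ENNReal.ofReal (p / (p - 2) * (4 * A * κ ^ 2) * (2 * κ * N) ^ (p - 2)) *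
        ∑ i ∈ s, ∫⁻ x, ‖f i x‖ₑ ^ p := by
  have hA0 : 0 ≤ A := (Nat.cast_nonneg _).trans (hA 0)
  refine lintegral_enorm_rpow_le_of_meas_lt_norm_le
    (integrable_finsetSum s fun i hi ↦ (hf i hi).integrable_convolution _ (hK i hi)).1
    (fun i hi ↦ (hf i hi).1) (by positivity) (by positivity) zero_le_two hp fun t ht ↦ ?_
  simpa only [Real.rpow_two, ENNReal.rpow_two] using
    meas_lt_norm_sum_convolution_le hκ0 hN0 hf hf_top hK hκ hN hA ht

theorem integral_norm_sum_convolution_rpow_le {f K : ι → V → ℂ} {N p : ℝ} (hκ0 : 0 < κ)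
    (hN0 : 0 < N) (hf : ∀ i ∈ s, Integrable (f i)) (hf_top : ∀ i ∈ s, MemLp (f i) ⊤)
    (hK : ∀ i ∈ s, Integrable (K i)) (hκ : ∀ i ∈ s, ∫ x, ‖K i x‖ ≤ κ)
    (hN : (#s : ℝ) ≤ N) (hA : ∀ ξ, (#{i ∈ s | 𝓕 (K i) ξ ≠ 0} : ℝ) ≤ A) (hp : 2 < p) :
    ∫ x, ‖∑ i ∈ s, (f i ⋆[mul ℂ ℂ] K i) x‖ ^ p ≤
      p / (p - 2) * (4 * A * κ ^ 2) * (2 * κ * N) ^ (p - 2) * ∑ i ∈ s, ∫ x, ‖f i x‖ ^ p := by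
  have hA0 : 0 ≤ A := (Nat.cast_nonneg _).trans (hA 0)
  have hp0 : 0 < p := two_pos.trans hp
  have h_integral {g : V → ℂ} (hg : AEStronglyMeasurable g) :
      ∫ x, ‖g x‖ ^ p = (∫⁻ x, ‖g x‖ₑ ^ p).toReal := by
    rw [integral_eq_lintegral_of_nonneg_ae (.of_forall fun x ↦ by positivity)
      (hg.norm.aemeasurable.pow_const p).aestronglyMeasurable]
    simp_rw [← ENNReal.ofReal_rpow_of_nonneg (norm_nonneg _) hp0.le, ofReal_norm]
  have h_finite (i) (hi : i ∈ s) : ∫⁻ x, ‖f i x‖ₑ ^ p ≠ ⊤ := by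
    have h_mem : MemLp (f i) (ENNReal.ofReal p) := memLp_of_memLp_one_of_memLp_top
      (memLp_one_iff_integrable.2 (hf i hi)) (hf_top i hi)
      (ENNReal.one_le_ofReal.2 (one_le_two.trans hp.le))
    have h := lintegral_rpow_enorm_lt_top_of_eLpNorm_lt_top
      (ENNReal.ofReal_pos.2 hp0).ne' ENNReal.ofReal_ne_top h_mem.2
    rw [ENNReal.toReal_ofReal hp0.le] at h
    exact h.ne
  have hF : AEStronglyMeasurable fun x ↦ ∑ i ∈ s, (f i ⋆[mul ℂ ℂ] K i) x :=
    (integrable_finsetSum s fun i hi ↦ (hf i hi).integrable_convolution _ (hK i hi)).1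
  rw [h_integral hF, Finset.sum_congr rfl fun i hi ↦ h_integral (hf i hi).1,
    ← ENNReal.toReal_sum h_finite]
  exact (ENNReal.toReal_mono
    (ENNReal.mul_ne_top ENNReal.ofReal_ne_top (ENNReal.sum_ne_top.2 h_finite))
    (lintegral_enorm_sum_convolution_rpow_le hκ0 hN0 hf hf_top hK hκ hN hA hp)).trans_eq
      (ENNReal.toReal_ofReal_mul _ _ (by positivity))

end AlmostOrthogonality

section Centroid

variable {S : Set R3}

lemma ctr_mem_of_convex_of_isClosed {C : Set R3} (hC_convex : Convex ℝ C) (hC_closed : IsClosed C)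
    (hSC : S ⊆ C) (hS : Bornology.IsBounded S) (hS₀ : volume S ≠ 0) : ctr S ∈ C := by
  have h_int : IntegrableOn (fun x : R3 ↦ x) S :=
    (continuous_id.continuousOn.integrableOn_compact hS.isCompact_closure).mono_set subset_closure
  have h_ctr : ctr S = ⨍ x in S, x := (setAverage_eq _ _ _).symm
  rw [h_ctr]
  exact hC_convex.set_average_mem hC_closed hS₀ hS.measure_lt_top.ne
    (ae_mono (Measure.restrict_mono hSC le_rfl) (ae_restrict_mem hC_closed.measurableSet)) h_int

lemma norm_map_le_of_mem_recenter {E : Type*} [NormedAddCommGroup E] [NormedSpace ℝ E]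
    (L : R3 →L[ℝ] E) {a : E} {b : ℝ} {ξ : R3} (hS : Bornology.IsBounded S) (hS₀ : volume S ≠ 0)
    (hL : ∀ x ∈ S, ‖L x - a‖ ≤ b) (hξ : ξ ∈ recenter S) : ‖L ξ‖ ≤ 2 * b := by
  obtain ⟨x, hx, rfl⟩ := hξ
  have h_ctr : ctr S ∈ L ⁻¹' Metric.closedBall a b :=
    ctr_mem_of_convex_of_isClosed ((convex_closedBall a b).linear_preimage L.toLinearMap)
      (Metric.isClosed_closedBall.preimage L.continuous)
      (fun x hx ↦ mem_closedBall_iff_norm.2 (hL x hx)) hS hS₀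
  calc ‖L (x - ctr S)‖ = ‖(L x - a) - (L (ctr S) - a)‖ := by rw [map_sub, sub_sub_sub_cancel_right]
    _ ≤ b + b := norm_sub_le_of_le (hL x hx) (mem_closedBall_iff_norm.1 h_ctr)
    _ = 2 * b := (two_mul b).symm

end Centroid

section SmallCap

variable {R : ℝ} {r l : ℕ} {ξ : R3}

lemma isBounded_smallCapI (R : ℝ) (r l : ℕ) : Bornology.IsBounded (smallCapI R r l) := by
  have h_compact : IsCompact (Set.Icc ((l : ℝ) / r) ((l + 1) / r) ×ˢ
      Metric.closedBall (0 : ℝ) ((r : ℝ)⁻¹ ^ 2) ×ˢ Metric.closedBall (0 : ℝ) R⁻¹) :=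
    isCompact_Icc.prod ((isCompact_closedBall _ _).prod (isCompact_closedBall _ _))
  refine (h_compact.image (f := fun p : ℝ × ℝ × ℝ ↦ (!₂[p.1, p.1 ^ 2 + p.2.1,
    3 * p.1 * (p.1 ^ 2 + p.2.1) - 2 * p.1 ^ 3 + p.2.2] : R3)) (by fun_prop)).isBounded.subset ?_
  rintro ξ ⟨h_left, h_right, h₁, h₂⟩
  refine ⟨(ξ 0, ξ 1 - ξ 0 ^ 2, ξ 2 - 3 * ξ 0 * ξ 1 + 2 * ξ 0 ^ 3),
    ⟨⟨h_left, h_right.le⟩, mem_closedBall_zero_iff.2 h₁, mem_closedBall_zero_iff.2 h₂⟩, ?_⟩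
  ext i
  fin_cases i <;> simp

lemma volume_smallCapI_ne_zero (hr : r ≠ 0) (hR : 0 < R) : volume (smallCapI R r l) ≠ 0 := by
  set U : Set R3 := {ξ | (l : ℝ) / r < ξ 0 ∧ ξ 0 < ((l : ℝ) + 1) / r ∧
    |ξ 1 - ξ 0 ^ 2| < (r : ℝ)⁻¹ ^ 2 ∧ |ξ 2 - 3 * ξ 0 * ξ 1 + 2 * ξ 0 ^ 3| < R⁻¹}
  have hU : IsOpen U :=
    .and (isOpen_lt (by fun_prop) (by fun_prop)) <| .and (isOpen_lt (by fun_prop) (by fun_prop)) <|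
      .and (isOpen_lt (by fun_prop) (by fun_prop)) (isOpen_lt (by fun_prop) (by fun_prop))
  have hU_nonempty : U.Nonempty := by
    have hr' : (0 : ℝ) < r := by positivity
    obtain ⟨a, h_left, h_right⟩ := exists_between (div_lt_div_of_pos_right (lt_add_one (l : ℝ)) hr')
    refine ⟨!₂[a, a ^ 2, a ^ 3], h_left, h_right, ?_, ?_⟩
    · simpa using pow_pos hr' 2
    · simp only [Matrix.cons_val]
      ring_nf
      simpa using hR
  refine ((hU.measure_pos volume hU_nonempty).trans_le (measure_mono ?_)).ne'
  exact fun ξ ⟨h_left, h_right, h₁, h₂⟩ ↦ ⟨h_left.le, h_right, h₁.le, h₂.le⟩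

lemma abs_apply_one_sub_le_of_mem_smallCapI (hξ : ξ ∈ smallCapI R r l) :
    |ξ 1 - 2 * (l / r) * ξ 0 - -(l / r : ℝ) ^ 2| ≤ 2 * (r : ℝ)⁻¹ ^ 2 := by
  obtain ⟨h_left, h_right, h₁, -⟩ := hξ
  rw [add_div, one_div] at h_right
  have h_sq : (ξ 0 - l / r) ^ 2 ≤ (r : ℝ)⁻¹ ^ 2 :=
    pow_le_pow_left₀ (by linarith) (by linarith) 2
  calc |ξ 1 - 2 * (l / r) * ξ 0 - -(l / r : ℝ) ^ 2|
      = |(ξ 1 - ξ 0 ^ 2) + (ξ 0 - l / r) ^ 2| := by ring_nf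
    _ ≤ |ξ 1 - ξ 0 ^ 2| + (ξ 0 - l / r) ^ 2 := (abs_add_le _ _).trans_eq (by rw [abs_sq])
    _ ≤ (r : ℝ)⁻¹ ^ 2 + (r : ℝ)⁻¹ ^ 2 := add_le_add h₁ h_sq
    _ = 2 * (r : ℝ)⁻¹ ^ 2 := (two_mul _).symm

lemma abs_apply_two_sub_le_of_mem_smallCapI (hl : l < r) (hR : (r : ℝ) ^ 2 ≤ R)
    (hξ : ξ ∈ smallCapI R r l) : |ξ 2 - (l / r : ℝ) ^ 3| ≤ 14 * (r : ℝ)⁻¹ := by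
  obtain ⟨h_left, h_right, h₁, h₂⟩ := hξ
  have hr : (1 : ℝ) ≤ r := by exact_mod_cast Nat.one_le_of_lt hl
  have hd : (r : ℝ)⁻¹ ≤ 1 := inv_le_one_of_one_le₀ hr
  have hRd : R⁻¹ ≤ (r : ℝ)⁻¹ := inv_anti₀ (by linarith) (by nlinarith)
  rw [add_div, one_div] at h_right
  set t : ℝ := l / r
  set d : ℝ := (r : ℝ)⁻¹
  have ht0 : 0 ≤ t := by positivity
  have ht1 : t ≤ 1 := (div_le_one₀ (by linarith)).2 (by exact_mod_cast hl.le)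
  have h_curve : |(ξ 0 - t) * (t ^ 2 + t * ξ 0 + ξ 0 ^ 2)| ≤ d * 7 := by
    rw [abs_mul, abs_of_nonneg (sub_nonneg.2 h_left), abs_of_nonneg (by nlinarith)]
    gcongr
    · nlinarith
    · linarith
    · nlinarith
  have h_normal : |3 * ξ 0 * (ξ 1 - ξ 0 ^ 2)| ≤ 6 * d := by
    rw [abs_mul, abs_of_nonneg (by linarith)]
    calc 3 * ξ 0 * |ξ 1 - ξ 0 ^ 2| ≤ 6 * d ^ 2 := by gcongr; linarith
      _ ≤ 6 * d := by gcongr; exact pow_le_of_le_one (by positivity) hd two_ne_zero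
  calc |ξ 2 - t ^ 3| = |(ξ 0 - t) * (t ^ 2 + t * ξ 0 + ξ 0 ^ 2) + 3 * ξ 0 * (ξ 1 - ξ 0 ^ 2) +
        (ξ 2 - 3 * ξ 0 * ξ 1 + 2 * ξ 0 ^ 3)| := by ring_nf
    _ ≤ d * 7 + 6 * d + d :=
        (abs_add_three _ _ _).trans (add_le_add_three h_curve h_normal (h₂.trans hRd))
    _ = 14 * d := by ring

lemma abs_apply_one_sub_le_of_mem_recenter (hr : r ≠ 0) (hR : 0 < R)
    (hξ : ξ ∈ recenter (smallCapI R r l)) :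
    |ξ 1 - 2 * (l / r) * ξ 0| ≤ 4 * (r : ℝ)⁻¹ ^ 2 := by
  let L : R3 →L[ℝ] ℝ := EuclideanSpace.proj 1 - (2 * (l / r : ℝ)) • EuclideanSpace.proj 0
  calc |ξ 1 - 2 * (l / r) * ξ 0| = ‖L ξ‖ := rfl
    _ ≤ 2 * (2 * (r : ℝ)⁻¹ ^ 2) :=
        norm_map_le_of_mem_recenter L (isBounded_smallCapI R r l) (volume_smallCapI_ne_zero hr hR)
          (fun _ ↦ abs_apply_one_sub_le_of_mem_smallCapI) hξ
    _ = 4 * (r : ℝ)⁻¹ ^ 2 := by ring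

lemma abs_apply_two_le_of_mem_recenter (hl : l < r) (hR : (r : ℝ) ^ 2 ≤ R)
    (hξ : ξ ∈ recenter (smallCapI R r l)) : |ξ 2| ≤ 28 * (r : ℝ)⁻¹ := by
  have hr : r ≠ 0 := Nat.ne_zero_of_lt hl
  let L : R3 →L[ℝ] ℝ := EuclideanSpace.proj 2
  calc |ξ 2| = ‖L ξ‖ := rfl
    _ ≤ 2 * (14 * (r : ℝ)⁻¹) :=
        norm_map_le_of_mem_recenter L (isBounded_smallCapI R r l)
          (volume_smallCapI_ne_zero hr (hR.trans_lt' (by positivity)))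
          (fun _ ↦ abs_apply_two_sub_le_of_mem_smallCapI hl hR) hξ
    _ = 28 * (r : ℝ)⁻¹ := by ring

lemma abs_sub_mul_le_of_mem_recenter {a b : ℕ} (hr : r ≠ 0) (hR : 0 < R)
    (ha : ξ ∈ recenter (smallCapI R r a)) (hb : ξ ∈ recenter (smallCapI R r b)) :
    |(a : ℝ) - b| * (r * |ξ 0|) ≤ 4 := by
  have h : |2 * ((a - b : ℝ) / r) * ξ 0| ≤ 8 * (r : ℝ)⁻¹ ^ 2 :=
    calc |2 * ((a - b : ℝ) / r) * ξ 0|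
        = |(ξ 1 - 2 * (b / r) * ξ 0) - (ξ 1 - 2 * (a / r) * ξ 0)| := by ring_nf
      _ ≤ 4 * (r : ℝ)⁻¹ ^ 2 + 4 * (r : ℝ)⁻¹ ^ 2 :=
          (abs_sub _ _).trans (add_le_add (abs_apply_one_sub_le_of_mem_recenter hr hR hb)
            (abs_apply_one_sub_le_of_mem_recenter hr hR ha))
      _ = 8 * (r : ℝ)⁻¹ ^ 2 := by ring
  rw [abs_mul, abs_mul, abs_div, Nat.abs_cast, abs_two] at h
  calc |(a : ℝ) - b| * (r * |ξ 0|)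
      = r ^ 2 / 2 * (2 * (|(a : ℝ) - b| / r) * |ξ 0|) := by field_simp
    _ ≤ r ^ 2 / 2 * (8 * (r : ℝ)⁻¹ ^ 2) := by gcongr
    _ = 4 := by field

end SmallCap

section Overlap

variable {φ₁ : ℝ → ℝ} {φ₂ : ℝ × ℝ → ℝ} {R E s : ℝ} {r l : ℕ} {ξ : R3}

lemma cutoff_eq_one (hφ₁ : ∀ x, |x| ≤ 1 → φ₁ x = 1) (hφ₂ : ∀ x, ‖x‖ ≤ 1 → φ₂ x = 1) (hs : 0 ≤ s)
    (h₀ : s * |ξ 0| ≤ 1) (h₁ : s * |ξ 1| ≤ 1) (h₂ : |ξ 2| ≤ 1) : cutoff φ₁ φ₂ s ξ = 1 := by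
  have h : ‖(s * ξ 0, s * ξ 1)‖ ≤ 1 := by
    simp only [Prod.norm_mk, norm_mul, Real.norm_of_nonneg hs]
    exact max_le h₀ h₁
  simp [cutoff, hφ₁ _ h₂, hφ₂ _ h]

lemma le_or_one_le_of_cutoff_ne_one (hφ₁ : ∀ x, |x| ≤ 1 → φ₁ x = 1)
    (hφ₂ : ∀ x, ‖x‖ ≤ 1 → φ₂ x = 1) (hR : (r : ℝ) ^ 2 ≤ R) (hE : 1 ≤ E) (hs : 0 ≤ s)
    (hsr : s ≤ E * r) (hl : l < r) (hξ : ξ ∈ recenter (smallCapI R r l))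
    (h_cutoff : cutoff φ₁ φ₂ s ξ ≠ 1) : r ≤ 28 * E ∨ 1 ≤ 4 * E * (r * |ξ 0|) := by
  rw [or_iff_not_imp_left, not_le]
  intro hEr
  contrapose! h_cutoff
  have hr0 : (0 : ℝ) < r := by exact_mod_cast Nat.zero_lt_of_lt hl
  have hr : r ≠ 0 := Nat.ne_zero_of_lt hl
  have hl_le : (l : ℝ) / r ≤ 1 := (div_le_one₀ hr0).2 (by exact_mod_cast hl.le)
  have h_ratio : E * (r : ℝ)⁻¹ ≤ 28⁻¹ := by
    rw [← div_eq_mul_inv, div_le_iff₀ hr0]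
    linarith
  have hξ₁ : |ξ 1| ≤ 2 * |ξ 0| + 4 * (r : ℝ)⁻¹ ^ 2 :=
    calc |ξ 1| = |2 * (l / r) * ξ 0 + (ξ 1 - 2 * (l / r) * ξ 0)| := by ring_nf
      _ ≤ |2 * (l / r) * ξ 0| + 4 * (r : ℝ)⁻¹ ^ 2 := (abs_add_le _ _).trans <| by
          gcongr
          exact abs_apply_one_sub_le_of_mem_recenter hr (hR.trans_lt' (by positivity)) hξ
      _ = 2 * (l / r) * |ξ 0| + 4 * (r : ℝ)⁻¹ ^ 2 := by
          rw [abs_mul, abs_of_nonneg (by positivity : (0 : ℝ) ≤ 2 * (l / r))]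
      _ ≤ 2 * 1 * |ξ 0| + 4 * (r : ℝ)⁻¹ ^ 2 := by gcongr
      _ = 2 * |ξ 0| + 4 * (r : ℝ)⁻¹ ^ 2 := by ring
  have h₀ : s * |ξ 0| ≤ E * (r * |ξ 0|) :=
    (mul_le_mul_of_nonneg_right hsr (abs_nonneg _)).trans_eq (mul_assoc _ _ _)
  refine cutoff_eq_one hφ₁ hφ₂ hs (by linarith) ?_ ?_
  · calc s * |ξ 1| ≤ E * r * (2 * |ξ 0| + 4 * (r : ℝ)⁻¹ ^ 2) := by gcongr
      _ = 2 * (E * (r * |ξ 0|)) + 4 * (E * (r : ℝ)⁻¹) := by field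
      _ ≤ 1 := by linarith
  · calc |ξ 2| ≤ 28 * (r : ℝ)⁻¹ := abs_apply_two_le_of_mem_recenter hl hR hξ
      _ ≤ 28 * (E * (r : ℝ)⁻¹) := by gcongr; exact le_mul_of_one_le_left (by positivity) hE
      _ ≤ 1 := by linarith

lemma card_le_of_forall_abs_sub_le {T : Finset ℕ} {D : ℝ} (hD : 0 ≤ D)
    (h : ∀ a ∈ T, ∀ b ∈ T, |(a : ℝ) - b| ≤ D) : (#T : ℝ) ≤ D + 1 := by
  rcases T.eq_empty_or_nonempty with rfl | hT
  · simpa using by linarith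
  have h_sub : T ⊆ Finset.Icc (T.min' hT) (T.min' hT + ⌊D⌋₊) := fun a ha ↦ by
    have h_min : T.min' hT ≤ a := T.min'_le a ha
    have h_dist : a - T.min' hT ≤ ⌊D⌋₊ := by
      apply Nat.le_floor
      rw [Nat.cast_sub h_min]
      exact (le_abs_self _).trans (h a ha _ (T.min'_mem hT))
    exact Finset.mem_Icc.2 ⟨h_min, by lia⟩
  have h_card : #T ≤ ⌊D⌋₊ + 1 := (Finset.card_le_card h_sub).trans_eq (by rw [Nat.card_Icc]; lia)
  calc (#T : ℝ) ≤ ⌊D⌋₊ + 1 := by exact_mod_cast h_card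
    _ ≤ D + 1 := by gcongr; exact Nat.floor_le hD

lemma card_le_of_mem_recenter_of_cutoff_ne_one {T : Finset ℕ} (hφ₁ : ∀ x, |x| ≤ 1 → φ₁ x = 1)
    (hφ₂ : ∀ x, ‖x‖ ≤ 1 → φ₂ x = 1) (hR : (r : ℝ) ^ 2 ≤ R) (hE : 1 ≤ E) (hs : 0 ≤ s)
    (hsr : s ≤ E * r) (hT : T ⊆ Finset.range r)
    (hξ : ∀ l ∈ T, ξ ∈ recenter (smallCapI R r l) ∧ cutoff φ₁ φ₂ s ξ ≠ 1) :
    (#T : ℝ) ≤ 28 * E := by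
  rcases T.eq_empty_or_nonempty with rfl | ⟨l, hl⟩
  · simpa using by linarith
  have hlr : l < r := Finset.mem_range.1 (hT hl)
  have hR0 : 0 < R := by
    have hr : (0 : ℝ) < r := by exact_mod_cast Nat.zero_lt_of_lt hlr
    exact hR.trans_lt' (by positivity)
  obtain ⟨hl_mem, hl_cutoff⟩ := hξ l hl
  obtain hrE | h_freq :=
    le_or_one_le_of_cutoff_ne_one hφ₁ hφ₂ hR hE hs hsr hlr hl_mem hl_cutoff
  · have h_card : (#T : ℝ) ≤ r := by
      exact_mod_cast (Finset.card_le_card hT).trans_eq (Finset.card_range r)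
    exact h_card.trans hrE
  have h_diam (a) (ha : a ∈ T) (b) (hb : b ∈ T) : |(a : ℝ) - b| ≤ 16 * E :=
    calc |(a : ℝ) - b| ≤ |(a : ℝ) - b| * (4 * E * (r * |ξ 0|)) :=
          le_mul_of_one_le_right (abs_nonneg _) h_freq
      _ = 4 * E * (|(a : ℝ) - b| * (r * |ξ 0|)) := by ring
      _ ≤ 4 * E * 4 := by
          gcongr
          exact abs_sub_mul_le_of_mem_recenter (Nat.ne_zero_of_lt hlr) hR0 (hξ a ha).1 (hξ b hb).1
      _ = 16 * E := by ring
  linarith [card_le_of_forall_abs_sub_le (by linarith) h_diam]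

end Overlap

section FourierDilation

lemma det_adjoint {𝕜 V : Type*} [RCLike 𝕜] [NormedAddCommGroup V] [InnerProductSpace 𝕜 V]
    [FiniteDimensional 𝕜 V] (A : V →ₗ[𝕜] V) :
    LinearMap.det (LinearMap.adjoint A) = star (LinearMap.det A) := by
  let b := (stdOrthonormalBasis 𝕜 V).toBasis
  rw [← LinearMap.det_toMatrix b, ← LinearMap.det_toMatrix b,
    LinearMap.toMatrix_adjoint (stdOrthonormalBasis 𝕜 V) (stdOrthonormalBasis 𝕜 V),
    Matrix.det_conjTranspose]

lemma integral_comp_linearMap {V E : Type*} [NormedAddCommGroup V] [NormedSpace ℝ V]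
    [FiniteDimensional ℝ V] [MeasurableSpace V] [BorelSpace V] [NormedAddCommGroup E]
    [NormedSpace ℝ E] (μ : Measure V) [μ.IsAddHaarMeasure] {A : V →ₗ[ℝ] V}
    (hA : LinearMap.det A ≠ 0) (g : V → E) :
    ∫ x, g (A x) ∂μ = |(LinearMap.det A)⁻¹| • ∫ x, g x ∂μ := by
  have h_emb : MeasurableEmbedding A :=
    (A.equivOfDetNeZero hA).toContinuousLinearEquiv.toHomeomorph.measurableEmbedding
  rw [← h_emb.integral_map, Measure.map_linearMap_addHaar_eq_smul_addHaar μ hA,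
    integral_smul_measure, ENNReal.toReal_ofReal (abs_nonneg _)]

lemma integral_norm_fourierInv_comp_linearMap {V E : Type*} [NormedAddCommGroup V]
    [InnerProductSpace ℝ V] [FiniteDimensional ℝ V] [MeasurableSpace V] [BorelSpace V]
    [NormedAddCommGroup E] [NormedSpace ℂ E] {A : V →ₗ[ℝ] V} (hA : LinearMap.det A ≠ 0)
    (f : V → E) : ∫ x, ‖𝓕⁻ (f ∘ A) x‖ = ∫ x, ‖𝓕⁻ f x‖ := by
  have h_det : LinearMap.det (LinearMap.adjoint A) = LinearMap.det A := det_adjoint A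
  have h_adjoint (x : V) :
      𝓕⁻ (f ∘ A) (LinearMap.adjoint A x) = |(LinearMap.det A)⁻¹| • 𝓕⁻ f x := by
    rw [Real.fourierInv_eq, Real.fourierInv_eq, ← integral_comp_linearMap volume hA]
    simp only [LinearMap.adjoint_inner_right, Function.comp_apply]
  have h_abs : |(LinearMap.det A)⁻¹| ≠ 0 := abs_ne_zero.2 (inv_ne_zero hA)
  apply mul_left_cancel₀ h_abs
  calc |(LinearMap.det A)⁻¹| * ∫ x, ‖𝓕⁻ (f ∘ A) x‖
      = ∫ x, ‖𝓕⁻ (f ∘ A) (LinearMap.adjoint A x)‖ := by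
        rw [integral_comp_linearMap volume (h_det.trans_ne hA) (fun x ↦ ‖𝓕⁻ (f ∘ A) x‖), h_det,
          smul_eq_mul]
    _ = |(LinearMap.det A)⁻¹| * ∫ x, ‖𝓕⁻ f x‖ := by
        simp only [h_adjoint, norm_smul, Real.norm_eq_abs, abs_abs, integral_const_mul]

end FourierDilation

section FourierSmooth

variable {V E : Type*} [NormedAddCommGroup V] [InnerProductSpace ℝ V] [FiniteDimensional ℝ V]
  [MeasurableSpace V] [BorelSpace V] [NormedAddCommGroup E] [NormedSpace ℂ E] {f : V → E}

lemma integrable_fourierInv_of_hasCompactSupport (hf : ContDiff ℝ (⊤ : ℕ∞) f)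
    (hf_supp : HasCompactSupport f) : Integrable (𝓕⁻ f) :=
  SchwartzMap.fourierInv_coe (hf_supp.toSchwartzMap hf) ▸ SchwartzMap.integrable _

lemma fourier_fourierInv_of_hasCompactSupport [CompleteSpace E] (hf : ContDiff ℝ (⊤ : ℕ∞) f)
    (hf_supp : HasCompactSupport f) : 𝓕 (𝓕⁻ f) = f := by
  have h_inv : 𝓕 (𝓕⁻ (hf_supp.toSchwartzMap hf)) = hf_supp.toSchwartzMap hf :=
    FourierTransform.fourier_fourierInv_eq _
  have h_coe := congrArg DFunLike.coe h_inv
  rwa [SchwartzMap.fourier_coe, SchwartzMap.fourierInv_coe] at h_coe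

end FourierSmooth

section Cutoff

variable {φ₁ : ℝ → ℝ} {φ₂ : ℝ × ℝ → ℝ} {s : ℝ}

lemma integral_norm_fourierInv_cutoff (φ₁ : ℝ → ℝ) (φ₂ : ℝ × ℝ → ℝ) (hs : s ≠ 0) :
    ∫ x, ‖𝓕⁻ (cutoff φ₁ φ₂ s) x‖ = ∫ x, ‖𝓕⁻ (cutoff φ₁ φ₂ 1) x‖ := by
  let A : R3 →ₗ[ℝ] R3 := (Matrix.diagonal ![s, s, 1]).toEuclideanLin
  have hA : LinearMap.det A ≠ 0 := by
    simp [A, Matrix.toEuclideanLin_eq_toLin_orthonormal, Fin.prod_univ_three, hs]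
  have h_comp : cutoff φ₁ φ₂ s = cutoff φ₁ φ₂ 1 ∘ A := by
    ext ξ
    simp [cutoff, A, Matrix.toLpLin_apply, Matrix.mulVec_diagonal]
  rw [h_comp, integral_norm_fourierInv_comp_linearMap hA]

lemma hasCompactSupport_cutoff (hφ₁ : HasCompactSupport φ₁) (hφ₂ : HasCompactSupport φ₂)
    (hs : s ≠ 0) : HasCompactSupport (cutoff φ₁ φ₂ s) := by
  refine .of_support_subset_isCompact ((hφ₂.isCompact.prod hφ₁.isCompact).image
    (f := fun p : (ℝ × ℝ) × ℝ ↦ (!₂[s⁻¹ * p.1.1, s⁻¹ * p.1.2, p.2] : R3)) (by fun_prop)) ?_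
  intro ξ hξ
  obtain ⟨hξ₂, hξ₁⟩ : φ₂ (s * ξ 0, s * ξ 1) ≠ 0 ∧ φ₁ (ξ 2) ≠ 0 := by simpa [cutoff] using hξ
  refine ⟨((s * ξ 0, s * ξ 1), ξ 2), ⟨subset_tsupport _ hξ₂, subset_tsupport _ hξ₁⟩, ?_⟩
  ext i
  fin_cases i <;> simp [hs]

lemma contDiff_cutoff {n : WithTop ℕ∞} (hφ₁ : ContDiff ℝ n φ₁) (hφ₂ : ContDiff ℝ n φ₂) (s : ℝ) :
    ContDiff ℝ n (cutoff φ₁ φ₂ s) :=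
  Complex.ofRealCLM.contDiff.comp <|
    (hφ₂.comp (by fun_prop : ContDiff ℝ n fun ξ : R3 ↦ (s * ξ 0, s * ξ 1))).mul
      (hφ₁.comp (by fun_prop : ContDiff ℝ n fun ξ : R3 ↦ ξ 2))

end Cutoff

section HighKernel

open ContinuousLinearMap (mul)

variable {φ₁ : ℝ → ℝ} {φ₂ : ℝ × ℝ → ℝ} {s : ℝ} {w : R3 → ℂ}

/-- The high-frequency part `w - w ∗ ρ̌_{≤s⁻¹}` of a weight `w`: convolving `|h|²` with it gives the
contribution of `piece h w` to the high part of the square function. -/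
def highKernel (φ₁ : ℝ → ℝ) (φ₂ : ℝ × ℝ → ℝ) (s : ℝ) (w : R3 → ℂ) : R3 → ℂ :=
  w - w ⋆[mul ℂ ℂ] 𝓕⁻ (cutoff φ₁ φ₂ s)

lemma integrable_highKernel (hw : Integrable w) (hρ : Integrable (𝓕⁻ (cutoff φ₁ φ₂ s))) :
    Integrable (highKernel φ₁ φ₂ s w) :=
  hw.sub (hw.integrable_convolution _ hρ)

lemma integral_norm_highKernel_le (hw : Integrable w) (hρ : Integrable (𝓕⁻ (cutoff φ₁ φ₂ s)))
    (hs : s ≠ 0) : ∫ x, ‖highKernel φ₁ φ₂ s w x‖ ≤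
      (∫ x, ‖w x‖) * (1 + ∫ x, ‖𝓕⁻ (cutoff φ₁ φ₂ 1) x‖) := by
  have h_conv : Integrable (w ⋆[mul ℂ ℂ] 𝓕⁻ (cutoff φ₁ φ₂ s)) := hw.integrable_convolution _ hρ
  calc ∫ x, ‖highKernel φ₁ φ₂ s w x‖
      ≤ ∫ x, (‖w x‖ + ‖(w ⋆[mul ℂ ℂ] 𝓕⁻ (cutoff φ₁ φ₂ s)) x‖) :=
        integral_mono (integrable_highKernel hw hρ).norm (hw.norm.add h_conv.norm)
          fun x ↦ norm_sub_le _ _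
    _ = (∫ x, ‖w x‖) + ∫ x, ‖(w ⋆[mul ℂ ℂ] 𝓕⁻ (cutoff φ₁ φ₂ s)) x‖ :=
        integral_add hw.norm h_conv.norm
    _ ≤ (∫ x, ‖w x‖) + (∫ x, ‖w x‖) * ∫ x, ‖𝓕⁻ (cutoff φ₁ φ₂ 1) x‖ := by
        gcongr
        rw [← integral_norm_fourierInv_cutoff φ₁ φ₂ hs]
        simpa using integral_norm_convolution_le (mul ℂ ℂ) hw hρ
    _ = (∫ x, ‖w x‖) * (1 + ∫ x, ‖𝓕⁻ (cutoff φ₁ φ₂ 1) x‖) := by ring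

lemma fourier_highKernel (hφ₁ : ContDiff ℝ (⊤ : ℕ∞) φ₁) (hφ₁_supp : HasCompactSupport φ₁)
    (hφ₂ : ContDiff ℝ (⊤ : ℕ∞) φ₂) (hφ₂_supp : HasCompactSupport φ₂) (hs : s ≠ 0)
    (hw : Integrable w) (ξ : R3) :
    𝓕 (highKernel φ₁ φ₂ s w) ξ = 𝓕 w ξ * (1 - cutoff φ₁ φ₂ s ξ) := by
  have h_contDiff := contDiff_cutoff hφ₁ hφ₂ s
  have h_supp := hasCompactSupport_cutoff hφ₁_supp hφ₂_supp hs
  have hρ := integrable_fourierInv_of_hasCompactSupport h_contDiff h_supp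
  rw [highKernel, fourier_sub_apply hw (hw.integrable_convolution _ hρ),
    Real.fourier_mul_convolution_eq hw hρ,
    fourier_fourierInv_of_hasCompactSupport h_contDiff h_supp, mul_one_sub]

end HighKernel

section Exponents

variable {r R : ℝ}

lemma le_pow_of_rpow_one_div_le {x : ℝ} {n : ℕ} (hn : n ≠ 0) (hR : 0 ≤ R)
    (h : R ^ (1 / n : ℝ) ≤ x) : R ≤ x ^ n := by
  calc R = (R ^ (1 / n : ℝ)) ^ n := by rw [one_div, Real.rpow_inv_natCast_pow hR hn]
    _ ≤ x ^ n := by gcongr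

lemma pow_le_of_le_rpow_one_div {x : ℝ} {n : ℕ} (hn : n ≠ 0) (hR : 0 ≤ R) (hx : 0 ≤ x)
    (h : x ≤ R ^ (1 / n : ℝ)) : x ^ n ≤ R := by
  calc x ^ n ≤ (R ^ (1 / n : ℝ)) ^ n := by gcongr
    _ = R := by rw [one_div, Real.rpow_inv_natCast_pow hR hn]

lemma div_log_div_log (a x y : ℝ) : a / (Real.log x / Real.log y) = a * Real.logb x y := by
  rw [div_div_eq_mul_div, ← Real.log_div_log, mul_div_assoc]

lemma logb_div_mem_Icc (hr : 1 < r) (hR : r ^ 2 ≤ R) (hR' : R ≤ r ^ 3) :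
    Real.logb r (R / r) ∈ Set.Icc 1 2 := by
  have hr0 : 0 < r := by linarith
  have hR0 : 0 < R := hR.trans_lt' (by positivity)
  rw [Set.mem_Icc, Real.le_logb_iff_rpow_le hr (by positivity),
    Real.logb_le_iff_le_rpow hr (by positivity), Real.rpow_one, Real.rpow_two, le_div_iff₀ hr0,
    div_le_iff₀ hr0]
  exact ⟨by linarith, by linarith⟩

lemma rpow_two_mul_logb_div_le (hr : 1 < r) (hR : 0 < R) (hR' : R ≤ r ^ 3) :
    r ^ (2 * Real.logb r (R / r)) ≤ r * R := by
  have hr0 : 0 < r := by linarith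
  calc r ^ (2 * Real.logb r (R / r)) = (R / r) ^ 2 := by
        rw [mul_comm, Real.rpow_mul hr0.le, Real.rpow_logb hr0 hr.ne' (by positivity),
          Real.rpow_two]
    _ = R * R / r ^ 2 := by ring
    _ ≤ r ^ 3 * R / r ^ 2 := by gcongr
    _ = r * R := by field

lemma interpolationConstant_le {E κ q : ℝ} (hr : 1 < r) (hR : r ^ 2 ≤ R) (hR' : R ≤ r ^ 3)
    (hE : 0 ≤ E) (hκ : 1 ≤ κ) (hq : q = 2 * Real.logb r (R / r)) :
    (2 + q) / q * (4 * (28 * E) * κ ^ 2) * (2 * κ * r) ^ q ≤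
      224 * κ ^ 2 * (2 * κ) ^ 4 * E * r * R := by
  obtain ⟨h_logb, h_logb'⟩ := logb_div_mem_Icc hr hR hR'
  have h_ratio : (2 + q) / q ≤ 2 := by
    rw [div_le_iff₀ (by linarith)]
    linarith
  have h_const : (2 * κ) ^ q ≤ (2 * κ) ^ 4 := by
    rw [← Real.rpow_natCast]
    exact Real.rpow_le_rpow_of_exponent_le (by linarith) (by push_cast; linarith)
  have h_rpow : r ^ q ≤ r * R :=
    hq ▸ rpow_two_mul_logb_div_le hr (hR.trans_lt' (by positivity)) hR'
  calc (2 + q) / q * (4 * (28 * E) * κ ^ 2) * (2 * κ * r) ^ q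
      = (2 + q) / q * (4 * (28 * E) * κ ^ 2) * ((2 * κ) ^ q * r ^ q) := by
        rw [Real.mul_rpow (by positivity) (by positivity)]
    _ ≤ 2 * (4 * (28 * E) * κ ^ 2) * ((2 * κ) ^ 4 * (r * R)) := by gcongr
    _ = 224 * κ ^ 2 * (2 * κ) ^ 4 * E * r * R := by ring

end Exponents

section HighPart

open ContinuousLinearMap (mul)

lemma memLp_top_ofReal_norm_sq {α E : Type*} [MeasurableSpace α] {μ : Measure α}
    [NormedAddCommGroup E] {h : α → E} (hh : MemLp h ⊤ μ) :
    MemLp (fun x ↦ ((‖h x‖ ^ 2 : ℝ) : ℂ)) ⊤ μ := by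
  have h_sq : MemLp (fun x ↦ ‖h x‖ ^ 2) ⊤ μ := by
    simpa only [← sq, Pi.pow_def] using hh.norm.mul (p := ⊤) (r := ⊤) hh.norm
  exact h_sq.ofReal

/-- A smooth compactly supported bump function equal to `1` on the unit ball, such as the
functions `φ₁`, `φ₂` out of which `cutoff` is built. -/
structure IsUnitBump {V : Type*} [NormedAddCommGroup V] [NormedSpace ℝ V] (φ : V → ℝ) : Prop where
  contDiff : ContDiff ℝ (⊤ : ℕ∞) φ
  eq_one : ∀ x, ‖x‖ ≤ 1 → φ x = 1
  hasCompactSupport : HasCompactSupport φ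

variable {φ₁ : ℝ → ℝ} {φ₂ : ℝ × ℝ → ℝ} {s : ℝ} {r : ℕ} {h : ℕ → R3 → ℂ} {ω : ℕ → R3 → ℝ}

lemma sum_piece_sub_lowPart (hρ : Integrable (𝓕⁻ (cutoff φ₁ φ₂ s)))
    (hh : ∀ l < r, MemLp (h l) 2) (hh_top : ∀ l < r, MemLp (h l) ⊤)
    (hω : ∀ l < r, Integrable (ω l)) (x : R3) :
    ∑ l ∈ Finset.range r, piece (h l) (ω l) x -
        lowPart φ₁ φ₂ s (fun y ↦ ∑ l ∈ Finset.range r, piece (h l) (ω l) y) x =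
      ∑ l ∈ Finset.range r, ((fun x ↦ ((‖h l x‖ ^ 2 : ℝ) : ℂ)) ⋆[mul ℂ ℂ]
        highKernel φ₁ φ₂ s fun x ↦ (ω l x : ℂ)) x :=
  finsetSum_convolution_sub_convolution
    (fun l hl ↦ ((hh l (Finset.mem_range.1 hl)).integrable_norm_pow two_ne_zero).ofReal)
    (fun l hl ↦ memLp_top_ofReal_norm_sq (hh_top l (Finset.mem_range.1 hl)))
    (fun l hl ↦ (hω l (Finset.mem_range.1 hl)).ofReal) hρ x

lemma card_filter_fourier_highKernel_ne_zero_le {R E : ℝ} (hφ₁ : IsUnitBump φ₁)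
    (hφ₂ : IsUnitBump φ₂) (hR : (r : ℝ) ^ 2 ≤ R) (hE : 1 ≤ E) (hs : 0 < s) (hsr : s ≤ E * r)
    (hω : ∀ l < r, Integrable (ω l))
    (hω_supp : ∀ l < r, Function.support (𝓕 fun x ↦ (ω l x : ℂ)) ⊆ recenter (smallCapI R r l))
    (ξ : R3) :
    (#{l ∈ Finset.range r | 𝓕 (highKernel φ₁ φ₂ s fun x ↦ (ω l x : ℂ)) ξ ≠ 0} : ℝ) ≤ 28 * E := by
  refine card_le_of_mem_recenter_of_cutoff_ne_one (ξ := ξ) hφ₁.eq_one hφ₂.eq_one hR hE hs.le hsr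
    (Finset.filter_subset _ _) fun l hl ↦ ?_
  obtain ⟨hlr, hξ⟩ := Finset.mem_filter.1 hl
  rw [Finset.mem_range] at hlr
  rw [fourier_highKernel (w := fun x ↦ (ω l x : ℂ)) hφ₁.contDiff hφ₁.hasCompactSupport
    hφ₂.contDiff hφ₂.hasCompactSupport hs.ne' (hω l hlr).ofReal, mul_ne_zero_iff, sub_ne_zero] at hξ
  exact ⟨hω_supp l hlr hξ.1, hξ.2.symm⟩

lemma integral_norm_sum_piece_sub_lowPart_rpow_le {R E c p : ℝ} (hφ₁ : IsUnitBump φ₁)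
    (hφ₂ : IsUnitBump φ₂) (hr : 0 < r) (hR : (r : ℝ) ^ 2 ≤ R) (hE : 1 ≤ E) (hs : 0 < s)
    (hsr : s ≤ E * r) (hh : ∀ l < r, MemLp (h l) 2) (hh_top : ∀ l < r, MemLp (h l) ⊤)
    (hc : 0 < c) (hω : ∀ l < r, Integrable (ω l))
    (hωc : ∀ l < r, ∫ x, |ω l x| ≤ c)
    (hω_supp : ∀ l < r, Function.support (𝓕 fun x ↦ (ω l x : ℂ)) ⊆ recenter (smallCapI R r l))
    (hp : 2 < p) :
    ∫ x, ‖∑ l ∈ Finset.range r, piece (h l) (ω l) x -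
        lowPart φ₁ φ₂ s (fun y ↦ ∑ l ∈ Finset.range r, piece (h l) (ω l) y) x‖ ^ p ≤
      p / (p - 2) * (4 * (28 * E) * (c * (1 + ∫ x, ‖𝓕⁻ (cutoff φ₁ φ₂ 1) x‖)) ^ 2) *
        (2 * (c * (1 + ∫ x, ‖𝓕⁻ (cutoff φ₁ φ₂ 1) x‖)) * r) ^ (p - 2) *
          ∑ l ∈ Finset.range r, ∫ x, ‖h l x‖ ^ (2 * p) := by
  set κ : ℝ := c * (1 + ∫ x, ‖𝓕⁻ (cutoff φ₁ φ₂ 1) x‖)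
  have hκ : 0 < κ := mul_pos hc (by positivity)
  have hρ : Integrable (𝓕⁻ (cutoff φ₁ φ₂ s)) :=
    integrable_fourierInv_of_hasCompactSupport (contDiff_cutoff hφ₁.contDiff hφ₂.contDiff s)
      (hasCompactSupport_cutoff hφ₁.hasCompactSupport hφ₂.hasCompactSupport hs.ne')
  have hK (l) (hl : l ∈ Finset.range r) :
      ∫ x, ‖highKernel φ₁ φ₂ s (fun x ↦ (ω l x : ℂ)) x‖ ≤ κ := by
    rw [Finset.mem_range] at hl
    refine (integral_norm_highKernel_le (hω l hl).ofReal hρ hs.ne').trans ?_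
    exact mul_le_mul_of_nonneg_right (by simpa using hωc l hl) (by positivity)
  have h_norm (l : ℕ) (x : R3) : ‖((‖h l x‖ ^ 2 : ℝ) : ℂ)‖ ^ p = ‖h l x‖ ^ (2 * p) := by
    rw [Complex.norm_real, norm_pow, norm_norm, Real.rpow_mul (norm_nonneg _), Real.rpow_two]
  simp only [sum_piece_sub_lowPart hρ hh hh_top hω, ← h_norm]
  exact integral_norm_sum_convolution_rpow_le hκ (Nat.cast_pos.2 hr)
    (fun l hl ↦ ((hh l (Finset.mem_range.1 hl)).integrable_norm_pow two_ne_zero).ofReal)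
    (fun l hl ↦ memLp_top_ofReal_norm_sq (hh_top l (Finset.mem_range.1 hl)))
    (fun l hl ↦ integrable_highKernel (hω l (Finset.mem_range.1 hl)).ofReal hρ) hK (by simp)
    (card_filter_fourier_highKernel_ne_zero_le hφ₁ hφ₂ hR hE hs hsr hω hω_supp) hp

end HighPart

theorem high_lemma_II_general {c : ℝ} (hc : 1 ≤ c) {φ₁ : ℝ → ℝ} {φ₂ : ℝ × ℝ → ℝ}
    (hφ₁ : IsUnitBump φ₁) (hφ₂ : IsUnitBump φ₂) :
    ∃ C ≥ (1 : ℝ), ∀ R E s : ℝ, ∀ r : ℕ, 1 < r → (r : ℝ) ^ 2 ≤ R → R ≤ (r : ℝ) ^ 3 → 1 ≤ E →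
      0 < s → s ≤ E * r →
      ∀ h : ℕ → R3 → ℂ, (∀ l < r, MemLp (h l) 2 ∧ MemLp (h l) ⊤) →
      ∀ ω : ℕ → R3 → ℝ, (∀ l < r, Integrable (ω l) ∧ ∫ x, |ω l x| ≤ c ∧
        Function.support (𝓕 fun x ↦ (ω l x : ℂ)) ⊆ recenter (smallCapI R r l)) →
      ∫ x, ‖∑ l ∈ Finset.range r, piece (h l) (ω l) x -
          lowPart φ₁ φ₂ s (fun y ↦ ∑ l ∈ Finset.range r, piece (h l) (ω l) y) x‖ ^
            (2 + 2 / (Real.log r / Real.log (R / r))) ≤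
        C * E * r * R * ∑ l ∈ Finset.range r,
          ∫ x, ‖h l x‖ ^ (4 + 4 / (Real.log r / Real.log (R / r))) := by
  set κ : ℝ := c * (1 + ∫ x, ‖𝓕⁻ (cutoff φ₁ φ₂ 1) x‖)
  have hκ : 1 ≤ κ := one_le_mul_of_one_le_of_one_le hc (le_add_of_nonneg_right (by positivity))
  refine ⟨224 * κ ^ 2 * (2 * κ) ^ 4, ?_, fun R E s r hr hR hR' hE hs hsr h hh ω hω ↦ ?_⟩
  · calc (1 : ℝ) ≤ 224 * 1 ^ 2 * (2 * 1) ^ 4 := by norm_num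
      _ ≤ 224 * κ ^ 2 * (2 * κ) ^ 4 := by gcongr
  have hr_one : (1 : ℝ) < r := by exact_mod_cast hr
  simp only [div_log_div_log]
  set q : ℝ := 2 * Real.logb r (R / r) with hq
  have h_exp : 4 + 4 * Real.logb r (R / r) = 2 * (2 + q) := by ring
  have hp : 2 < 2 + q := by linarith [(logb_div_mem_Icc hr_one hR hR').1]
  rw [h_exp]
  refine (integral_norm_sum_piece_sub_lowPart_rpow_le hφ₁ hφ₂ (by lia) hR hE hs hsr
    (fun l hl ↦ (hh l hl).1) (fun l hl ↦ (hh l hl).2) (by linarith) (fun l hl ↦ (hω l hl).1)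
    (fun l hl ↦ (hω l hl).2.1) (fun l hl ↦ (hω l hl).2.2) hp).trans ?_
  rw [add_sub_cancel_left]
  exact mul_le_mul_of_nonneg_right
    (interpolationConstant_le hr_one hR hR' (by linarith) hκ hq) (by positivity)

/-- **Lemma 2.17 (High lemma II).** For `R^{1/3} ≤ r ≤ min(R^{1/2}, R^β)` and
`β₁ = log r / log(R/r)`, the `(2 + 2/β₁)`-th moment of the high part of the pruned square
function at scale `r` is bounded by `C R^{Cε} r R ∑_γ ‖h_γ‖_{4+4/β₁}^{4+4/β₁}`. -/
theorem high_lemma_II :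
    ∀ ε > (0:ℝ), ∀ c : ℝ, 1 ≤ c →
    ∀ φ₁ : ℝ → ℝ, ∀ φ₂ : ℝ × ℝ → ℝ,
    ContDiff ℝ (⊤ : ℕ∞) φ₁ → (∀ x : ℝ, |x| ≤ 1 → φ₁ x = 1) →
    Function.support φ₁ ⊆ Metric.closedBall 0 2 →
    ContDiff ℝ (⊤ : ℕ∞) φ₂ → (∀ x : ℝ × ℝ, ‖x‖ ≤ 1 → φ₂ x = 1) →
    Function.support φ₂ ⊆ Metric.closedBall 0 2 →
    ∃ C > (0:ℝ), ∀ R β : ℝ, ∀ r r' : ℕ, 2 ≤ R → β ∈ Set.Icc (1/3 : ℝ) 1 →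
    R ^ ((1:ℝ)/3) ≤ (r:ℝ) → (r:ℝ) ≤ min (R ^ ((1:ℝ)/2)) (R ^ β) →
    (r:ℝ) ≤ (r':ℝ) → (r':ℝ) ≤ R ^ β → (r':ℝ) ≤ R ^ ε * r →
    ∀ h : ℕ → SchwartzMap R3 ℂ,
    (∀ l, Function.support (𝓕 ⇑(h l)) ⊆ dilate c (smallCapI R r l)) →
    ∀ ω : ℕ → R3 → ℝ,
    (∀ l, (∀ x, 0 ≤ ω l x) ∧ Integrable (ω l) ∧ (∫ x, ω l x) ≤ c ∧
        Function.support (𝓕 (fun x => ((ω l x : ℝ) : ℂ))) ⊆ recenter (smallCapI R r l)) →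
    (∫ x : R3,
        ‖(∑ l ∈ Finset.range r, piece (⇑(h l)) (ω l) x) -
            lowPart φ₁ φ₂ (r' : ℝ) (fun y => ∑ l ∈ Finset.range r, piece (⇑(h l)) (ω l) y) x‖
          ^ (2 + 2 / (Real.log r / Real.log (R / r)))) ≤
      C * R ^ (C * ε) * (r:ℝ) * R *
        ∑ l ∈ Finset.range r,
          ∫ x : R3, ‖(h l) x‖ ^ (4 + 4 / (Real.log r / Real.log (R / r))) := by
  intro ε hε c hc φ₁ φ₂ hφ₁ hφ₁_one hφ₁_supp hφ₂ hφ₂_one hφ₂_supp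
  obtain ⟨C, hC, h_bound⟩ := high_lemma_II_general hc
    ⟨hφ₁, hφ₁_one, .of_support_subset_isCompact (isCompact_closedBall 0 2) hφ₁_supp⟩
    ⟨hφ₂, hφ₂_one, .of_support_subset_isCompact (isCompact_closedBall 0 2) hφ₂_supp⟩
  refine ⟨C, by linarith, fun R β r r' hR _ hr_lower hr_upper hrr' _ hr' h _ ω hω ↦ ?_⟩
  have hR_cube : R ≤ (r : ℝ) ^ 3 :=
    le_pow_of_rpow_one_div_le three_ne_zero (by linarith) (by exact_mod_cast hr_lower)
  have hR_sq : (r : ℝ) ^ 2 ≤ R := pow_le_of_le_rpow_one_div two_ne_zero (by linarith)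
    r.cast_nonneg (by exact_mod_cast hr_upper.trans (min_le_left _ _))
  have hr : (1 : ℝ) < r := (Real.one_lt_rpow (by linarith) (by norm_num)).trans_le hr_lower
  have h_exp : ε ≤ C * ε := le_mul_of_one_le_left hε.le hC
  calc _ ≤ C * R ^ ε * r * R * _ :=
        h_bound R (R ^ ε) r' r (by exact_mod_cast hr) hR_sq hR_cube
          (Real.one_le_rpow (by linarith) hε.le) (by linarith) hr' (fun l ↦ h l)
          (fun l _ ↦ ⟨(h l).memLp 2 volume, (h l).memLp ⊤ volume⟩) ω fun l _ ↦
            ⟨(hω l).2.1, by simpa only [abs_of_nonneg ((hω l).1 _)] using (hω l).2.2.1,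
              (hω l).2.2.2⟩
    _ ≤ _ := by gcongr; linarith
end
end

section
/- Fix β ∈ [1/3,1] and set p_c = 6 + 2/β. Suppose that for every ε > 0 there is a constant C_ε > 0 such that for all R ≥ 2 and all Schwartz functions f : ℝ³ → ℂ with Fourier transform supported in M³(R^β,R) one has ∫_{ℝ³} |f|^{p_c} ≤ C_ε R^ε R^{2β+1} ∑_γ ‖f_γ‖_{L^{p_c}(ℝ³)}^{p_c}. Then for every p ≥ 2 and every ε > 0 there is a constant C'_ε > 0 such that for all R ≥ 2 and all such f one has ∫_{ℝ³} |f|^p ≤ C'_ε R^ε (R^{β(p/2 − 1)} + R^{β(p−4) − 1}) ∑_γ ‖f_γ‖_{L^p(ℝ³)}^p. -/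
open MeasureTheory Real Complex Set Finset
open scoped FourierTransform

noncomputable section

/-- The anisotropic small cap neighborhood `M³(R^β, R)` of the moment curve. -/
def M3 (R β : ℝ) : Set R3 :=
  {ξ | ξ 0 ∈ Set.Icc (0:ℝ) 1 ∧ |ξ 1 - (ξ 0)^2| ≤ R ^ (-2*β) ∧
       |ξ 2 - 3*(ξ 0)*(ξ 1) + 2*(ξ 0)^3| ≤ R⁻¹}

/-- The `l`-th small cap `γ_l` partitioning `M³(R^β, R)`. -/
def smallCap (R β : ℝ) (l : ℕ) : Set R3 :=
  {ξ | (l : ℝ) * R ^ (-β) ≤ ξ 0 ∧ ξ 0 < ((l : ℝ) + 1) * R ^ (-β) ∧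
       |ξ 1 - (ξ 0)^2| ≤ R ^ (-2*β) ∧ |ξ 2 - 3*(ξ 0)*(ξ 1) + 2*(ξ 0)^3| ≤ R⁻¹}

/-- Fourier projection of `f` onto a frequency set `A`. -/
def fproj (A : Set R3) (f : R3 → ℂ) : R3 → ℂ :=
  𝓕⁻ (A.indicator (𝓕 f))

/-!
If smooth cutoffs `K l` have `𝓕 (K l) = 1` on the `l`-th small cap, then `f = ∑ l, K l ⋆ f_l`, where
`f_l` is the projection of `f` to that cap. It therefore suffices to bound the linear operator
`(g l) ↦ ∑ l, K l ⋆ g l` from `ℓ^p L^p` to `L^p`, which is open to real interpolation. At the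
critical exponent the bound is the hypothesis: the Fourier support of `K l ⋆ g l` is slightly larger
than the cap, but after sorting the caps into boundedly many residue classes, an affine rescaling of
the moment curve moves these supports into distinct small caps. For `p` below the critical exponent
one interpolates with orthogonality at `p = 2`, and above it with the trivial bound by the number of
caps, about `R ^ β`, at `p = ∞`.
-/

open scoped ENNReal NNReal SchwartzMap Convolution

section Interpolation

variable {X Y E F : Type*} [MeasurableSpace X] [NormedAddCommGroup E] [NormedAddCommGroup F]
  {μ : Measure X} {T : (X → E) → Y → F} {g : X → E}

/-- Bounded strongly measurable functions, the common domain on which the operators below are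
compared at different exponents. The bound is pointwise, not almost everywhere. -/
structure BoundedMeasurable (g : X → E) : Prop where
  stronglyMeasurable : StronglyMeasurable g
  bounded : ∃ M : ℝ, ∀ x, ‖g x‖ ≤ M

/-- Pointwise subadditivity on bounded measurable functions. -/
def IsSubadditive (T : (X → E) → Y → F) : Prop :=
  ∀ g g', BoundedMeasurable g → BoundedMeasurable g' →
    ∀ y, ‖T (g + g') y‖ ≤ ‖T g y‖ + ‖T g' y‖

lemma BoundedMeasurable.indicator (hg : BoundedMeasurable g) {S : Set X} (hS : MeasurableSet S) :
    BoundedMeasurable (S.indicator g) := by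
  obtain ⟨M, hM⟩ := hg.bounded
  exact ⟨hg.stronglyMeasurable.indicator hS, M,
    fun x => (norm_indicator_le_norm_self g x).trans (hM x)⟩

lemma BoundedMeasurable.sub {g' : X → E} (hg : BoundedMeasurable g) (hg' : BoundedMeasurable g') :
    BoundedMeasurable (g - g') := by
  obtain ⟨M, hM⟩ := hg.bounded
  obtain ⟨M', hM'⟩ := hg'.bounded
  exact ⟨hg.stronglyMeasurable.sub hg'.stronglyMeasurable, M + M',
    fun x => (norm_sub_le _ _).trans (add_le_add (hM x) (hM' x))⟩

lemma IsSubadditive.setOf_lt_norm_subset (hT : IsSubadditive T) (hg : BoundedMeasurable g)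
    {S : Set X} (hS : MeasurableSet S) (t : ℝ) :
    {y | t < ‖T g y‖} ⊆
      {y | t / 2 < ‖T (S.indicator g) y‖} ∪ {y | t / 2 < ‖T (Sᶜ.indicator g) y‖} := by
  intro y (hy : t < ‖T g y‖)
  have hsub := hT _ _ (hg.indicator hS) (hg.indicator hS.compl) y
  rw [Set.indicator_self_add_compl] at hsub
  by_contra! hcon
  simp only [Set.mem_union, Set.mem_ofPred_eq, not_or, not_lt] at hcon
  linarith [hcon.1, hcon.2]

variable [MeasurableSpace Y] {ν : Measure Y}

/-- Strong type `(q, q)` on bounded measurable functions, with `B` the `q`-th power of the operator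
norm. -/
def IsStrongType (T : (X → E) → Y → F) (q : ℝ) (B : ℝ≥0∞) (μ : Measure X) (ν : Measure Y) : Prop :=
  ∀ g, BoundedMeasurable g → ∫⁻ y, ‖T g y‖ₑ ^ q ∂ν ≤ B * ∫⁻ x, ‖g x‖ₑ ^ q ∂μ

lemma IsStrongType.mono {q : ℝ} {B B' : ℝ≥0∞} (hT : IsStrongType T q B μ ν) (hB : B ≤ B') :
    IsStrongType T q B' μ ν := fun g hg => (hT g hg).trans (mul_left_mono hB)

lemma enorm_rpow_eq_ofReal (z : E) {q : ℝ} (hq : 0 ≤ q) : ‖z‖ₑ ^ q = ENNReal.ofReal (‖z‖ ^ q) := by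
  rw [← ofReal_norm, ENNReal.ofReal_rpow_of_nonneg (norm_nonneg _) hq]

lemma lintegral_enorm_indicator_rpow {S : Set X} (hS : MeasurableSet S) {q : ℝ} (hq : 0 < q) :
    ∫⁻ x, ‖S.indicator g x‖ₑ ^ q ∂μ = ∫⁻ x in S, ‖g x‖ₑ ^ q ∂μ := by
  rw [← lintegral_indicator hS]
  congr with x
  by_cases hx : x ∈ S <;> simp [hx, hq]

lemma lintegral_Ioo_rpow {a r : ℝ} (ha : 0 ≤ a) (hr : 0 < r) :
    ∫⁻ t in Set.Ioo 0 a, ENNReal.ofReal (t ^ (r - 1)) = ENNReal.ofReal (a ^ r / r) := by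
  have hint : IntegrableOn (fun t : ℝ => t ^ (r - 1)) (Set.Ioo 0 a) :=
    (intervalIntegrable_iff_integrableOn_Ioo_of_le ha).1
      (intervalIntegral.intervalIntegrable_rpow' (by linarith))
  rw [← ofReal_integral_eq_lintegral_ofReal hint, ← integral_Ioc_eq_integral_Ioo,
    ← intervalIntegral.integral_of_le ha, integral_rpow (Or.inl (by linarith)),
    sub_add_cancel, Real.zero_rpow hr.ne', sub_zero]
  filter_upwards [self_mem_ae_restrict measurableSet_Ioo] with t ht
  exact Real.rpow_nonneg ht.1.le _

lemma lintegral_Ici_rpow_neg {a r : ℝ} (ha : 0 < a) (hr : 0 < r) :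
    ∫⁻ t in Set.Ici a, ENNReal.ofReal (t ^ (-r - 1)) = ENNReal.ofReal (a ^ (-r) / r) := by
  rw [setLIntegral_congr Ioi_ae_eq_Ici.symm, ← ofReal_integral_eq_lintegral_ofReal
    (integrableOn_Ioi_rpow_of_lt (by linarith) ha), integral_Ioi_rpow_of_lt (by linarith) ha,
    sub_add_cancel, neg_div_neg_eq]
  filter_upwards [self_mem_ae_restrict measurableSet_Ioi] with t ht
  exact Real.rpow_nonneg (ha.trans ht).le _

lemma lintegral_mul_setLIntegral_swap [SFinite μ] {S : ℝ → Set X}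
    (hS : MeasurableSet {z : ℝ × X | z.2 ∈ S z.1}) {w : ℝ → ℝ≥0∞} {h : X → ℝ≥0∞}
    (hw : Measurable w) (hh : Measurable h) :
    ∫⁻ t in Set.Ioi (0 : ℝ), w t * ∫⁻ x in S t, h x ∂μ =
      ∫⁻ x, h x * (∫⁻ t in {t : ℝ | x ∈ S t} ∩ Set.Ioi 0, w t) ∂μ := by
  set k : ℝ × X → ℝ≥0∞ := {z : ℝ × X | z.2 ∈ S z.1}.indicator fun z => w z.1 * h z.2
  have hk : Measurable k := ((hw.comp measurable_fst).mul (hh.comp measurable_snd)).indicator hS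
  calc ∫⁻ t in Set.Ioi (0 : ℝ), w t * ∫⁻ x in S t, h x ∂μ
      = ∫⁻ t in Set.Ioi (0 : ℝ), ∫⁻ x, k (t, x) ∂μ := by
        refine lintegral_congr fun t => ?_
        have hSt : MeasurableSet (S t) := measurable_prodMk_left hS
        rw [← lintegral_const_mul _ hh, ← lintegral_indicator hSt]
        rfl
    _ = ∫⁻ x, (∫⁻ t in Set.Ioi (0 : ℝ), k (t, x)) ∂μ := lintegral_lintegral_swap hk.aemeasurable
    _ = _ := by
        refine lintegral_congr fun x => ?_
        have hSx : MeasurableSet {t | x ∈ S t} := measurable_prodMk_right hS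
        rw [← Measure.restrict_restrict hSx, ← lintegral_const_mul _ hw, ← lintegral_indicator hSx]
        simp only [mul_comm (h x)]
        rfl

lemma measurable_mul_setLIntegral [SFinite μ] {S : ℝ → Set X}
    (hS : MeasurableSet {z : ℝ × X | z.2 ∈ S z.1}) {w : ℝ → ℝ≥0∞} {h : X → ℝ≥0∞}
    (hw : Measurable w) (hh : Measurable h) : Measurable fun t => w t * ∫⁻ x in S t, h x ∂μ := by
  have hint := ((hh.comp measurable_snd).indicator hS).lintegral_prod_right' (ν := μ)
  refine hw.mul ?_
  convert hint using 2 with t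
  exact (lintegral_indicator (measurable_prodMk_left hS) h).symm

lemma measurableSet_mul_lt_norm (hg : StronglyMeasurable g) (c : ℝ) :
    MeasurableSet {z : ℝ × X | c * z.1 < ‖g z.2‖} :=
  measurableSet_lt (by fun_prop) (hg.norm.measurable.comp measurable_snd)

lemma lintegral_rpow_mul_setLIntegral_lt [SFinite μ] (hg : StronglyMeasurable g) {p q c : ℝ}
    (hq : 0 < q) (hqp : q < p) (hc : 0 < c) :
    ∫⁻ t in Set.Ioi (0 : ℝ), ENNReal.ofReal (t ^ (p - q - 1)) *
        ∫⁻ x in {x | c * t < ‖g x‖}, ‖g x‖ₑ ^ q ∂μ =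
      ENNReal.ofReal (c ^ (q - p) / (p - q)) * ∫⁻ x, ‖g x‖ₑ ^ p ∂μ := by
  rw [← lintegral_const_mul' _ _ ENNReal.ofReal_ne_top]
  refine (lintegral_mul_setLIntegral_swap (measurableSet_mul_lt_norm hg c) (by fun_prop)
    (hg.enorm.pow_const q)).trans (lintegral_congr fun x => ?_)
  have hset : {t | x ∈ {x | c * t < ‖g x‖}} ∩ Set.Ioi 0 =
      Set.Ioo 0 (‖g x‖ / c) := by
    ext t
    simp [lt_div_iff₀' hc, and_comm]
  have hpq : 0 < p - q := sub_pos.2 hqp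
  rw [hset, lintegral_Ioo_rpow (by positivity) hpq, enorm_rpow_eq_ofReal _ hq.le,
    enorm_rpow_eq_ofReal _ (hq.trans hqp).le, ← ENNReal.ofReal_mul (by positivity),
    ← ENNReal.ofReal_mul (by positivity), Real.div_rpow (norm_nonneg _) hc.le,
    ← neg_sub p q, Real.rpow_neg hc.le, ← add_sub_cancel q p,
    Real.rpow_add_of_nonneg (norm_nonneg _) hq.le hpq.le, add_sub_cancel]
  congr 1
  field_simp

lemma lintegral_rpow_mul_setLIntegral_le [SFinite μ] (hg : StronglyMeasurable g) {p q c : ℝ}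
    (hp : 0 < p) (hpq : p < q) (hc : 0 < c) :
    ∫⁻ t in Set.Ioi (0 : ℝ), ENNReal.ofReal (t ^ (p - q - 1)) *
        ∫⁻ x in {x | c * t < ‖g x‖}ᶜ, ‖g x‖ₑ ^ q ∂μ =
      ENNReal.ofReal (c ^ (q - p) / (q - p)) * ∫⁻ x, ‖g x‖ₑ ^ p ∂μ := by
  rw [← lintegral_const_mul' _ _ ENNReal.ofReal_ne_top]
  refine (lintegral_mul_setLIntegral_swap (measurableSet_mul_lt_norm hg c).compl (by fun_prop)
    (hg.enorm.pow_const q)).trans (lintegral_congr fun x => ?_)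
  rcases (norm_nonneg (g x)).eq_or_lt with hx | hx
  · simp [norm_eq_zero.1 hx.symm, hp, hp.trans hpq]
  have hset : {t | x ∈ {x | c * t < ‖g x‖}ᶜ} ∩ Set.Ioi 0 =
      Set.Ici (‖g x‖ / c) := by
    ext t
    simp only [Set.mem_inter_iff, Set.mem_ofPred_eq, Set.mem_compl_iff, not_lt, Set.mem_Ioi,
      Set.mem_Ici, div_le_iff₀' hc, and_iff_left_iff_imp]
    exact fun ht => pos_of_mul_pos_right (hx.trans_le ht) hc.le
  have hqp : 0 < q - p := sub_pos.2 hpq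
  rw [hset, ← neg_sub q p, lintegral_Ici_rpow_neg (by positivity) hqp,
    enorm_rpow_eq_ofReal _ (hp.trans hpq).le, enorm_rpow_eq_ofReal _ hp.le,
    ← ENNReal.ofReal_mul (by positivity), ← ENNReal.ofReal_mul (by positivity),
    Real.rpow_neg (by positivity), Real.div_rpow (norm_nonneg _) hc.le]
  nth_rw 1 [← add_sub_cancel p q]
  rw [Real.rpow_add hx]
  congr 1
  field_simp

lemma IsStrongType.measure_indicator_mul_rpow_le {q p t : ℝ} {B : ℝ≥0∞}
    (hT : IsStrongType T q B μ ν) (hmeas : ∀ g, BoundedMeasurable g → AEStronglyMeasurable (T g) ν)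
    (hq : 0 < q) (ht : 0 < t) (hg : BoundedMeasurable g) {S : Set X} (hS : MeasurableSet S) :
    ν {y | t / 2 < ‖T (S.indicator g) y‖} * ENNReal.ofReal (t ^ (p - 1)) ≤
      ENNReal.ofReal (2 ^ q) * B *
        (ENNReal.ofReal (t ^ (p - q - 1)) * ∫⁻ x in S, ‖g x‖ₑ ^ q ∂μ) := by
  have hle : ENNReal.ofReal ((t / 2) ^ q) * ν {y | t / 2 < ‖T (S.indicator g) y‖} ≤
      B * ∫⁻ x in S, ‖g x‖ₑ ^ q ∂μ := by
    rw [← lintegral_enorm_indicator_rpow hS hq]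
    refine le_trans ?_ ((mul_meas_ge_le_lintegral₀ ((hmeas _ (hg.indicator hS)).enorm.pow_const q)
      (ENNReal.ofReal ((t / 2) ^ q))).trans (hT _ (hg.indicator hS)))
    gcongr with y
    intro (hy : t / 2 < _)
    rw [enorm_rpow_eq_ofReal _ hq.le]
    gcongr
  have hpow : t ^ (p - 1) = 2 ^ q * t ^ (p - q - 1) * (t / 2) ^ q := by
    rw [Real.div_rpow ht.le two_pos.le, show p - 1 = p - q - 1 + q by ring, Real.rpow_add ht]
    field_simp
  rw [hpow, ENNReal.ofReal_mul (by positivity), ENNReal.ofReal_mul (by positivity)]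
  calc _ = ENNReal.ofReal (2 ^ q) * ENNReal.ofReal (t ^ (p - q - 1)) *
        (ENNReal.ofReal ((t / 2) ^ q) * ν {y | t / 2 < ‖T (S.indicator g) y‖}) := by ring
    _ ≤ ENNReal.ofReal (2 ^ q) * ENNReal.ofReal (t ^ (p - q - 1)) *
        (B * ∫⁻ x in S, ‖g x‖ₑ ^ q ∂μ) := by gcongr
    _ = _ := by ring

lemma lintegral_enorm_rpow_eq_layercake {u : Y → F} (hu : AEStronglyMeasurable u ν) {p : ℝ}
    (hp : 0 < p) :
    ∫⁻ y, ‖u y‖ₑ ^ p ∂ν = ENNReal.ofReal p *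
      ∫⁻ t in Set.Ioi (0 : ℝ), ν {y | t < ‖u y‖} * ENNReal.ofReal (t ^ (p - 1)) := by
  simp_rw [enorm_rpow_eq_ofReal _ hp.le]
  exact lintegral_rpow_eq_lintegral_meas_lt_mul ν (.of_forall fun _ => norm_nonneg _)
    hu.norm.aemeasurable hp

/-- The free height `c` of the truncation `‖g‖ > c t` allows optimizing the constant. -/
theorem IsStrongType.interpolate [SFinite μ] (hsub : IsSubadditive T)
    (hmeas : ∀ g, BoundedMeasurable g → AEStronglyMeasurable (T g) ν) {q₀ q₁ p c : ℝ}
    {B₀ B₁ : ℝ≥0∞} (hq₀ : 0 < q₀) (hq₀p : q₀ < p) (hpq₁ : p < q₁) (hc : 0 < c)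
    (h₀ : IsStrongType T q₀ B₀ μ ν) (h₁ : IsStrongType T q₁ B₁ μ ν) :
    IsStrongType T p (ENNReal.ofReal p *
      (ENNReal.ofReal (2 ^ q₀) * B₀ * ENNReal.ofReal (c ^ (q₀ - p) / (p - q₀)) +
        ENNReal.ofReal (2 ^ q₁) * B₁ * ENNReal.ofReal (c ^ (q₁ - p) / (q₁ - p)))) μ ν := by
  intro g hg
  have hgm := hg.stronglyMeasurable
  have hp : 0 < p := hq₀.trans hq₀p
  have hS := measurableSet_mul_lt_norm hgm c
  have hlevel : ∀ t, MeasurableSet {x | c * t < ‖g x‖} := fun t => measurable_prodMk_left hS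
  set I₀ : ℝ → ℝ≥0∞ := fun t =>
    ENNReal.ofReal (t ^ (p - q₀ - 1)) * ∫⁻ x in {x | c * t < ‖g x‖}, ‖g x‖ₑ ^ q₀ ∂μ
  set I₁ : ℝ → ℝ≥0∞ := fun t =>
    ENNReal.ofReal (t ^ (p - q₁ - 1)) * ∫⁻ x in {x | c * t < ‖g x‖}ᶜ, ‖g x‖ₑ ^ q₁ ∂μ
  have hI₀ : Measurable I₀ :=
    measurable_mul_setLIntegral hS (by fun_prop) (hgm.enorm.pow_const _)
  have hI₁ : Measurable I₁ :=
    measurable_mul_setLIntegral hS.compl (by fun_prop) (hgm.enorm.pow_const _)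
  calc ∫⁻ y, ‖T g y‖ₑ ^ p ∂ν
      = ENNReal.ofReal p * ∫⁻ t in Set.Ioi (0 : ℝ),
          ν {y | t < ‖T g y‖} * ENNReal.ofReal (t ^ (p - 1)) :=
        lintegral_enorm_rpow_eq_layercake (hmeas g hg) hp
    _ ≤ ENNReal.ofReal p * ∫⁻ t in Set.Ioi (0 : ℝ),
          (ENNReal.ofReal (2 ^ q₀) * B₀ * I₀ t + ENNReal.ofReal (2 ^ q₁) * B₁ * I₁ t) := by
        refine mul_right_mono (setLIntegral_mono' measurableSet_Ioi fun t ht => ?_)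
        refine le_trans ?_ (add_le_add
          (h₀.measure_indicator_mul_rpow_le hmeas hq₀ ht hg (hlevel t))
          (h₁.measure_indicator_mul_rpow_le hmeas (hp.trans hpq₁) ht hg (hlevel t).compl))
        rw [← add_mul]
        gcongr
        exact (measure_mono (hsub.setOf_lt_norm_subset hg (hlevel t) t)).trans
          (measure_union_le _ _)
    _ = _ := by
        rw [lintegral_add_left (hI₀.const_mul _), lintegral_const_mul _ hI₀,
          lintegral_const_mul _ hI₁, lintegral_rpow_mul_setLIntegral_lt hgm hq₀ hq₀p hc,
          lintegral_rpow_mul_setLIntegral_le hgm hp hpq₁ hc]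
        ring

theorem IsStrongType.interpolate_top [SFinite μ] (hsub : IsSubadditive T)
    (hmeas : ∀ g, BoundedMeasurable g → AEStronglyMeasurable (T g) ν) {q p A : ℝ} {B : ℝ≥0∞}
    (hq : 0 < q) (hqp : q < p) (hA : 0 < A) (hB : IsStrongType T q B μ ν)
    (htop : ∀ g, ∀ M ≥ 0, (∀ x, ‖g x‖ ≤ M) → ∀ y, ‖T g y‖ ≤ A * M) :
    IsStrongType T p (ENNReal.ofReal p *
      (ENNReal.ofReal (2 ^ q) * B * ENNReal.ofReal ((2 * A)⁻¹ ^ (q - p) / (p - q)))) μ ν := by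
  intro g hg
  have hgm := hg.stronglyMeasurable
  have hp : 0 < p := hq.trans hqp
  set c : ℝ := (2 * A)⁻¹ with hc_def
  have hc : 0 < c := by positivity
  have hS := measurableSet_mul_lt_norm hgm c
  have hlevel : ∀ t, MeasurableSet {x | c * t < ‖g x‖} := fun t => measurable_prodMk_left hS
  have hlow : ∀ t, 0 < t → ∀ y, ‖T ({x | c * t < ‖g x‖}ᶜ.indicator g) y‖ ≤ t / 2 := by
    refine fun t ht y => (htop _ (c * t) (mul_pos hc ht).le (fun x => ?_) y).trans_eq
      (by rw [hc_def]; field_simp)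
    rw [Set.indicator_apply]
    split_ifs with hx
    · exact not_lt.1 hx
    · simpa using (mul_pos hc ht).le
  calc ∫⁻ y, ‖T g y‖ₑ ^ p ∂ν
      = ENNReal.ofReal p * ∫⁻ t in Set.Ioi (0 : ℝ),
          ν {y | t < ‖T g y‖} * ENNReal.ofReal (t ^ (p - 1)) :=
        lintegral_enorm_rpow_eq_layercake (hmeas g hg) hp
    _ ≤ ENNReal.ofReal p * ∫⁻ t in Set.Ioi (0 : ℝ), ENNReal.ofReal (2 ^ q) * B *
          (ENNReal.ofReal (t ^ (p - q - 1)) * ∫⁻ x in {x | c * t < ‖g x‖}, ‖g x‖ₑ ^ q ∂μ) := by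
        refine mul_right_mono (setLIntegral_mono' measurableSet_Ioi fun t ht => ?_)
        refine le_trans ?_ (hB.measure_indicator_mul_rpow_le hmeas hq ht hg (hlevel t))
        exact mul_left_mono (measure_mono ((hsub.setOf_lt_norm_subset hg (hlevel t) t).trans
          (Set.union_subset subset_rfl fun y hy => absurd (hlow t ht y) (not_le.2 hy))))
    _ = _ := by
        rw [lintegral_const_mul _ (measurable_mul_setLIntegral hS (by fun_prop)
          (hgm.enorm.pow_const _)), lintegral_rpow_mul_setLIntegral_lt hgm hq hqp hc]
        ring

end Interpolation

section Density

variable {X Y E F : Type*} [MeasurableSpace X] [MeasurableSpace Y] [NormedAddCommGroup E]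
  [NormedAddCommGroup F] {μ : Measure X} {ν : Measure Y} {T : (X → E) → Y → F}

lemma lintegral_enorm_rpow_le_mul_iff {u : Y → F} {g : X → E} {q : ℝ} {B : ℝ≥0∞} (hq : 0 < q) :
    ∫⁻ y, ‖u y‖ₑ ^ q ∂ν ≤ B * ∫⁻ x, ‖g x‖ₑ ^ q ∂μ ↔
      eLpNorm' u q ν ≤ B ^ (1 / q) * eLpNorm' g q μ := by
  rw [eLpNorm', eLpNorm', ← ENNReal.mul_rpow_of_nonneg _ _ (by positivity),
    ENNReal.rpow_le_rpow_iff (by positivity)]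

lemma IsStrongType.eLpNorm'_le_add_of_eLpNorm'_sub_le (hsub : IsSubadditive T)
    (hmeas : ∀ g, BoundedMeasurable g → AEStronglyMeasurable (T g) ν) {q : ℝ} {A b δ : ℝ≥0∞}
    (hq : 1 ≤ q) (hT : IsStrongType T q A μ ν) {g s : X → E} (hg : BoundedMeasurable g)
    (hs : BoundedMeasurable s) (hgs : eLpNorm' (g - s) q μ ≤ δ)
    (hTs : eLpNorm' (T s) q ν ≤ b * eLpNorm' s q μ) :
    eLpNorm' (T g) q ν ≤ b * (eLpNorm' g q μ + δ) + A ^ (1 / q) * δ := by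
  have hq₀ : 0 < q := by linarith
  have hdiff := hg.sub hs
  have hs_le : eLpNorm' s q μ ≤ eLpNorm' g q μ + δ := calc
    eLpNorm' s q μ = eLpNorm' (g - (g - s)) q μ := by rw [sub_sub_cancel]
    _ ≤ eLpNorm' g q μ + eLpNorm' (g - s) q μ := by
      rw [sub_eq_add_neg, ← eLpNorm'_neg (g - s)]
      exact eLpNorm'_add_le hg.stronglyMeasurable.aestronglyMeasurable
        hdiff.stronglyMeasurable.aestronglyMeasurable.neg hq
    _ ≤ _ := by gcongr
  calc eLpNorm' (T g) q ν
      ≤ eLpNorm' ((fun y => ‖T s y‖) + fun y => ‖T (g - s) y‖) q ν := by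
        refine eLpNorm'_mono_ae hq₀.le (.of_forall fun y => ?_)
        have hle := hsub s (g - s) hs hdiff y
        rw [add_sub_cancel] at hle
        exact hle.trans (le_abs_self _)
    _ ≤ eLpNorm' (T s) q ν + eLpNorm' (T (g - s)) q ν := by
        rw [← eLpNorm'_norm (f := T s), ← eLpNorm'_norm (f := T (g - s))]
        exact eLpNorm'_add_le (hmeas s hs).norm (hmeas _ hdiff).norm hq
    _ ≤ b * eLpNorm' s q μ + A ^ (1 / q) * eLpNorm' (g - s) q μ :=
        add_le_add hTs ((lintegral_enorm_rpow_le_mul_iff hq₀).1 (hT _ hdiff))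
    _ ≤ _ := by gcongr

theorem IsStrongType.of_dense {P : (X → E) → Prop} (hsub : IsSubadditive T)
    (hmeas : ∀ g, BoundedMeasurable g → AEStronglyMeasurable (T g) ν) {q : ℝ} {A B : ℝ≥0∞}
    (hq : 1 ≤ q) (hA : A ≠ ⊤) (hB₀ : B ≠ 0) (hB : B ≠ ⊤) (hT : IsStrongType T q A μ ν)
    (hP : ∀ s, P s → BoundedMeasurable s)
    (hdense : ∀ g, BoundedMeasurable g → eLpNorm' g q μ ≠ ⊤ → ∀ δ ≠ 0, ∃ s, P s ∧
      eLpNorm' (g - s) q μ ≤ δ)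
    (hTP : ∀ s, P s → ∫⁻ y, ‖T s y‖ₑ ^ q ∂ν ≤ B * ∫⁻ x, ‖s x‖ₑ ^ q ∂μ) :
    IsStrongType T q B μ ν := by
  intro g hg
  have hq₀ : 0 < q := by linarith
  rw [lintegral_enorm_rpow_le_mul_iff hq₀]
  set a := A ^ (1 / q)
  set b := B ^ (1 / q)
  have ha : a ≠ ⊤ := ENNReal.rpow_ne_top_of_nonneg (by positivity) hA
  have hb : b ≠ ⊤ := ENNReal.rpow_ne_top_of_nonneg (by positivity) hB
  by_cases htop : eLpNorm' g q μ = ⊤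
  · simp [b, htop, ENNReal.mul_top, hB₀, hB]
  have happrox : ∀ δ ≠ 0, eLpNorm' (T g) q ν ≤ b * (eLpNorm' g q μ + δ) + a * δ := by
    intro δ hδ
    obtain ⟨s, hs, hgs⟩ := hdense g hg htop δ hδ
    exact hT.eLpNorm'_le_add_of_eLpNorm'_sub_le hsub hmeas hq hg (hP s hs) hgs
      ((lintegral_enorm_rpow_le_mul_iff hq₀).1 (hTP s hs))
  have hlim : Filter.Tendsto (fun n : ℕ => b * (eLpNorm' g q μ + (n : ℝ≥0∞)⁻¹) + a * (n : ℝ≥0∞)⁻¹)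
      Filter.atTop (nhds (b * (eLpNorm' g q μ + 0) + a * 0)) := by
    have h₀ := ENNReal.tendsto_inv_nat_nhds_zero
    exact (ENNReal.Tendsto.const_mul (h₀.const_add _) (.inr hb)).add
      (ENNReal.Tendsto.const_mul h₀ (.inr ha))
  simpa using ge_of_tendsto' hlim fun n => happrox _ (by simp)

end Density

section Convolution

open ContinuousLinearMap (mul)

lemma lintegral_mul_rpow_le_rpow_mul_lintegral {X : Type*} [MeasurableSpace X] {μ : Measure X}
    {f g : X → ℝ≥0∞} (hf : AEMeasurable f μ) (hg : AEMeasurable g μ) {q : ℝ} (hq : 1 ≤ q) :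
    (∫⁻ x, f x * g x ∂μ) ^ q ≤ (∫⁻ x, f x ∂μ) ^ (q - 1) * ∫⁻ x, f x * g x ^ q ∂μ := by
  have hq₀ : 0 < q := by linarith
  have hinv : q⁻¹ ≤ 1 := inv_le_one_of_one_le₀ hq
  have hfactor : ∀ x, f x * g x = f x ^ (1 - q⁻¹) * (f x * g x ^ q) ^ q⁻¹ := fun x => by
    rw [ENNReal.mul_rpow_of_nonneg _ _ (inv_nonneg.2 hq₀.le), ← mul_assoc,
      ← ENNReal.rpow_add_of_nonneg _ _ (sub_nonneg.2 hinv) (inv_nonneg.2 hq₀.le),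
      sub_add_cancel, ENNReal.rpow_one, ENNReal.rpow_rpow_inv hq₀.ne']
  have hholder := ENNReal.lintegral_mul_norm_pow_le hf (hf.mul (hg.pow_const q))
    (sub_nonneg.2 hinv) (inv_nonneg.2 hq₀.le) (sub_add_cancel _ _)
  calc (∫⁻ x, f x * g x ∂μ) ^ q
      ≤ ((∫⁻ x, f x ∂μ) ^ (1 - q⁻¹) * (∫⁻ x, f x * g x ^ q ∂μ) ^ q⁻¹) ^ q := by
        simp_rw [hfactor]
        gcongr
        simpa only [hfactor, Pi.mul_apply] using hholder
    _ = _ := by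
        rw [ENNReal.mul_rpow_of_nonneg _ _ hq₀.le, ENNReal.rpow_inv_rpow hq₀.ne',
          ← ENNReal.rpow_mul, sub_mul, one_mul, inv_mul_cancel₀ hq₀.ne']

lemma enorm_convolution_le_lconvolution {G : Type*} [AddCommGroup G] [MeasurableSpace G]
    {μ : Measure G} (u v : G → ℂ) (x : G) :
    ‖(u ⋆[mul ℂ ℂ, μ] v) x‖ₑ ≤ ((fun y => ‖u y‖ₑ) ⋆ₗ[μ] fun y => ‖v y‖ₑ) x := by
  refine (enorm_integral_le_lintegral_enorm _).trans_eq (lintegral_congr fun y => ?_)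
  rw [ContinuousLinearMap.mul_apply', enorm_mul, sub_eq_neg_add]

variable {G : Type*} [AddCommGroup G] [MeasurableSpace G] [MeasurableAdd₂ G] [MeasurableNeg G]
  {μ : Measure G} [SFinite μ] [μ.IsAddLeftInvariant]

lemma lintegral_lconvolution_rpow_le {f g : G → ℝ≥0∞} (hf : Measurable f) (hg : Measurable g)
    {q : ℝ} (hq : 1 ≤ q) :
    ∫⁻ x, (f ⋆ₗ[μ] g) x ^ q ∂μ ≤ (∫⁻ x, f x ∂μ) ^ q * ∫⁻ x, g x ^ q ∂μ := by
  have hshift : Measurable fun z : G × G => f z.2 * g (-z.2 + z.1) ^ q := by fun_prop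
  calc ∫⁻ x, (f ⋆ₗ[μ] g) x ^ q ∂μ
      ≤ ∫⁻ x, (∫⁻ y, f y ∂μ) ^ (q - 1) * ∫⁻ y, f y * g (-y + x) ^ q ∂μ ∂μ :=
        lintegral_mono fun x =>
          lintegral_mul_rpow_le_rpow_mul_lintegral (by fun_prop) (by fun_prop) hq
    _ = (∫⁻ y, f y ∂μ) ^ (q - 1) * ∫⁻ y, (∫⁻ x, f y * g (-y + x) ^ q ∂μ) ∂μ := by
        rw [lintegral_const_mul _ hshift.lintegral_prod_right',
          lintegral_lintegral_swap hshift.aemeasurable]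
    _ = (∫⁻ y, f y ∂μ) ^ (q - 1) * ((∫⁻ y, f y ∂μ) * ∫⁻ x, g x ^ q ∂μ) := by
        rw [← lintegral_mul_const _ hf]
        congr with y
        rw [lintegral_const_mul _ (by fun_prop),
          lintegral_add_left_eq_self (fun x => g x ^ q) (-y)]
    _ = _ := by
        rw [← mul_assoc]
        nth_rw 2 [← ENNReal.rpow_one (∫⁻ y, f y ∂μ)]
        rw [← ENNReal.rpow_add_of_nonneg _ _ (by linarith) zero_le_one, sub_add_cancel]

theorem lintegral_enorm_convolution_rpow_le {u v : G → ℂ} (hu : Measurable u) (hv : Measurable v)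
    {q : ℝ} (hq : 1 ≤ q) :
    ∫⁻ x, ‖(u ⋆[mul ℂ ℂ, μ] v) x‖ₑ ^ q ∂μ ≤
      (∫⁻ x, ‖u x‖ₑ ∂μ) ^ q * ∫⁻ x, ‖v x‖ₑ ^ q ∂μ := by
  refine (lintegral_mono fun x => ?_).trans (lintegral_lconvolution_rpow_le hu.enorm hv.enorm hq)
  gcongr
  exact enorm_convolution_le_lconvolution u v x

end Convolution

section FourierConvolution

open ContinuousLinearMap (mul)

variable {V : Type*} [NormedAddCommGroup V] [InnerProductSpace ℝ V] [FiniteDimensional ℝ V]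
  [MeasurableSpace V] [BorelSpace V]

lemma fourierInv_sub_eq_fourier (h : V → ℂ) (x t : V) :
    𝓕⁻ h (x - t) = 𝓕 (fun ξ => 𝐞 (inner ℝ ξ x) • h ξ) t := by
  rw [Real.fourierInv_eq, Real.fourier_eq]
  congr with ξ
  rw [smul_smul, ← AddChar.map_add_eq_mul, inner_sub_right, sub_eq_neg_add]

lemma integrable_fourierChar_smul (x : V) {h : V → ℂ} (hh : Integrable h) :
    Integrable fun ξ => 𝐞 (inner ℝ ξ x) • h ξ := by
  simpa using (VectorFourier.fourierIntegral_convergent_iff (L := innerₗ V)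
    Real.continuous_fourierChar continuous_inner (-x)).2 hh

theorem convolution_fourierInv_eq {u h : V → ℂ} (hu : Integrable u) (hh : Integrable h) (x : V) :
    (u ⋆[mul ℂ ℂ] 𝓕⁻ h) x = 𝓕⁻ (fun ξ => 𝓕 u ξ * h ξ) x := by
  have hmod := integrable_fourierChar_smul x hh
  calc (u ⋆[mul ℂ ℂ] 𝓕⁻ h) x
      = ∫ t, u t • 𝓕 (fun ξ => 𝐞 (inner ℝ ξ x) • h ξ) t := by
        simp only [convolution_def, fourierInv_sub_eq_fourier, ContinuousLinearMap.mul_apply',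
          smul_eq_mul]
    _ = ∫ ξ, 𝓕 u ξ • (𝐞 (inner ℝ ξ x) • h ξ) := by
        have hflip := VectorFourier.integral_fourierIntegral_smul_eq_flip (L := innerₗ V)
          Real.continuous_fourierChar continuous_inner hu hmod
        rw [flip_innerₗ] at hflip
        exact hflip.symm
    _ = _ := by
        rw [Real.fourierInv_eq]
        congr with ξ
        simp only [smul_eq_mul, Circle.smul_def]
        ring

lemma norm_fourierInv_le_integral_norm (h : V → ℂ) (x : V) : ‖𝓕⁻ h x‖ ≤ ∫ ξ, ‖h ξ‖ := by
  rw [Real.fourierInv_eq]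
  exact (norm_integral_le_integral_norm _).trans_eq (by simp only [Circle.norm_smul])

lemma continuous_fourierInv {h : V → ℂ} (hh : Integrable h) : Continuous (𝓕⁻ h) := by
  rw [← Real.Lp.fourierTransformInv_toLp (memLp_one_iff_integrable.2 hh)]
  exact BoundedContinuousFunction.continuous _

lemma boundedMeasurable_fourierInv {h : V → ℂ} (hh : Integrable h) : BoundedMeasurable (𝓕⁻ h) :=
  ⟨(continuous_fourierInv hh).stronglyMeasurable, _, norm_fourierInv_le_integral_norm h⟩

lemma fourierInv_finsetSum {ι : Type*} (s : Finset ι) {h : ι → V → ℂ}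
    (hh : ∀ i ∈ s, Integrable (h i)) (x : V) :
    𝓕⁻ (fun ξ => ∑ i ∈ s, h i ξ) x = ∑ i ∈ s, 𝓕⁻ (h i) x := by
  simp_rw [Real.fourierInv_eq, Finset.smul_sum]
  exact integral_finsetSum _ fun i hi => integrable_fourierChar_smul x (hh i hi)

lemma integral_mul_fourierInv (s : 𝓢(V, ℂ)) {h : V → ℂ} (hh : Integrable h) :
    ∫ x, s x • 𝓕⁻ h x = ∫ ξ, 𝓕⁻ s ξ • h ξ := by
  have hflip := VectorFourier.integral_fourierIntegral_smul_eq_flip (L := -innerₗ V)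
    (μ := volume) (ν := volume) Real.continuous_fourierChar continuous_inner.neg s.integrable hh
  have hsymm : (-innerₗ V).flip = -innerₗ V := by
    ext x y
    simp [real_inner_comm]
  rw [hsymm] at hflip
  rw [SchwartzMap.fourierInv_coe]
  exact hflip.symm

theorem memLp_two_fourierInv {h : V → ℂ} (hh : Integrable h) (hh₂ : MemLp h 2) :
    MemLp (𝓕⁻ h) 2 := by
  set H : Lp ℂ 2 (volume : Measure V) := 𝓕⁻ (hh₂.toLp h)
  refine (memLp_congr_ae ?_).1 (Lp.memLp H)
  refine ae_eq_of_integral_contDiff_smul_eq ((Lp.memLp H).locallyIntegrable one_le_two)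
    (continuous_fourierInv hh).locallyIntegrable fun g hg hgc => ?_
  set s : 𝓢(V, ℂ) := (hgc.comp_left (g := Complex.ofReal) rfl).toSchwartzMap
    (Complex.ofRealCLM.contDiff.comp hg)
  have hs : ∀ x (z : ℂ), g x • z = s x • z := fun x z => Complex.real_smul
  simp_rw [hs]
  calc ∫ x, s x • H x = 𝓕⁻ (Lp.toTemperedDistribution (hh₂.toLp h)) s := by
        rw [Lp.fourierInv_toTemperedDistribution_eq, Lp.toTemperedDistribution_apply]
    _ = ∫ ξ, 𝓕⁻ s ξ • hh₂.toLp h ξ := by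
        rw [TemperedDistribution.fourierInv_apply, Lp.toTemperedDistribution_apply]
    _ = ∫ ξ, 𝓕⁻ s ξ • h ξ := by
        refine integral_congr_ae ?_
        filter_upwards [hh₂.coeFn_toLp] with ξ hξ
        rw [hξ]
    _ = ∫ x, s x • 𝓕⁻ h x := (integral_mul_fourierInv s hh).symm

end FourierConvolution

section Synthesis

open ContinuousLinearMap (mul)

lemma enorm_sum_rpow_le {ι E : Type*} [SeminormedAddCommGroup E] (s : Finset ι) (f : ι → E) {q : ℝ}
    (hq : 1 ≤ q) : ‖∑ i ∈ s, f i‖ₑ ^ q ≤ (#s : ℝ≥0∞) ^ (q - 1) * ∑ i ∈ s, ‖f i‖ₑ ^ q := by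
  have hq₀ : 0 ≤ q := by linarith
  have hle : ‖∑ i ∈ s, f i‖₊ ^ q ≤ (#s : ℝ≥0) ^ (q - 1) * ∑ i ∈ s, ‖f i‖₊ ^ q :=
    (NNReal.rpow_le_rpow (nnnorm_sum_le s f) hq₀).trans
      (NNReal.rpow_sum_le_const_mul_sum_rpow s _ hq)
  simp only [enorm_eq_nnnorm, ← ENNReal.coe_rpow_of_nonneg _ hq₀]
  rw [← ENNReal.coe_natCast, ← ENNReal.coe_rpow_of_nonneg _ (sub_nonneg.2 hq)]
  exact_mod_cast hle

lemma BoundedMeasurable.comp_prodMk {X Y E : Type*} [MeasurableSpace X] [MeasurableSpace Y]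
    [NormedAddCommGroup E] {g : X × Y → E} (hg : BoundedMeasurable g) (x : X) :
    BoundedMeasurable fun y => g (x, y) := by
  obtain ⟨M, hM⟩ := hg.bounded
  exact ⟨hg.stronglyMeasurable.comp_measurable measurable_prodMk_left, M, fun y => hM (x, y)⟩

lemma lintegral_count_prod {ι X : Type*} [Fintype ι] [MeasurableSpace ι]
    [MeasurableSingletonClass ι] [MeasurableSpace X] {μ : Measure X} [SFinite μ]
    {F : ι × X → ℝ≥0∞} (hF : Measurable F) :
    ∫⁻ z, F z ∂(Measure.count.prod μ) = ∑ i, ∫⁻ x, F (i, x) ∂μ := by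
  rw [lintegral_prod _ hF.aemeasurable, lintegral_count, tsum_fintype]

lemma BoundedMeasurable.of_sections {ι X E : Type*} [Finite ι] [MeasurableSpace ι]
    [MeasurableSingletonClass ι] [MeasurableSpace X] [NormedAddCommGroup E] [MeasurableSpace E]
    [BorelSpace E] [SecondCountableTopology E] {g : ι → X → E} (hg : ∀ i, BoundedMeasurable (g i)) :
    BoundedMeasurable fun z : ι × X => g z.1 z.2 := by
  choose hmeas M hM using fun i => (⟨(hg i).1, (hg i).2⟩ : _ ∧ _)
  obtain ⟨B, hB⟩ := (Set.finite_range M).bddAbove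
  exact ⟨(measurable_from_prod_countable_right fun i => (hmeas i).measurable).stronglyMeasurable,
    B, fun z => (hM z.1 z.2).trans (hB ⟨z.1, rfl⟩)⟩

lemma boundedMeasurable_schwartz_sections {ι V : Type*} [Finite ι] [MeasurableSpace ι]
    [MeasurableSingletonClass ι] [NormedAddCommGroup V] [NormedSpace ℝ V] [MeasurableSpace V]
    [BorelSpace V] (σ : ι → 𝓢(V, ℂ)) :
    BoundedMeasurable fun z : ι × V => σ z.1 z.2 := by
  refine .of_sections fun i => ⟨?_, SchwartzMap.seminorm ℝ 0 0 (σ i), (σ i).norm_le_seminorm ℝ⟩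
  exact (σ i).continuous.measurable.stronglyMeasurable

lemma exists_schwartzMap_lintegral_sub_le {V : Type*} [NormedAddCommGroup V]
    [InnerProductSpace ℝ V] [FiniteDimensional ℝ V] [MeasurableSpace V] [BorelSpace V] {u : V → ℂ}
    (hu : BoundedMeasurable u) {q : ℝ} (hq : 1 ≤ q)
    (hfin : ∫⁻ x, ‖u x‖ₑ ^ q ≠ ⊤) {δ : ℝ≥0∞} (hδ : δ ≠ 0) :
    ∃ s : 𝓢(V, ℂ), ∫⁻ x, ‖u x - s x‖ₑ ^ q ≤ δ := by
  have hq₀ : 0 < q := by linarith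
  have heLp : ∀ v : V → ℂ, eLpNorm v (ENNReal.ofReal q) volume ^ q = ∫⁻ x, ‖v x‖ₑ ^ q := fun v => by
    rw [eLpNorm_eq_eLpNorm' (by simpa using hq₀) ENNReal.ofReal_ne_top,
      ENNReal.toReal_ofReal hq₀.le, lintegral_rpow_enorm_eq_rpow_eLpNorm' hq₀]
  have hmem : MemLp u (ENNReal.ofReal q) := by
    refine ⟨hu.stronglyMeasurable.aestronglyMeasurable, ?_⟩
    rwa [← ENNReal.rpow_lt_top_iff_of_pos hq₀, heLp, lt_top_iff_ne_top]
  have hδq : 0 < δ ^ q⁻¹ := ENNReal.rpow_pos_of_nonneg (pos_iff_ne_zero.2 hδ) (by positivity)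
  obtain ⟨η, hη, hηδ⟩ := ENNReal.lt_iff_exists_nnreal_btwn.1 hδq
  obtain ⟨s, hsc, hs, hle⟩ := hmem.exist_eLpNorm_sub_le ENNReal.ofReal_ne_top
    (ENNReal.one_le_ofReal.2 hq) (NNReal.coe_pos.2 (ENNReal.coe_pos.1 hη))
  refine ⟨hsc.toSchwartzMap hs, (heLp (u - s)).symm.trans_le ?_⟩
  rw [← ENNReal.le_rpow_inv_iff hq₀]
  exact hle.trans (by simpa using hηδ.le)

lemma exists_schwartz_sections_eLpNorm'_sub_le {ι V : Type*} [Finite ι] [MeasurableSpace ι]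
    [MeasurableSingletonClass ι] [NormedAddCommGroup V] [InnerProductSpace ℝ V]
    [FiniteDimensional ℝ V] [MeasurableSpace V] [BorelSpace V] {g : ι × V → ℂ}
    (hg : BoundedMeasurable g) {q : ℝ} (hq : 1 ≤ q)
    (hfin : eLpNorm' g q (Measure.count.prod volume) ≠ ⊤) {δ : ℝ≥0∞} (hδ : δ ≠ 0) :
    ∃ s : ι × V → ℂ, (∃ σ : ι → 𝓢(V, ℂ), s = fun z => σ z.1 z.2) ∧
      eLpNorm' (g - s) q (Measure.count.prod volume) ≤ δ := by
  cases nonempty_fintype ι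
  have hq₀ : 0 < q := by linarith
  have hsum : ∑ i, ∫⁻ x, ‖g (i, x)‖ₑ ^ q ≠ ⊤ := by
    rw [← lintegral_count_prod (hg.stronglyMeasurable.enorm.pow_const q),
      lintegral_rpow_enorm_eq_rpow_eLpNorm' hq₀]
    exact ENNReal.rpow_ne_top_of_nonneg hq₀.le hfin
  have hδ' : δ ^ q / (Fintype.card ι : ℝ≥0∞) ≠ 0 :=
    ENNReal.div_ne_zero.2 ⟨by simp [hδ, hq₀.le], ENNReal.natCast_ne_top _⟩
  choose σ hσ using fun i => exists_schwartzMap_lintegral_sub_le (hg.comp_prodMk i) hq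
    (ENNReal.sum_ne_top.1 hsum i (Finset.mem_univ i)) hδ'
  refine ⟨_, ⟨σ, rfl⟩, ?_⟩
  have hsub := hg.sub (boundedMeasurable_schwartz_sections σ)
  rw [← ENNReal.rpow_le_rpow_iff hq₀, ← lintegral_rpow_enorm_eq_rpow_eLpNorm' hq₀,
    lintegral_count_prod (hsub.stronglyMeasurable.enorm.pow_const q)]
  exact (Finset.sum_le_card_nsmul _ _ _ fun i _ => hσ i).trans
    (by rw [nsmul_eq_mul, Finset.card_univ]; exact ENNReal.mul_div_le)

variable {ι V : Type*} [Fintype ι] [NormedAddCommGroup V] [InnerProductSpace ℝ V]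
  [FiniteDimensional ℝ V] [MeasurableSpace V] [BorelSpace V]

/-- The vector-valued convolution operator `(g i)ᵢ ↦ ∑ i, K i * g i`. A vector `(g i)ᵢ` of functions
on `V` is encoded as a single function on `ι × V`. -/
def synthesis (K : ι → 𝓢(V, ℂ)) (g : ι × V → ℂ) (x : V) : ℂ :=
  ∑ i, (K i ⋆[mul ℂ ℂ] fun y => g (i, y)) x

/-- `ℓ^q L^q` decoupling at exponent `q` with constant `B` (not raised to the power `1 / q`), for
Schwartz functions with frequencies in the sets `Ω i`. -/
def Decoupling (Ω : ι → Set V) (q : ℝ) (B : ℝ≥0∞) : Prop :=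
  ∀ h : ι → 𝓢(V, ℂ), (∀ i, Function.support (𝓕 (⇑(h i))) ⊆ Ω i) →
    ∫⁻ x, ‖∑ i, h i x‖ₑ ^ q ≤ B * ∑ i, ∫⁻ x, ‖h i x‖ₑ ^ q

lemma Decoupling.mono {Ω Ω' : ι → Set V} {q : ℝ} {B : ℝ≥0∞} (hΩ : Decoupling Ω' q B)
    (hsub : ∀ i, Ω i ⊆ Ω' i) : Decoupling Ω q B :=
  fun h hh => hΩ h fun i => (hh i).trans (hsub i)

theorem Decoupling.of_fiberwise {κ : Type*} [Fintype κ] [DecidableEq κ] {Ω : ι → Set V} {q : ℝ}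
    {B : ℝ≥0∞} (hq : 1 ≤ q) (c : ι → κ)
    (hΩ : ∀ k, Decoupling (fun i : {i // c i = k} => Ω i) q B) :
    Decoupling Ω q (Fintype.card κ ^ (q - 1) * B) := by
  intro h hh
  have hmeas : ∀ k, Measurable fun x => ‖∑ i : {i // c i = k}, h i x‖ₑ ^ q := by fun_prop
  calc ∫⁻ x, ‖∑ i, h i x‖ₑ ^ q
      = ∫⁻ x, ‖∑ k, ∑ i : {i // c i = k}, h i x‖ₑ ^ q := by
        exact lintegral_congr fun x => by rw [Fintype.sum_fiberwise c fun i => h i x]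
    _ ≤ ∫⁻ x, Fintype.card κ ^ (q - 1) * ∑ k, ‖∑ i : {i // c i = k}, h i x‖ₑ ^ q :=
        lintegral_mono fun x => enorm_sum_rpow_le _ _ hq
    _ = Fintype.card κ ^ (q - 1) * ∑ k, ∫⁻ x, ‖∑ i : {i // c i = k}, h i x‖ₑ ^ q := by
        rw [lintegral_const_mul _ (by fun_prop), lintegral_finsetSum _ fun k _ => hmeas k]
    _ ≤ Fintype.card κ ^ (q - 1) * ∑ k, B * ∑ i : {i // c i = k}, ∫⁻ x, ‖h i x‖ₑ ^ q := by
        gcongr with k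
        exact hΩ k (fun i => h i) fun i => hh i
    _ = _ := by
        rw [← Finset.mul_sum, Fintype.sum_fiberwise c fun i => ∫⁻ x, ‖h i x‖ₑ ^ q, mul_assoc]

lemma lintegral_enorm_sq_fourier (f : 𝓢(V, ℂ)) :
    ∫⁻ ξ, ‖𝓕 (⇑f) ξ‖ₑ ^ (2 : ℝ) = ∫⁻ x, ‖f x‖ₑ ^ (2 : ℝ) := by
  have hint : ∀ g : 𝓢(V, ℂ), ∫⁻ x, ‖g x‖ₑ ^ (2 : ℝ) = ENNReal.ofReal (∫ x, ‖g x‖ ^ 2) := by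
    intro g
    rw [ofReal_integral_eq_lintegral_ofReal (μ := volume)
      ((g.memLp 2).integrable_norm_pow two_ne_zero) (.of_forall fun _ => by positivity)]
    simp_rw [enorm_rpow_eq_ofReal _ zero_le_two, Real.rpow_two]
  rw [← SchwartzMap.fourier_coe, hint, hint, SchwartzMap.integral_norm_sq_fourier]

lemma enorm_sum_rpow_eq_of_pairwise_disjoint {X : Type*} {u : ι → X → ℂ}
    (hu : Pairwise (Function.onFun Disjoint fun i => Function.support (u i))) {q : ℝ} (hq : 0 < q)
    (x : X) : ‖∑ i, u i x‖ₑ ^ q = ∑ i, ‖u i x‖ₑ ^ q := by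
  by_cases hx : ∃ i, u i x ≠ 0
  · obtain ⟨i, hi⟩ := hx
    have hzero : ∀ j ≠ i, u j x = 0 := fun j hj =>
      by_contra fun hjx => Set.disjoint_left.1 (hu hj) hjx hi
    rw [Fintype.sum_eq_single i hzero, Fintype.sum_eq_single i fun j hj => by simp [hzero j hj, hq]]
  · push Not at hx
    simp [hx, hq]

lemma fourier_coe_sum (h : ι → 𝓢(V, ℂ)) :
    𝓕 (⇑(∑ i, h i)) = fun ξ => ∑ i, 𝓕 (⇑(h i)) ξ := by
  ext ξ
  simp_rw [← SchwartzMap.fourier_coe, FourierTransform.fourier_sum, _root_.sum_apply]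

theorem decoupling_two_of_pairwise_disjoint {Ω : ι → Set V}
    (hΩ : Pairwise (Function.onFun Disjoint Ω)) : Decoupling Ω 2 1 := by
  intro h hh
  calc ∫⁻ x, ‖∑ i, h i x‖ₑ ^ (2 : ℝ)
      = ∫⁻ ξ, ‖𝓕 (⇑(∑ i, h i)) ξ‖ₑ ^ (2 : ℝ) := by
        simp_rw [lintegral_enorm_sq_fourier, _root_.sum_apply]
    _ = ∫⁻ ξ, ∑ i, ‖𝓕 (⇑(h i)) ξ‖ₑ ^ (2 : ℝ) := by
        simp_rw [fourier_coe_sum]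
        exact lintegral_congr fun ξ => enorm_sum_rpow_eq_of_pairwise_disjoint
          (fun i j hij => (hΩ hij).mono (hh i) (hh j)) two_pos ξ
    _ = ∑ i, ∫⁻ ξ, ‖𝓕 (⇑(h i)) ξ‖ₑ ^ (2 : ℝ) := by
        refine lintegral_finsetSum _ fun i _ => ?_
        rw [← SchwartzMap.fourier_coe]
        fun_prop
    _ ≤ _ := by simp_rw [lintegral_enorm_sq_fourier, one_mul, le_refl]

lemma convolutionExists_of_boundedMeasurable (K : 𝓢(V, ℂ)) {u : V → ℂ} (hu : BoundedMeasurable u) :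
    ConvolutionExists K u (mul ℂ ℂ) := fun x => by
  obtain ⟨M, hM⟩ := hu.bounded
  have hmeas : Measurable fun y => x - y := measurable_const.sub measurable_id
  exact K.integrable.mul_bdd (hu.stronglyMeasurable.comp_measurable hmeas).aestronglyMeasurable
    (.of_forall fun y => hM (x - y))

lemma aestronglyMeasurable_convolution (K : 𝓢(V, ℂ)) {u : V → ℂ} (hu : BoundedMeasurable u) :
    AEStronglyMeasurable (K ⋆[mul ℂ ℂ] u) volume :=
  (K.continuous.aestronglyMeasurable.convolution_integrand (mul ℂ ℂ)
    hu.stronglyMeasurable.aestronglyMeasurable).integral_prod_right'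

lemma norm_convolution_le (K : 𝓢(V, ℂ)) {u : V → ℂ} {M : ℝ} (hu : ∀ x, ‖u x‖ ≤ M) (x : V) :
    ‖(K ⋆[mul ℂ ℂ] u) x‖ ≤ (∫ y, ‖K y‖) * M := by
  rw [← integral_mul_const]
  refine norm_integral_le_of_norm_le (K.integrable.norm.mul_const M) (.of_forall fun y => ?_)
  rw [ContinuousLinearMap.mul_apply', norm_mul]
  gcongr
  exact hu _

lemma lintegral_convolution_schwartz_le {K : 𝓢(V, ℂ)} {u : V → ℂ} {A q : ℝ}
    (hK : ∫ x, ‖K x‖ ≤ A) (hu : Measurable u) (hq : 1 ≤ q) :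
    ∫⁻ x, ‖(K ⋆[mul ℂ ℂ] u) x‖ₑ ^ q ≤ ENNReal.ofReal A ^ q * ∫⁻ x, ‖u x‖ₑ ^ q := by
  refine (lintegral_enorm_convolution_rpow_le K.continuous.measurable hu hq).trans ?_
  rw [← ofReal_integral_norm_eq_lintegral_enorm K.integrable]
  gcongr

lemma norm_synthesis_le {K : ι → 𝓢(V, ℂ)} {g : ι × V → ℂ} {A M : ℝ} (hK : ∀ i, ∫ x, ‖K i x‖ ≤ A)
    (hM : 0 ≤ M) (hg : ∀ z, ‖g z‖ ≤ M) (x : V) : ‖synthesis K g x‖ ≤ Fintype.card ι * A * M := by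
  refine (norm_sum_le_of_le _ fun i _ => (norm_convolution_le (K i) (fun y => hg (i, y)) x).trans
    (mul_le_mul_of_nonneg_right (hK i) hM)).trans_eq ?_
  rw [Finset.sum_const, nsmul_eq_mul, mul_assoc, Finset.card_univ]

variable [MeasurableSpace ι]

lemma isSubadditive_synthesis (K : ι → 𝓢(V, ℂ)) : IsSubadditive (synthesis K) := by
  intro g g' hg hg' x
  have hadd : synthesis K (g + g') x = synthesis K g x + synthesis K g' x := by
    rw [synthesis, synthesis, synthesis, ← Finset.sum_add_distrib]
    exact Finset.sum_congr rfl fun i _ =>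
      (convolutionExists_of_boundedMeasurable (K i) (hg.comp_prodMk i) x).distrib_add
        (convolutionExists_of_boundedMeasurable (K i) (hg'.comp_prodMk i) x)
  exact hadd ▸ norm_add_le _ _

lemma aestronglyMeasurable_synthesis (K : ι → 𝓢(V, ℂ)) {g : ι × V → ℂ} (hg : BoundedMeasurable g) :
    AEStronglyMeasurable (synthesis K g) volume :=
  Finset.aestronglyMeasurable_fun_sum _ fun i _ =>
    aestronglyMeasurable_convolution (K i) (hg.comp_prodMk i)

variable [MeasurableSingletonClass ι]

lemma isStrongType_synthesis_of_integral_norm_le {K : ι → 𝓢(V, ℂ)} {A q : ℝ} (hq : 1 ≤ q)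
    (hK : ∀ i, ∫ x, ‖K i x‖ ≤ A) :
    IsStrongType (synthesis K) q (Fintype.card ι ^ (q - 1) * ENNReal.ofReal A ^ q)
      (Measure.count.prod volume) volume := by
  intro g hg
  calc ∫⁻ x, ‖synthesis K g x‖ₑ ^ q
      ≤ ∫⁻ x, (Fintype.card ι : ℝ≥0∞) ^ (q - 1) *
          ∑ i, ‖(K i ⋆[mul ℂ ℂ] fun y => g (i, y)) x‖ₑ ^ q :=
        lintegral_mono fun x => enorm_sum_rpow_le _ _ hq
    _ = (Fintype.card ι : ℝ≥0∞) ^ (q - 1) *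
          ∑ i, ∫⁻ x, ‖(K i ⋆[mul ℂ ℂ] fun y => g (i, y)) x‖ₑ ^ q := by
        have hm := fun i =>
          (aestronglyMeasurable_convolution (K i) (hg.comp_prodMk i)).enorm.pow_const q
        rw [lintegral_const_mul'' _ (Finset.aemeasurable_fun_sum _ fun i _ => hm i),
          lintegral_finsetSum' _ fun i _ => hm i]
    _ ≤ (Fintype.card ι : ℝ≥0∞) ^ (q - 1) *
          ∑ i, ENNReal.ofReal A ^ q * ∫⁻ x, ‖g (i, x)‖ₑ ^ q := by
        gcongr with i
        exact lintegral_convolution_schwartz_le (hK i)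
          (hg.comp_prodMk i).stronglyMeasurable.measurable hq
    _ = _ := by
        rw [lintegral_count_prod (hg.stronglyMeasurable.enorm.pow_const q), ← Finset.mul_sum,
          mul_assoc]

lemma support_fourier_convolution_subset (K s : 𝓢(V, ℂ)) :
    Function.support (𝓕 (⇑(K.convolution (mul ℂ ℂ) s))) ⊆ Function.support (𝓕 (⇑K)) := by
  intro ξ hξ hK
  rw [← SchwartzMap.fourier_coe] at hK
  rw [← SchwartzMap.fourier_coe, SchwartzMap.fourier_convolution, Function.mem_support,
    SchwartzMap.pairing_apply_apply, ContinuousLinearMap.mul_apply', hK, zero_mul] at hξ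
  exact hξ rfl

lemma Decoupling.lintegral_synthesis_schwartz_le {Ω : ι → Set V} {q A : ℝ} {B : ℝ≥0∞} (hq : 1 ≤ q)
    (hΩ : Decoupling Ω q B) {K : ι → 𝓢(V, ℂ)} (hKΩ : ∀ i, Function.support (𝓕 (⇑(K i))) ⊆ Ω i)
    (hK : ∀ i, ∫ x, ‖K i x‖ ≤ A) (σ : ι → 𝓢(V, ℂ)) :
    ∫⁻ x, ‖synthesis K (fun z => σ z.1 z.2) x‖ₑ ^ q ≤
      B * ENNReal.ofReal A ^ q * ∫⁻ z, ‖σ z.1 z.2‖ₑ ^ q ∂(Measure.count.prod volume) := by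
  set h : ι → 𝓢(V, ℂ) := fun i => (K i).convolution (mul ℂ ℂ) (σ i)
  have hconv : ∀ i x, h i x = (K i ⋆[mul ℂ ℂ] σ i) x := fun i x =>
    SchwartzMap.convolution_apply _ _ _ _
  calc ∫⁻ x, ‖synthesis K (fun z => σ z.1 z.2) x‖ₑ ^ q
      = ∫⁻ x, ‖∑ i, h i x‖ₑ ^ q := by simp_rw [synthesis, hconv]
    _ ≤ B * ∑ i, ∫⁻ x, ‖h i x‖ₑ ^ q :=
        hΩ h fun i => (support_fourier_convolution_subset _ _).trans (hKΩ i)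
    _ ≤ B * ∑ i, ENNReal.ofReal A ^ q * ∫⁻ x, ‖σ i x‖ₑ ^ q := by
        gcongr with i
        simp_rw [hconv]
        exact lintegral_convolution_schwartz_le (hK i) (σ i).continuous.measurable hq
    _ = _ := by
        rw [lintegral_count_prod
          ((boundedMeasurable_schwartz_sections σ).stronglyMeasurable.enorm.pow_const q),
          ← Finset.mul_sum, mul_assoc]

theorem Decoupling.isStrongType_synthesis {Ω : ι → Set V} {q A : ℝ} {B : ℝ≥0∞} (hq : 1 ≤ q)
    (hB₀ : B ≠ 0) (hB : B ≠ ⊤) (hA : 0 < A) (hΩ : Decoupling Ω q B) {K : ι → 𝓢(V, ℂ)}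
    (hKΩ : ∀ i, Function.support (𝓕 (⇑(K i))) ⊆ Ω i)
    (hK : ∀ i, ∫ x, ‖K i x‖ ≤ A) :
    IsStrongType (synthesis K) q (B * ENNReal.ofReal A ^ q) (Measure.count.prod volume) volume := by
  have : 0 < q := by linarith
  refine IsStrongType.of_dense (P := fun s => ∃ σ : ι → 𝓢(V, ℂ), s = fun z => σ z.1 z.2)
    (isSubadditive_synthesis K) (fun g hg => aestronglyMeasurable_synthesis K hg) hq
    (by finiteness) (by positivity) (by finiteness)
    (isStrongType_synthesis_of_integral_norm_le hq hK) ?_ ?_ ?_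
  · rintro _ ⟨σ, rfl⟩
    exact boundedMeasurable_schwartz_sections σ
  · exact fun g hg hgq δ hδ => exists_schwartz_sections_eLpNorm'_sub_le hg hq hgq hδ
  · rintro _ ⟨σ, rfl⟩
    exact hΩ.lintegral_synthesis_schwartz_le hq hKΩ hK σ

end Synthesis

section AffineInvariance

variable {V : Type*} [NormedAddCommGroup V] [InnerProductSpace ℝ V]

/-- Precomposition `u ↦ u (L · + c)` of Schwartz functions with an affine isomorphism. -/
def compAffine (L : V ≃L[ℝ] V) (c : V) : 𝓢(V, ℂ) →L[ℂ] 𝓢(V, ℂ) :=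
  (SchwartzMap.compCLMOfContinuousLinearEquiv ℂ L).comp (SchwartzMap.compSubConstCLM ℂ (-c))

lemma compAffine_apply (L : V ≃L[ℝ] V) (c : V) (u : 𝓢(V, ℂ)) (ξ : V) :
    compAffine L c u ξ = u (L ξ + c) := by
  simp [compAffine, SchwartzMap.compSubConstCLM_apply]

variable [FiniteDimensional ℝ V]

lemma det_adjoint_eq (T : V →ₗ[ℝ] V) : LinearMap.det (LinearMap.adjoint T) = LinearMap.det T := by
  have b := stdOrthonormalBasis ℝ V
  rw [← LinearMap.det_toMatrix b.toBasis, ← LinearMap.det_toMatrix b.toBasis,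
    LinearMap.toMatrix_adjoint, Matrix.det_conjTranspose, star_trivial]

variable [MeasurableSpace V] [BorelSpace V]

lemma integral_comp_continuousLinearEquiv (L : V ≃L[ℝ] V) (G : V → ℂ) :
    ∫ x, G (L x) = |LinearMap.det (L : V →ₗ[ℝ] V)|⁻¹ • ∫ x, G x := by
  have hmap := Measure.map_linearMap_addHaar_eq_smul_addHaar (volume : Measure V)
    (LinearEquiv.isUnit_det' L.toLinearEquiv).ne_zero
  rw [← abs_inv, ← ENNReal.toReal_ofReal (abs_nonneg _), ← integral_smul_measure, ← hmap]
  exact (L.toHomeomorph.measurableEmbedding.integral_map G).symm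

lemma lintegral_comp_linearMap {T : V →ₗ[ℝ] V} (hT : LinearMap.det T ≠ 0) {G : V → ℝ≥0∞}
    (hG : Measurable G) :
    ∫⁻ x, G (T x) = ENNReal.ofReal |LinearMap.det T|⁻¹ * ∫⁻ x, G x := by
  rw [← abs_inv, ← smul_eq_mul, ← lintegral_smul_measure,
    ← Measure.map_linearMap_addHaar_eq_smul_addHaar _ hT,
    lintegral_map hG T.continuous_of_finiteDimensional.measurable]

lemma norm_fourierInv_comp_affine (L : V ≃L[ℝ] V) (c : V) (u : V → ℂ) (x : V) :
    ‖𝓕⁻ (fun ξ => u (L ξ + c)) x‖ = |LinearMap.det (L : V →ₗ[ℝ] V)|⁻¹ *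
      ‖𝓕⁻ u (LinearMap.adjoint (L.symm : V →ₗ[ℝ] V) x)‖ := by
  have hphase : ∀ ζ, 𝐞 (inner ℝ (L.symm (ζ - c)) x) • u ζ =
      (𝐞 (-inner ℝ (L.symm c) x) : ℂ) •
        𝐞 (inner ℝ ζ (LinearMap.adjoint (L.symm : V →ₗ[ℝ] V) x)) • u ζ := by
    intro ζ
    rw [← Circle.smul_def, smul_smul, ← AddChar.map_add_eq_mul, LinearMap.adjoint_inner_right,
      map_sub, inner_sub_left, neg_add_eq_sub]
    rfl
  have htranslate := integral_add_right_eq_self (μ := volume)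
    (fun ζ => 𝐞 (inner ℝ (L.symm (ζ - c)) x) • u ζ) c
  have hcomp := integral_comp_continuousLinearEquiv L
    (fun ζ => 𝐞 (inner ℝ (L.symm ζ) x) • u (ζ + c))
  simp only [L.symm_apply_apply] at hcomp
  simp only [add_sub_cancel_right] at htranslate
  rw [Real.fourierInv_eq, Real.fourierInv_eq, hcomp, norm_smul, htranslate, norm_inv,
    Real.norm_eq_abs, abs_abs]
  simp_rw [hphase]
  rw [integral_smul, norm_smul, Circle.norm_coe, one_mul]

lemma lintegral_enorm_fourierInv_comp_affine (L : V ≃L[ℝ] V) (c : V) {u : V → ℂ}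
    (hu : Integrable u) {q : ℝ} (hq : 0 ≤ q) :
    ∫⁻ x, ‖𝓕⁻ (fun ξ => u (L ξ + c)) x‖ₑ ^ q =
      ENNReal.ofReal (|LinearMap.det (L : V →ₗ[ℝ] V)| ^ (1 - q)) * ∫⁻ x, ‖𝓕⁻ u x‖ₑ ^ q := by
  have hd : 0 < |LinearMap.det (L : V →ₗ[ℝ] V)| :=
    abs_pos.2 (LinearEquiv.isUnit_det' L.toLinearEquiv).ne_zero
  have hdet : LinearMap.det (LinearMap.adjoint (L.symm : V →ₗ[ℝ] V)) =
      (LinearMap.det (L : V →ₗ[ℝ] V))⁻¹ := by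
    rw [det_adjoint_eq]
    exact eq_inv_of_mul_eq_one_left (LinearEquiv.det_symm_mul_det L.toLinearEquiv)
  have hdet₀ : LinearMap.det (LinearMap.adjoint (L.symm : V →ₗ[ℝ] V)) ≠ 0 :=
    hdet ▸ inv_ne_zero (abs_pos.1 hd)
  have hmeas : Measurable fun y => ‖𝓕⁻ u y‖ₑ ^ q :=
    ((continuous_fourierInv hu).measurable.enorm).pow_const q
  simp_rw [← ofReal_norm (𝓕⁻ (fun ξ => u (L ξ + c)) _), norm_fourierInv_comp_affine,
    ENNReal.ofReal_mul (inv_nonneg.2 hd.le), ENNReal.mul_rpow_of_nonneg _ _ hq, ofReal_norm]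
  rw [lintegral_const_mul' _ _ (by finiteness), lintegral_comp_linearMap hdet₀ hmeas, hdet, abs_inv,
    inv_inv, ← mul_assoc, ENNReal.ofReal_rpow_of_pos (inv_pos.2 hd),
    ← ENNReal.ofReal_mul (by positivity), Real.inv_rpow hd.le, Real.rpow_sub hd, Real.rpow_one,
    div_eq_inv_mul]

lemma lintegral_enorm_fourierInv_compAffine (L : V ≃L[ℝ] V) (c : V) (u : 𝓢(V, ℂ)) {q : ℝ}
    (hq : 0 ≤ q) : ∫⁻ x, ‖𝓕⁻ (compAffine L c u) x‖ₑ ^ q =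
      ENNReal.ofReal (|LinearMap.det (L : V →ₗ[ℝ] V)| ^ (1 - q)) * ∫⁻ x, ‖𝓕⁻ u x‖ₑ ^ q := by
  simp_rw [SchwartzMap.fourierInv_coe]
  rw [← lintegral_enorm_fourierInv_comp_affine L c u.integrable hq]
  simp_rw [← compAffine_apply]

lemma integral_norm_fourierInv_compAffine (L : V ≃L[ℝ] V) (c : V) (u : 𝓢(V, ℂ)) :
    ∫ x, ‖𝓕⁻ (compAffine L c u) x‖ = ∫ x, ‖𝓕⁻ u x‖ := by
  have h := lintegral_enorm_fourierInv_compAffine L c u zero_le_one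
  simp only [ENNReal.rpow_one, sub_self, Real.rpow_zero, ENNReal.ofReal_one, one_mul] at h
  rw [integral_norm_eq_lintegral_enorm (𝓕⁻ (compAffine L c u)).continuous.aestronglyMeasurable,
    integral_norm_eq_lintegral_enorm (𝓕⁻ u).continuous.aestronglyMeasurable, h]

theorem Decoupling.of_preimage_affine {ι : Type*} [Fintype ι] {Ω : ι → Set V} {q : ℝ} {B : ℝ≥0∞}
    (hq : 0 ≤ q) (L : V ≃L[ℝ] V) (c : V)
    (hΩ : Decoupling (fun i => (fun ξ => L ξ + c) ⁻¹' Ω i) q B) :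
    Decoupling Ω q B := by
  intro h hh
  have hd : 0 < |LinearMap.det (L : V →ₗ[ℝ] V)| :=
    abs_pos.2 (LinearEquiv.isUnit_det' L.toLinearEquiv).ne_zero
  have hscale : ∀ u : 𝓢(V, ℂ), ∫⁻ x, ‖𝓕⁻ (compAffine L c (𝓕 u)) x‖ₑ ^ q =
      ENNReal.ofReal (|LinearMap.det (L : V →ₗ[ℝ] V)| ^ (1 - q)) * ∫⁻ x, ‖u x‖ₑ ^ q := fun u => by
    rw [lintegral_enorm_fourierInv_compAffine L c _ hq, FourierTransform.fourierInv_fourier_eq]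
  have hsum : ∀ x, 𝓕⁻ (compAffine L c (𝓕 (∑ i, h i))) x =
      ∑ i, 𝓕⁻ (compAffine L c (𝓕 (h i))) x := fun x => by
    rw [FourierTransform.fourier_sum, map_sum, FourierTransform.fourierInv_sum, _root_.sum_apply]
  have key := hΩ (fun i => 𝓕⁻ (compAffine L c (𝓕 (h i)))) fun i ξ hξ => by
    rw [← SchwartzMap.fourier_coe, FourierTransform.fourier_fourierInv_eq,
      Function.mem_support, compAffine_apply] at hξ
    exact hh i (SchwartzMap.fourier_coe (h i) ▸ hξ)
  simp_rw [← hsum, hscale, ← Finset.mul_sum, _root_.sum_apply] at key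
  rwa [mul_left_comm, ENNReal.mul_le_mul_iff_right (by simpa using by positivity) (by finiteness)]
    at key

end AffineInvariance

section MomentCurve

/-- The coordinate `y` in the expansion `ξ = γ(x) + y γ''(x) / 2 + z e₃` around the moment curve
`γ(x) = (x, x², x³)`, where `x = ξ 0`. -/
def quadOffset (ξ : R3) : ℝ := ξ 1 - ξ 0 ^ 2

/-- The coordinate `z` in the expansion `ξ = γ(x) + y γ''(x) / 2 + z e₃` around the moment curve
`γ(x) = (x, x², x³)`, where `x = ξ 0`. -/
def cubicOffset (ξ : R3) : ℝ := ξ 2 - 3 * ξ 0 * ξ 1 + 2 * ξ 0 ^ 3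

/-- The affine map of `ℝ³` that recenters the moment curve at the point with parameter `a` and then
multiplies the coordinates by `s`, `s ^ 2` and `t`. For `t = s ^ 3` it preserves the curve. -/
def momentMap (a s t : ℝ) (ξ : R3) : R3 :=
  !₂[s * (ξ 0 - a), s ^ 2 * (ξ 1 - 2 * a * ξ 0 + a ^ 2),
    t * (ξ 2 - 3 * a * ξ 1 + 3 * a ^ 2 * ξ 0 - a ^ 3)]

/-- The linear part of `momentMap a s t`. -/
def momentLinear (a : ℝ) {s t : ℝ} (hs : s ≠ 0) (ht : t ≠ 0) : R3 ≃L[ℝ] R3 :=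
  LinearEquiv.toContinuousLinearEquiv
  { toFun := fun ξ => !₂[s * ξ 0, s ^ 2 * (ξ 1 - 2 * a * ξ 0),
      t * (ξ 2 - 3 * a * ξ 1 + 3 * a ^ 2 * ξ 0)]
    map_add' := fun x y => by ext i; fin_cases i <;> simp <;> ring
    map_smul' := fun c x => by ext i; fin_cases i <;> simp <;> ring
    invFun := fun η => !₂[η 0 / s, η 1 / s ^ 2 + 2 * a * (η 0 / s),
      η 2 / t + 3 * a * (η 1 / s ^ 2) + 3 * a ^ 2 * (η 0 / s)]
    left_inv := fun x => by ext i; fin_cases i <;> simp <;> field_simp <;> ring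
    right_inv := fun x => by ext i; fin_cases i <;> simp <;> field_simp; ring }

lemma momentMap_eq_momentLinear_add (a : ℝ) {s t : ℝ} (hs : s ≠ 0) (ht : t ≠ 0) :
    momentMap a s t =
      fun ξ => momentLinear a hs ht ξ + !₂[-(s * a), s ^ 2 * a ^ 2, -(t * a ^ 3)] := by
  ext ξ i
  fin_cases i <;> simp [momentMap, momentLinear] <;> ring

lemma momentMap_apply_zero (a s t : ℝ) (ξ : R3) : momentMap a s t ξ 0 = s * (ξ 0 - a) := rfl

lemma quadOffset_momentMap (a s t : ℝ) (ξ : R3) :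
    quadOffset (momentMap a s t ξ) = s ^ 2 * quadOffset ξ := by
  simp only [quadOffset, momentMap, PiLp.toLp_apply, Matrix.cons_val]
  ring

lemma cubicOffset_momentMap_pow_three (a s : ℝ) (ξ : R3) :
    cubicOffset (momentMap a s (s ^ 3) ξ) = s ^ 3 * cubicOffset ξ := by
  simp only [cubicOffset, momentMap, PiLp.toLp_apply, Matrix.cons_val]
  ring

lemma mul_cubicOffset_eq (a : ℝ) {s : ℝ} (hs : s ≠ 0) (t : ℝ) (ξ : R3) :
    t * cubicOffset ξ = momentMap a s t ξ 2 + t / s ^ 3 *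
      (2 * momentMap a s t ξ 0 ^ 3 - 3 * momentMap a s t ξ 0 * momentMap a s t ξ 1) := by
  simp only [cubicOffset, momentMap, PiLp.toLp_apply, Matrix.cons_val]
  field_simp
  ring

variable {R β : ℝ}

lemma rpow_neg_two_mul_eq_sq (hR : 0 ≤ R) (β : ℝ) : R ^ (-2 * β) = (R ^ (-β)) ^ 2 := by
  rw [← Real.rpow_mul_natCast hR]
  congr 1
  push_cast
  ring

lemma mul_rpow_neg_pow_three_le_one (hβ : 1 / 3 ≤ β) (hR : 1 ≤ R) : R * (R ^ (-β)) ^ 3 ≤ 1 := by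
  have hR₀ : 0 < R := by linarith
  calc R * (R ^ (-β)) ^ 3 = R ^ (1 + -β * (3 : ℕ)) := by
        rw [Real.rpow_add hR₀, Real.rpow_one, Real.rpow_mul_natCast hR₀.le]
    _ ≤ 1 := Real.rpow_le_one_of_one_le_of_nonpos hR (by push_cast; linarith)

/-- The `l`-th small cap enlarged by an absolute constant. -/
def fatCap (R β : ℝ) (l : ℕ) : Set R3 :=
  {ξ | |ξ 0 - l * R ^ (-β)| ≤ 11 * R ^ (-β) ∧ |quadOffset ξ| ≤ 100 ^ 2 * R ^ (-2 * β) ∧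
    |cubicOffset ξ| ≤ 100 ^ 3 * R⁻¹}

/-- The affine chart in which the `l`-th small cap has unit size. -/
def capChart (R β : ℝ) (l : ℕ) : R3 → R3 :=
  momentMap (l * R ^ (-β)) (R ^ (-β))⁻¹ R

lemma capChart_apply_zero_mul (hR : 0 < R) (l : ℕ) (ξ : R3) :
    capChart R β l ξ 0 * R ^ (-β) = ξ 0 - l * R ^ (-β) := by
  have hδ : R ^ (-β) ≠ 0 := by positivity
  rw [capChart, momentMap_apply_zero]
  field_simp

lemma quadOffset_capChart_mul (hR : 0 < R) (l : ℕ) (ξ : R3) :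
    quadOffset (capChart R β l ξ) * R ^ (-2 * β) = quadOffset ξ := by
  have hδ : R ^ (-β) ≠ 0 := by positivity
  rw [capChart, quadOffset_momentMap, rpow_neg_two_mul_eq_sq hR.le]
  field_simp

lemma mul_cubicOffset_eq_capChart (hR : 0 < R) (l : ℕ) (ξ : R3) :
    R * cubicOffset ξ = capChart R β l ξ 2 + R * (R ^ (-β)) ^ 3 *
      (2 * capChart R β l ξ 0 ^ 3 - 3 * capChart R β l ξ 0 * capChart R β l ξ 1) := by
  have hδ : R ^ (-β) ≠ 0 := by positivity
  rw [mul_cubicOffset_eq (l * R ^ (-β)) (inv_ne_zero hδ) R, inv_pow, div_inv_eq_mul, capChart]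

lemma abs_mul_cubicOffset_sub_capChart_le (hβ : 1 / 3 ≤ β) (hR : 1 ≤ R) (l : ℕ) (ξ : R3) :
    |R * cubicOffset ξ - capChart R β l ξ 2| ≤
      |2 * capChart R β l ξ 0 ^ 3 - 3 * capChart R β l ξ 0 * capChart R β l ξ 1| := by
  have hR₀ : 0 < R := by linarith
  rw [mul_cubicOffset_eq_capChart (β := β) hR₀ l, add_sub_cancel_left, abs_mul,
    abs_of_nonneg (by positivity)]
  exact mul_le_of_le_one_left (abs_nonneg _) (mul_rpow_neg_pow_three_le_one hβ hR)

lemma norm_capChart_le_of_mem_smallCap (hβ : 1 / 3 ≤ β) (hR : 1 ≤ R) {l : ℕ} {ξ : R3}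
    (hξ : ξ ∈ smallCap R β l) : ‖capChart R β l ξ‖ ≤ 10 := by
  have hR₀ : 0 < R := by linarith
  have hδ : 0 < R ^ (-β) := by positivity
  obtain ⟨hleft, hright, hquad, hcubic⟩ := hξ
  have hparam := capChart_apply_zero_mul (β := β) hR₀ l ξ
  have hoffset := quadOffset_capChart_mul (β := β) hR₀ l ξ
  have hthird := abs_mul_cubicOffset_sub_capChart_le hβ hR l ξ
  set η := capChart R β l ξ
  have hη₀ : 0 ≤ η 0 := le_of_mul_le_mul_right (by linarith) hδ
  have hη₀' : η 0 ≤ 1 := le_of_mul_le_mul_right (by linarith) hδ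
  have hη₁ : |η 1 - η 0 ^ 2| ≤ 1 := by
    have hδ₂ : 0 < R ^ (-2 * β) := by positivity
    refine le_of_mul_le_mul_right ?_ hδ₂
    rwa [← abs_of_pos hδ₂, ← abs_mul, abs_of_pos hδ₂, one_mul, ← quadOffset, hoffset]
  have hcub : |R * cubicOffset ξ| ≤ 1 := by
    rw [abs_mul, abs_of_pos hR₀, ← mul_inv_cancel₀ hR₀.ne']
    exact mul_le_mul_of_nonneg_left hcubic hR₀.le
  have hη₀₃ : η 0 ^ 3 ≤ 1 := pow_le_one₀ hη₀ hη₀'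
  have hpoly : |2 * η 0 ^ 3 - 3 * η 0 * η 1| ≤ 4 := by
    have hfactor : 2 * η 0 ^ 3 - 3 * η 0 * η 1 = -(η 0 ^ 3 + 3 * η 0 * (η 1 - η 0 ^ 2)) := by ring
    rw [hfactor, abs_neg]
    refine (abs_add_le _ _).trans ?_
    rw [abs_of_nonneg (pow_nonneg hη₀ 3), abs_mul, abs_of_nonneg (by positivity : 0 ≤ 3 * η 0)]
    nlinarith [abs_nonneg (η 1 - η 0 ^ 2)]
  have hη₁' : |η 1| ≤ 2 := by
    rw [abs_le] at hη₁ ⊢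
    constructor <;> nlinarith
  have hη₂ : |η 2| ≤ 5 := by
    have := hthird.trans hpoly
    rw [abs_le] at hcub this ⊢
    constructor <;> linarith
  rw [EuclideanSpace.norm_eq, Fin.sum_univ_three, Real.sqrt_le_left (by norm_num)]
  simp only [Real.norm_eq_abs]
  rw [abs_of_nonneg hη₀]
  nlinarith [abs_nonneg (η 1), abs_nonneg (η 2)]

lemma mem_fatCap_of_norm_capChart_le (hβ : 1 / 3 ≤ β) (hR : 1 ≤ R) {l : ℕ} {ξ : R3}
    (hξ : ‖capChart R β l ξ‖ ≤ 11) : ξ ∈ fatCap R β l := by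
  have hR₀ : 0 < R := by linarith
  have hη : ∀ i, |capChart R β l ξ i| ≤ 11 := fun i => (PiLp.norm_apply_le _ i).trans hξ
  have hthird := abs_mul_cubicOffset_sub_capChart_le hβ hR l ξ
  refine ⟨?_, ?_, ?_⟩
  · rw [← capChart_apply_zero_mul hR₀, abs_mul, abs_of_pos (by positivity : 0 < R ^ (-β))]
    gcongr
    exact hη 0
  · rw [← quadOffset_capChart_mul (β := β) hR₀ l, abs_mul,
      abs_of_pos (by positivity : 0 < R ^ (-2 * β)), quadOffset]
    gcongr
    refine (abs_sub _ _).trans ?_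
    rw [abs_pow]
    have hη₁ := hη 1
    have hη₀ : |capChart R β l ξ 0| ^ 2 ≤ 11 ^ 2 := by gcongr; exact hη 0
    linarith
  · have hpoly : |2 * capChart R β l ξ 0 ^ 3 - 3 * capChart R β l ξ 0 * capChart R β l ξ 1| ≤
        2 * 11 ^ 3 + 3 * 11 * 11 := by
      refine (abs_sub _ _).trans ?_
      simp only [abs_mul, abs_pow, Nat.abs_ofNat]
      gcongr <;> exact hη _
    have : |R * cubicOffset ξ| ≤ 100 ^ 3 := by
      have hη₂ := hη 2
      have := abs_sub_abs_le_abs_sub (R * cubicOffset ξ) (capChart R β l ξ 2)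
      linarith
    rwa [abs_mul, abs_of_pos hR₀, ← le_div_iff₀' hR₀, div_eq_mul_inv] at this

lemma mem_smallCap_of_momentMap_mem_fatCap (hR : 0 < R) {l : ℕ} {ξ : R3}
    (hξ : momentMap (-(((l % 100 : ℕ) - 50) * R ^ (-β) / 100)) 100 (100 ^ 3) ξ ∈ fatCap R β l) :
    ξ ∈ smallCap R β (l / 100) := by
  have hδ : 0 < R ^ (-β) := by positivity
  obtain ⟨hparam, hquad, hcubic⟩ := hξ
  have hl : (l : ℝ) = (l % 100 : ℕ) + 100 * (l / 100 : ℕ) := by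
    exact_mod_cast (Nat.mod_add_div l 100).symm
  rw [quadOffset_momentMap, abs_mul, abs_of_pos (by positivity),
    mul_le_mul_iff_right₀ (by positivity)] at hquad
  rw [cubicOffset_momentMap_pow_three, abs_mul, abs_of_pos (by positivity),
    mul_le_mul_iff_right₀ (by positivity)] at hcubic
  rw [momentMap_apply_zero, hl, abs_le] at hparam
  exact ⟨by linarith, by linarith, hquad, hcubic⟩

lemma smallCap_subset_M3 (hR : 0 < R) {m : ℕ} (hm : (m : ℝ) + 1 ≤ R ^ β) :
    smallCap R β m ⊆ M3 R β := by
  rintro ξ ⟨hleft, hright, hquad, hcubic⟩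
  have hδ : 0 < R ^ (-β) := by positivity
  have hone : R ^ β * R ^ (-β) = 1 := by rw [← Real.rpow_add hR, add_neg_cancel, Real.rpow_zero]
  have hle : ((m : ℝ) + 1) * R ^ (-β) ≤ 1 :=
    (mul_le_mul_of_nonneg_right hm hδ.le).trans_eq hone
  exact ⟨⟨(by positivity : 0 ≤ m * R ^ (-β)).trans hleft, hright.le.trans hle⟩, hquad, hcubic⟩

lemma disjoint_fatCap (hR : 0 < R) {l m : ℕ} (hmod : l % 100 = m % 100) (hlm : l ≠ m) :
    Disjoint (fatCap R β l) (fatCap R β m) := by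
  have hδ : 0 < R ^ (-β) := by positivity
  wlog hlt : l < m generalizing l m
  · exact (this hmod.symm hlm.symm (by omega)).symm
  have hgap : (l : ℝ) + 100 ≤ m := by exact_mod_cast (by omega : l + 100 ≤ m)
  refine Set.disjoint_left.2 fun ξ hl hm => ?_
  have hl₀ := abs_le.1 hl.1
  have hm₀ := abs_le.1 hm.1
  nlinarith

end MomentCurve

section SmallCaps

lemma exists_schwartz_bump {V : Type*} [NormedAddCommGroup V] [InnerProductSpace ℝ V]
    [FiniteDimensional ℝ V] {r s : ℝ} (hr : 0 < r) (hrs : r < s) :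
    ∃ φ : 𝓢(V, ℂ), (∀ ξ, ‖ξ‖ ≤ r → φ ξ = 1) ∧ ∀ ξ, φ ξ ≠ 0 → ‖ξ‖ ≤ s := by
  let b : ContDiffBump (0 : V) := ⟨r, s, hr, hrs⟩
  refine ⟨(b.hasCompactSupport.comp_left (g := Complex.ofRealCLM) rfl).toSchwartzMap
    (Complex.ofRealCLM.contDiff.comp b.contDiff), fun ξ hξ => ?_, fun ξ hξ => ?_⟩
  · have : b ξ = 1 := b.one_of_mem_closedBall (by simpa using hξ)
    simp [this]
  · contrapose! hξ
    have : b ξ = 0 := b.zero_of_le_dist (by simpa using hξ.le)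
    simp [this]

lemma lintegral_enorm_rpow_eq_ofReal_integral {X E : Type*} [MeasurableSpace X] {μ : Measure X}
    [NormedAddCommGroup E] {u : X → E} {q : ℝ} (hq : 0 < q)
    (hu : MemLp u (ENNReal.ofReal q) μ) :
    ∫⁻ x, ‖u x‖ₑ ^ q ∂μ = ENNReal.ofReal (∫ x, ‖u x‖ ^ q ∂μ) := by
  have hint := hu.integrable_norm_rpow (by simpa using hq) ENNReal.ofReal_ne_top
  rw [ENNReal.toReal_ofReal hq.le] at hint
  rw [ofReal_integral_eq_lintegral_ofReal hint (.of_forall fun _ => by positivity)]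
  simp_rw [enorm_rpow_eq_ofReal _ hq.le]

/-- `ℓ^q L^q` small cap decoupling for the moment curve at scale `R`, with constant `D` (not raised
to the power `1 / q`). -/
def SmallCapDecoupling (R β q D : ℝ) : Prop :=
  ∀ f : 𝓢(R3, ℂ), Function.support (𝓕 (⇑f)) ⊆ M3 R β →
    ∫ x, ‖f x‖ ^ q ≤ D * ∑ l ∈ Finset.range ⌈R ^ β⌉₊, ∫ x, ‖fproj (smallCap R β l) f x‖ ^ q

lemma fproj_eq_of_indicator_fourier_eq {A : Set R3} {f : R3 → ℂ} {g : 𝓢(R3, ℂ)}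
    (h : A.indicator (𝓕 f) = 𝓕 (⇑g)) : fproj A f = g := by
  rw [fproj, h, ← SchwartzMap.fourier_coe, ← SchwartzMap.fourierInv_coe,
    FourierTransform.fourierInv_fourier_eq]

variable {ι : Type*} [Fintype ι]

lemma fproj_sum_of_pairwise_disjoint {Ω : ι → Set R3}
    (hΩ : Pairwise (Function.onFun Disjoint Ω)) {h : ι → 𝓢(R3, ℂ)}
    (hh : ∀ i, Function.support (𝓕 (⇑(h i))) ⊆ Ω i) (i : ι) :
    fproj (Ω i) (⇑(∑ j, h j)) = h i := by
  classical
  refine fproj_eq_of_indicator_fourier_eq (funext fun ξ => ?_)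
  rw [fourier_coe_sum, Set.indicator_apply]
  split_ifs with hξ
  · exact Fintype.sum_eq_single i fun j hj => Function.notMem_support.1 fun hjξ =>
      Set.disjoint_left.1 (hΩ hj) (hh j hjξ) hξ
  · exact (Function.notMem_support.1 fun hiξ => hξ (hh i hiξ)).symm

lemma fproj_sum_of_forall_disjoint {Ω : ι → Set R3} {A : Set R3} (hA : ∀ i, Disjoint A (Ω i))
    {h : ι → 𝓢(R3, ℂ)} (hh : ∀ i, Function.support (𝓕 (⇑(h i))) ⊆ Ω i) :
    fproj A (⇑(∑ j, h j)) = 0 := by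
  classical
  refine fproj_eq_of_indicator_fourier_eq (g := 0) (funext fun ξ => ?_)
  rw [← SchwartzMap.fourier_coe 0, FourierTransform.fourier_zero, fourier_coe_sum,
    Set.indicator_apply]
  split_ifs with hξ
  · exact Finset.sum_eq_zero fun j _ => Function.notMem_support.1 fun hjξ =>
      Set.disjoint_left.1 (hA j) hξ (hh j hjξ)
  · rfl

variable {R β q D : ℝ}

lemma disjoint_smallCap (hR : 0 < R) {l m : ℕ} (hlm : l ≠ m) :
    Disjoint (smallCap R β l) (smallCap R β m) := by
  have hδ : 0 < R ^ (-β) := by positivity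
  wlog hlt : l < m generalizing l m
  · exact (this hlm.symm (by omega)).symm
  have hgap : (l : ℝ) + 1 ≤ m := by exact_mod_cast hlt
  refine Set.disjoint_left.2 fun ξ hl hm => ?_
  have := hl.2.1.trans_le ((mul_le_mul_of_nonneg_right hgap hδ.le).trans hm.1)
  exact lt_irrefl _ this

theorem SmallCapDecoupling.decoupling (hR : 0 < R) (hq : 0 < q) (hD : 0 ≤ D)
    (hdec : SmallCapDecoupling R β q D) {m : ι → ℕ} (hm : Function.Injective m)
    (hmR : ∀ i, (m i : ℝ) + 1 ≤ R ^ β) :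
    Decoupling (fun i => smallCap R β (m i)) q (ENNReal.ofReal D) := by
  intro h hh
  have hdisj : Pairwise (Function.onFun Disjoint fun i => smallCap R β (m i)) :=
    fun i j hij => disjoint_smallCap hR (hm.ne hij)
  have hsupp : Function.support (𝓕 (⇑(∑ i, h i))) ⊆ M3 R β := fun ξ hξ => by
    rw [fourier_coe_sum] at hξ
    obtain ⟨i, -, hi⟩ := Finset.exists_ne_zero_of_sum_ne_zero hξ
    exact smallCap_subset_M3 hR (hmR i) (hh i hi)
  have hproj : ∑ i, ∫ x, ‖h i x‖ ^ q = ∑ l ∈ Finset.range ⌈R ^ β⌉₊,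
      ∫ x, ‖fproj (smallCap R β l) (⇑(∑ i, h i)) x‖ ^ q := by
    refine Finset.sum_of_injOn m hm.injOn (fun i _ => ?_) (fun l _ hl => ?_) fun i _ => ?_
    · exact Finset.mem_coe.2 <| Finset.mem_range.2 <| Nat.lt_ceil.2 <|
        (lt_add_one _).trans_le (hmR i)
    · rw [fproj_sum_of_forall_disjoint (fun i => disjoint_smallCap hR ?_) hh]
      · simp [hq.ne']
      · rintro rfl
        exact hl (Set.mem_image_of_mem _ (Finset.mem_coe.2 (Finset.mem_univ i)))
    · rw [fproj_sum_of_pairwise_disjoint hdisj hh i]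
  have hLp : ∀ u : 𝓢(R3, ℂ), ∫⁻ x, ‖u x‖ₑ ^ q = ENNReal.ofReal (∫ x, ‖u x‖ ^ q) := fun u =>
    lintegral_enorm_rpow_eq_ofReal_integral hq (u.memLp _)
  simp_rw [← _root_.sum_apply, hLp]
  rw [← ENNReal.ofReal_sum_of_nonneg fun _ _ => by positivity, ← ENNReal.ofReal_mul hD, hproj]
  exact ENNReal.ofReal_le_ofReal (hdec _ hsupp)

lemma Decoupling.of_preimage_momentMap {Ω : ι → Set R3} {B : ℝ≥0∞} (hq : 0 ≤ q) (a : ℝ) {s t : ℝ}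
    (hs : s ≠ 0) (ht : t ≠ 0) (hΩ : Decoupling (fun i => momentMap a s t ⁻¹' Ω i) q B) :
    Decoupling Ω q B := by
  rw [momentMap_eq_momentLinear_add a hs ht] at hΩ
  exact .of_preimage_affine hq _ _ hΩ

lemma natCast_div_add_one_le {l n : ℕ} (hn : 1 < n) {x : ℝ} (hx : 1 ≤ x) (hl : (l : ℝ) < x) :
    ((l / n : ℕ) : ℝ) + 1 ≤ x := by
  rcases l.eq_zero_or_pos with rfl | hpos
  · simpa using hx
  · exact le_trans (by exact_mod_cast Nat.div_lt_self hpos hn) hl.le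

-- Fixing the residue of the index modulo `100` makes the enlarged caps disjoint; contracting the
-- curve by the factor `100` then turns them into subsets of distinct small caps.
theorem SmallCapDecoupling.decoupling_fatCap (hR : 0 < R) (hRβ : 1 ≤ R ^ β) (hq : 1 ≤ q)
    (hD : 0 ≤ D) (hdec : SmallCapDecoupling R β q D) :
    Decoupling (fun l : Fin ⌈R ^ β⌉₊ => fatCap R β l) q (100 ^ (q - 1) * ENNReal.ofReal D) := by
  have hfiber : ∀ k : Fin 100, Decoupling (fun l : {l : Fin ⌈R ^ β⌉₊ // Fin.ofNat 100 l = k} =>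
      fatCap R β l) q (ENNReal.ofReal D) := fun k => by
    refine .of_preimage_momentMap (by linarith) (-((k - 50) * R ^ (-β) / 100)) (s := 100)
      (t := 100 ^ 3) (by norm_num) (by norm_num) ?_
    refine (hdec.decoupling hR (by linarith) hD (m := fun l => l.1.1 / 100) ?_ ?_).mono
      fun l ξ hξ => mem_smallCap_of_momentMap_mem_fatCap hR ?_
    · intro l m hdiv
      have hmod : (l : ℕ) % 100 = m % 100 := by simpa [Fin.ext_iff] using l.2.trans m.2.symm
      exact Subtype.ext (Fin.ext (Nat.ext_div_mod hdiv hmod))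
    · exact fun l => natCast_div_add_one_le (by norm_num) hRβ (Nat.lt_ceil.1 l.1.2)
    · rwa [← Fin.val_ofNat, l.2]
  have h := Decoupling.of_fiberwise (Ω := fun l : Fin ⌈R ^ β⌉₊ => fatCap R β l) hq
    (fun l => Fin.ofNat 100 l) hfiber
  rwa [Fintype.card_fin] at h

theorem decoupling_two_fatCap (hR : 0 < R) (β : ℝ) :
    Decoupling (fun l : Fin ⌈R ^ β⌉₊ => fatCap R β l) 2 100 := by
  have h := Decoupling.of_fiberwise (Ω := fun l : Fin ⌈R ^ β⌉₊ => fatCap R β l) one_le_two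
    (fun l => Fin.ofNat 100 l) fun k => decoupling_two_of_pairwise_disjoint fun l m hlm =>
      disjoint_fatCap hR (by simpa [Fin.ext_iff] using l.2.trans m.2.symm)
        fun h => hlm (Subtype.ext (Fin.ext h))
  norm_num at h
  exact h

end SmallCaps

section CapCutoffs

open ContinuousLinearMap (mul)

variable {R β A q D : ℝ}

/-- Schwartz kernels `K l` whose Fourier transforms are cutoffs adapted to the small caps, with
`L¹` norms at most `A`: convolution with `K l` reproduces functions with frequencies in the `l`-th
small cap. -/
structure IsCapCutoff (R β A : ℝ) (K : Fin ⌈R ^ β⌉₊ → 𝓢(R3, ℂ)) : Prop where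
  fourier_eq_one : ∀ l : Fin ⌈R ^ β⌉₊, ∀ ξ ∈ smallCap R β l, 𝓕 (⇑(K l)) ξ = 1
  support_fourier_subset : ∀ l : Fin ⌈R ^ β⌉₊, Function.support (𝓕 (⇑(K l))) ⊆ fatCap R β l
  integral_norm_le : ∀ l, ∫ x, ‖K l x‖ ≤ A

lemma exists_fourier_eq_comp_momentMap (a : ℝ) {s t : ℝ} (hs : s ≠ 0) (ht : t ≠ 0)
    (φ : 𝓢(R3, ℂ)) : ∃ K : 𝓢(R3, ℂ), (∀ ξ, 𝓕 (⇑K) ξ = φ (momentMap a s t ξ)) ∧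
      ∫ x, ‖K x‖ = ∫ x, ‖𝓕⁻ φ x‖ := by
  refine ⟨𝓕⁻ (compAffine (momentLinear a hs ht) !₂[-(s * a), s ^ 2 * a ^ 2, -(t * a ^ 3)] φ),
    fun ξ => ?_, integral_norm_fourierInv_compAffine _ _ φ⟩
  rw [← SchwartzMap.fourier_coe, FourierTransform.fourier_fourierInv_eq, compAffine_apply,
    momentMap_eq_momentLinear_add a hs ht]

theorem exists_isCapCutoff (hβ : 1 / 3 ≤ β) :
    ∃ A > 0, ∀ R, 1 ≤ R → ∃ K : Fin ⌈R ^ β⌉₊ → 𝓢(R3, ℂ), IsCapCutoff R β A K := by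
  obtain ⟨φ, hφ_one, hφ_supp⟩ := exists_schwartz_bump (V := R3) (r := 10) (s := 11)
    (by norm_num) (by norm_num)
  refine ⟨(∫ x, ‖𝓕⁻ φ x‖) + 1, add_pos_of_nonneg_of_pos (by positivity) one_pos, fun R hR => ?_⟩
  have hR₀ : 0 < R := by linarith
  have hδ : (R ^ (-β))⁻¹ ≠ 0 := by positivity
  choose K hK hKint using fun l : Fin ⌈R ^ β⌉₊ =>
    exists_fourier_eq_comp_momentMap (l * R ^ (-β)) hδ hR₀.ne' φ
  refine ⟨K, fun l ξ hξ => ?_, fun l ξ hξ => ?_, fun l => ?_⟩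
  · rw [hK]
    exact hφ_one _ (norm_capChart_le_of_mem_smallCap hβ hR hξ)
  · rw [Function.mem_support, hK] at hξ
    exact mem_fatCap_of_norm_capChart_le hβ hR (hφ_supp _ hξ)
  · rw [hKint]
    exact le_add_of_nonneg_right zero_le_one

lemma memLp_of_norm_le_of_exponent_le {X E : Type*} [MeasurableSpace X] {μ : Measure X}
    [NormedAddCommGroup E] {u : X → E} {M r p : ℝ} (hM : ∀ x, ‖u x‖ ≤ M) (hr : 0 < r) (hrp : r ≤ p)
    (hu : MemLp u (ENNReal.ofReal r) μ) : MemLp u (ENNReal.ofReal p) μ := by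
  have hp : 0 < p := hr.trans_le hrp
  have hint := hu.integrable_norm_rpow (by simpa using hr) ENNReal.ofReal_ne_top
  rw [ENNReal.toReal_ofReal hr.le] at hint
  rw [← integrable_norm_rpow_iff hu.1 (by simpa using hp) ENNReal.ofReal_ne_top,
    ENNReal.toReal_ofReal hp.le]
  refine (hint.const_mul (M ^ (p - r))).mono'
    (hu.1.norm.aemeasurable.pow_const p).aestronglyMeasurable (.of_forall fun x => ?_)
  have hsplit : ‖u x‖ ^ p = ‖u x‖ ^ (p - r) * ‖u x‖ ^ r := by
    rw [← Real.rpow_add_of_nonneg (norm_nonneg _) (sub_nonneg.2 hrp) hr.le, sub_add_cancel]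
  rw [Real.norm_of_nonneg (by positivity), hsplit]
  have := hM x
  gcongr

lemma measurableSet_smallCap (R β : ℝ) (l : ℕ) : MeasurableSet (smallCap R β l) := by
  have hcoord : ∀ i, Measurable fun ξ : R3 => ξ i := fun i => by fun_prop
  have h₀ := hcoord 0
  have h₁ := hcoord 1
  have h₂ := hcoord 2
  exact (measurableSet_le measurable_const h₀).inter <|
    (measurableSet_lt h₀ measurable_const).inter <|
    (measurableSet_le (h₁.sub (h₀.pow_const 2)).abs measurable_const).inter <|
    measurableSet_le ((h₂.sub ((h₀.const_mul 3).mul h₁)).add ((h₀.pow_const 3).const_mul 2)).abs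
      measurable_const

lemma exists_mem_smallCap (hR : 0 < R) {ξ : R3} (hξ : ξ ∈ M3 R β) (hlt : ξ 0 < 1) :
    ∃ l < ⌈R ^ β⌉₊, ξ ∈ smallCap R β l := by
  obtain ⟨⟨hnonneg, -⟩, hquad, hcubic⟩ := hξ
  have hcancel : ξ 0 * R ^ β * R ^ (-β) = ξ 0 := by
    rw [mul_assoc, ← Real.rpow_add hR, add_neg_cancel, Real.rpow_zero, mul_one]
  have hfloor : (⌊ξ 0 * R ^ β⌋₊ : ℝ) ≤ ξ 0 * R ^ β := Nat.floor_le (by positivity)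
  have hlt_ceil : ⌊ξ 0 * R ^ β⌋₊ < ⌈R ^ β⌉₊ :=
    Nat.lt_ceil.2 (hfloor.trans_lt (mul_lt_of_lt_one_left (by positivity) hlt))
  refine ⟨⌊ξ 0 * R ^ β⌋₊, hlt_ceil, ?_, ?_, hquad, hcubic⟩
  · exact (mul_le_mul_of_nonneg_right hfloor (by positivity)).trans_eq hcancel
  · exact hcancel.symm.trans_lt
      (mul_lt_mul_of_pos_right (Nat.lt_floor_add_one _) (by positivity))

-- The support of a continuous function is open, so it misses the face `ξ 0 = 1` of `M3 R β`.
lemma apply_zero_lt_one_of_support_subset_M3 {u : R3 → ℂ} (hu : Continuous u)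
    (hsupp : Function.support u ⊆ M3 R β) {ξ : R3} (hξ : u ξ ≠ 0) : ξ 0 < 1 := by
  have hsub : Function.support u ⊆ EuclideanSpace.proj (𝕜 := ℝ) (0 : Fin 3) ⁻¹' Set.Iic 1 :=
    fun η hη => (hsupp hη).1.2
  have hmem := interior_maximal hsub hu.isOpen_support hξ
  have hsurj : Function.Surjective (EuclideanSpace.proj (𝕜 := ℝ) (0 : Fin 3)) := fun t =>
    ⟨EuclideanSpace.single 0 t, by simp⟩
  rwa [ContinuousLinearMap.interior_preimage _ hsurj, interior_Iic] at hmem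

lemma sum_indicator_smallCap_eq (hR : 0 < R) {u : R3 → ℂ} (hu : Continuous u)
    (hsupp : Function.support u ⊆ M3 R β) (ξ : R3) :
    ∑ l ∈ Finset.range ⌈R ^ β⌉₊, (smallCap R β l).indicator u ξ = u ξ := by
  by_cases hξ : u ξ = 0
  · exact hξ ▸ Finset.sum_eq_zero fun l _ => by simp [hξ]
  obtain ⟨l, hl, hlξ⟩ := exists_mem_smallCap hR (hsupp hξ)
    (apply_zero_lt_one_of_support_subset_M3 hu hsupp hξ)
  rw [Finset.sum_eq_single_of_mem l (Finset.mem_range.2 hl), Set.indicator_of_mem hlξ]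
  exact fun m _ hm => Set.indicator_of_notMem
    (fun hmξ => Set.disjoint_left.1 (disjoint_smallCap hR hm) hmξ hlξ) _

lemma sum_fproj_smallCap (hR : 0 < R) {f : 𝓢(R3, ℂ)} (hf : Function.support (𝓕 (⇑f)) ⊆ M3 R β)
    (x : R3) : ∑ l ∈ Finset.range ⌈R ^ β⌉₊, fproj (smallCap R β l) f x = f x := by
  have hint : Integrable (𝓕 (⇑f)) := SchwartzMap.fourier_coe f ▸ (𝓕 f).integrable
  have hcont : Continuous (𝓕 (⇑f)) := SchwartzMap.fourier_coe f ▸ (𝓕 f).continuous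
  simp only [fproj]
  rw [← fourierInv_finsetSum _ fun l _ => hint.indicator (measurableSet_smallCap R β l)]
  simp_rw [sum_indicator_smallCap_eq hR hcont hf]
  rw [← SchwartzMap.fourier_coe, ← SchwartzMap.fourierInv_coe,
    FourierTransform.fourierInv_fourier_eq]

lemma IsCapCutoff.synthesis_fproj (hR : 0 < R) {K : Fin ⌈R ^ β⌉₊ → 𝓢(R3, ℂ)}
    (hK : IsCapCutoff R β A K) {f : 𝓢(R3, ℂ)} (hf : Function.support (𝓕 (⇑f)) ⊆ M3 R β) :
    synthesis K (fun z => fproj (smallCap R β z.1) f z.2) = f := by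
  have hint : Integrable (𝓕 (⇑f)) := SchwartzMap.fourier_coe f ▸ (𝓕 f).integrable
  have hreproduce : ∀ l x, (K l ⋆[mul ℂ ℂ] fproj (smallCap R β l) f) x =
      fproj (smallCap R β l) f x := fun l x => by
    have hmul : ∀ ξ, 𝓕 (⇑(K l)) ξ * (smallCap R β l).indicator (𝓕 (⇑f)) ξ =
        (smallCap R β l).indicator (𝓕 (⇑f)) ξ := fun ξ => by
      by_cases hξ : ξ ∈ smallCap R β l
      · rw [hK.fourier_eq_one l ξ hξ, one_mul]
      · rw [Set.indicator_of_notMem hξ, mul_zero]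
    rw [fproj, convolution_fourierInv_eq (K l).integrable
      (hint.indicator (measurableSet_smallCap R β l))]
    simp_rw [hmul]
  ext x
  rw [← sum_fproj_smallCap hR hf x, Finset.sum_range]
  exact Finset.sum_congr rfl fun l _ => hreproduce l x

lemma memLp_fproj {S : Set R3} (hS : MeasurableSet S) (f : 𝓢(R3, ℂ)) {p : ℝ} (hp : 2 ≤ p) :
    MemLp (fproj S f) (ENNReal.ofReal p) := by
  have hint : Integrable (𝓕 (⇑f)) := SchwartzMap.fourier_coe f ▸ (𝓕 f).integrable
  have hsq : MemLp (𝓕 (⇑f)) 2 := SchwartzMap.fourier_coe f ▸ (𝓕 f).memLp 2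
  have htwo := memLp_two_fourierInv (hint.indicator hS) (hsq.indicator hS)
  exact memLp_of_norm_le_of_exponent_le (norm_fourierInv_le_integral_norm _) two_pos hp
    (by simpa [fproj] using htwo)

lemma boundedMeasurable_fproj_sections (f : 𝓢(R3, ℂ)) :
    BoundedMeasurable fun z : Fin ⌈R ^ β⌉₊ × R3 => fproj (smallCap R β z.1) f z.2 :=
  .of_sections fun l : Fin ⌈R ^ β⌉₊ => boundedMeasurable_fourierInv
    ((SchwartzMap.fourier_coe f ▸ (𝓕 f).integrable).indicator (measurableSet_smallCap R β l))

theorem IsCapCutoff.smallCapDecoupling (hR : 0 < R) {K : Fin ⌈R ^ β⌉₊ → 𝓢(R3, ℂ)}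
    (hK : IsCapCutoff R β A K) {p : ℝ} (hp : 2 ≤ p) (hD : 0 ≤ D)
    (hT : IsStrongType (synthesis K) p (ENNReal.ofReal D) (Measure.count.prod volume) volume) :
    SmallCapDecoupling R β p D := by
  intro f hf
  have hp₀ : 0 < p := by linarith
  have hg := boundedMeasurable_fproj_sections (R := R) (β := β) f
  have h := hT _ hg
  have hcap : ∀ l : ℕ, ∫⁻ x, ‖fproj (smallCap R β l) f x‖ₑ ^ p =
      ENNReal.ofReal (∫ x, ‖fproj (smallCap R β l) f x‖ ^ p) := fun l =>
    lintegral_enorm_rpow_eq_ofReal_integral hp₀ (memLp_fproj (measurableSet_smallCap R β l) f hp)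
  rw [hK.synthesis_fproj hR hf, lintegral_count_prod (hg.stronglyMeasurable.enorm.pow_const p),
    lintegral_enorm_rpow_eq_ofReal_integral hp₀ (f.memLp _ volume)] at h
  simp_rw [hcap] at h
  rw [← ENNReal.ofReal_sum_of_nonneg fun _ _ => by positivity, ← ENNReal.ofReal_mul hD,
    ENNReal.ofReal_le_ofReal_iff (by positivity)] at h
  rwa [Finset.sum_range]

end CapCutoffs

section CriticalExponent

variable {R β A D a b p q ε : ℝ} {K : Fin ⌈R ^ β⌉₊ → 𝓢(R3, ℂ)}

lemma IsCapCutoff.isStrongType (hK : IsCapCutoff R β A K) (hA : 0 < A) (hq : 1 ≤ q) (hD : 0 < D)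
    (hdec : Decoupling (fun l : Fin ⌈R ^ β⌉₊ => fatCap R β l) q (ENNReal.ofReal D)) :
    IsStrongType (synthesis K) q (ENNReal.ofReal (D * A ^ q)) (Measure.count.prod volume)
      volume := by
  rw [ENNReal.ofReal_mul hD.le, ← ENNReal.ofReal_rpow_of_pos hA]
  exact hdec.isStrongType_synthesis hq (ENNReal.ofReal_pos.2 hD).ne' ENNReal.ofReal_ne_top hA
    hK.support_fourier_subset hK.integral_norm_le

lemma IsCapCutoff.isStrongType_two (hK : IsCapCutoff R β A K) (hR : 0 < R) (hA : 0 < A) :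
    IsStrongType (synthesis K) 2 (ENNReal.ofReal (100 * A ^ (2 : ℝ))) (Measure.count.prod volume)
      volume :=
  hK.isStrongType hA one_le_two (by norm_num) (by simpa using decoupling_two_fatCap hR β)

lemma IsCapCutoff.isStrongType_critical {C : ℝ} (hK : IsCapCutoff R β A K) (hR : 1 ≤ R)
    (hβ : 0 ≤ β) (hA : 0 < A) (hq : 1 ≤ q) (hC : 0 < C)
    (hdec : SmallCapDecoupling R β q (C * R ^ ε * R ^ (2 * β + 1))) :
    IsStrongType (synthesis K) q
      (ENNReal.ofReal (100 ^ (q - 1) * C * A ^ q * R ^ ε * R ^ (2 * β + 1)))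
      (Measure.count.prod volume) volume := by
  have hR₀ : 0 < R := by linarith
  have hassoc : 100 ^ (q - 1) * C * A ^ q * R ^ ε * R ^ (2 * β + 1) =
      100 ^ (q - 1) * (C * R ^ ε * R ^ (2 * β + 1)) * A ^ q := by ring
  rw [hassoc]
  refine hK.isStrongType hA hq (by positivity) ?_
  have hfat := hdec.decoupling_fatCap hR₀ (Real.one_le_rpow hR hβ) hq (by positivity)
  rwa [ENNReal.ofReal_mul (by positivity), ← ENNReal.ofReal_rpow_of_pos (by norm_num),
    ENNReal.ofReal_ofNat]

lemma IsCapCutoff.norm_synthesis_le (hK : IsCapCutoff R β A K) (hA : 0 ≤ A) (hRβ : 1 ≤ R ^ β)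
    {g : Fin ⌈R ^ β⌉₊ × R3 → ℂ} {M : ℝ} (hM : 0 ≤ M) (hg : ∀ z, ‖g z‖ ≤ M) (x : R3) :
    ‖synthesis K g x‖ ≤ 2 * A * R ^ β * M := by
  have hcard : (⌈R ^ β⌉₊ : ℝ) ≤ 2 * R ^ β := by
    linarith [Nat.ceil_lt_add_one (zero_le_one.trans hRβ)]
  calc ‖synthesis K g x‖ ≤ Fintype.card (Fin ⌈R ^ β⌉₊) * A * M :=
        _root_.norm_synthesis_le hK.integral_norm_le hM hg x
    _ ≤ 2 * R ^ β * A * M := by rw [Fintype.card_fin]; gcongr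
    _ = 2 * A * R ^ β * M := by ring

variable {X Y E F : Type*} [MeasurableSpace X] [NormedAddCommGroup E] [NormedAddCommGroup F]
  [MeasurableSpace Y] {μ : Measure X} [SFinite μ] {ν : Measure Y} {T : (X → E) → Y → F}

-- The truncation level `R ^ (-β / 2)` balances the two terms of the interpolation bound.
theorem IsStrongType.of_lt_critical (hsub : IsSubadditive T)
    (hmeas : ∀ g, BoundedMeasurable g → AEStronglyMeasurable (T g) ν) (hR : 1 ≤ R) (hε : 0 ≤ ε)
    (hq : β * q = 6 * β + 2) (hp : 2 < p) (hpq : p < q) (ha : 0 ≤ a) (hb : 0 ≤ b)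
    (h₂ : IsStrongType T 2 (ENNReal.ofReal a) μ ν)
    (hqq : IsStrongType T q (ENNReal.ofReal (b * R ^ ε * R ^ (2 * β + 1))) μ ν) :
    IsStrongType T p (ENNReal.ofReal
      (p * (2 ^ (2 : ℝ) * a / (p - 2) + 2 ^ q * b / (q - p)) * R ^ ε * R ^ (β * (p / 2 - 1))))
      μ ν := by
  have hR₀ : 0 < R := by linarith
  have : 0 < p - 2 := by linarith
  have : 0 < q - p := by linarith
  refine IsStrongType.mono (IsStrongType.interpolate hsub hmeas two_pos hp hpq (c := R ^ (-β / 2))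
    (by positivity) h₂ hqq) ?_
  have hlow : (R ^ (-β / 2)) ^ (2 - p) = R ^ (β * (p / 2 - 1)) := by
    rw [← Real.rpow_mul hR₀.le]
    ring_nf
  have hhigh : R ^ (2 * β + 1) * (R ^ (-β / 2)) ^ (q - p) = R ^ (β * (p / 2 - 1)) := by
    rw [← Real.rpow_mul hR₀.le, ← Real.rpow_add hR₀]
    congr 1
    linarith
  have hRε : 1 ≤ R ^ ε := Real.one_le_rpow hR hε
  rw [← ENNReal.ofReal_mul (by positivity), ← ENNReal.ofReal_mul (by positivity),
    ← ENNReal.ofReal_mul (by positivity), ← ENNReal.ofReal_mul (by positivity),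
    ← ENNReal.ofReal_add (by positivity) (by positivity), ← ENNReal.ofReal_mul (by linarith)]
  refine ENNReal.ofReal_le_ofReal ?_
  have : 0 ≤ p := by linarith
  calc p * (2 ^ (2 : ℝ) * a * ((R ^ (-β / 2)) ^ (2 - p) / (p - 2)) +
        2 ^ q * (b * R ^ ε * R ^ (2 * β + 1)) * ((R ^ (-β / 2)) ^ (q - p) / (q - p)))
      = p * (2 ^ (2 : ℝ) * a / (p - 2) * (R ^ (-β / 2)) ^ (2 - p) + 2 ^ q * b / (q - p) * R ^ ε *
        (R ^ (2 * β + 1) * (R ^ (-β / 2)) ^ (q - p))) := by ring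
    _ = p * (2 ^ (2 : ℝ) * a / (p - 2) * 1 + 2 ^ q * b / (q - p) * R ^ ε) *
        R ^ (β * (p / 2 - 1)) := by rw [hlow, hhigh]; ring
    _ ≤ p * (2 ^ (2 : ℝ) * a / (p - 2) * R ^ ε + 2 ^ q * b / (q - p) * R ^ ε) *
        R ^ (β * (p / 2 - 1)) := by gcongr
    _ = _ := by ring

theorem IsStrongType.of_critical_lt (hsub : IsSubadditive T)
    (hmeas : ∀ g, BoundedMeasurable g → AEStronglyMeasurable (T g) ν) (hR : 0 < R)
    (hq : β * q = 6 * β + 2) (hq₀ : 0 < q) (hqp : q < p) (hb : 0 ≤ b) (hA : 0 < A)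
    (hqq : IsStrongType T q (ENNReal.ofReal (b * R ^ ε * R ^ (2 * β + 1))) μ ν)
    (htop : ∀ g, ∀ M ≥ 0, (∀ x, ‖g x‖ ≤ M) → ∀ y, ‖T g y‖ ≤ 2 * A * R ^ β * M) :
    IsStrongType T p (ENNReal.ofReal
      (p * (2 ^ q * b * (4 * A) ^ (p - q) / (p - q)) * R ^ ε * R ^ (β * (p - 4) - 1))) μ ν := by
  have : 0 < p - q := by linarith
  refine IsStrongType.mono (IsStrongType.interpolate_top hsub hmeas hq₀ hqp (A := 2 * A * R ^ β)
    (by positivity) hqq htop) ?_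
  have hpow : R ^ (2 * β + 1) * (2 * (2 * A * R ^ β))⁻¹ ^ (q - p) =
      (4 * A) ^ (p - q) * R ^ (β * (p - 4) - 1) := by
    have hassoc : 2 * (2 * A * R ^ β) = 4 * A * R ^ β := by ring
    rw [hassoc, Real.inv_rpow (by positivity), ← Real.rpow_neg (by positivity), neg_sub,
      Real.mul_rpow (by positivity) (by positivity), ← Real.rpow_mul hR.le, mul_left_comm,
      ← Real.rpow_add hR]
    congr 2
    linarith
  rw [← ENNReal.ofReal_mul (by positivity), ← ENNReal.ofReal_mul (by positivity),
    ← ENNReal.ofReal_mul (by linarith)]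
  refine ENNReal.ofReal_le_ofReal (le_of_eq ?_)
  calc p * (2 ^ q * (b * R ^ ε * R ^ (2 * β + 1)) *
        ((2 * (2 * A * R ^ β))⁻¹ ^ (q - p) / (p - q)))
      = p * (2 ^ q * b / (p - q)) * R ^ ε *
        (R ^ (2 * β + 1) * (2 * (2 * A * R ^ β))⁻¹ ^ (q - p)) := by ring
    _ = _ := by rw [hpow]; ring

theorem exists_isStrongType_synthesis {C : ℝ} (hβ : 0 < β) (hp : 2 ≤ p) (hε : 0 ≤ ε) (hA : 0 < A)
    (hC : 0 < C) : ∃ C' > 0, ∀ R, 1 ≤ R → ∀ K : Fin ⌈R ^ β⌉₊ → 𝓢(R3, ℂ), IsCapCutoff R β A K →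
      SmallCapDecoupling R β (6 + 2 / β) (C * R ^ ε * R ^ (2 * β + 1)) →
      IsStrongType (synthesis K) p
        (ENNReal.ofReal (C' * R ^ ε * (R ^ (β * (p / 2 - 1)) + R ^ (β * (p - 4) - 1))))
        (Measure.count.prod volume) volume := by
  set q := 6 + 2 / β with hq_def
  have hq : β * q = 6 * β + 2 := by rw [hq_def]; field_simp
  have hq₁ : 1 ≤ q := le_add_of_le_of_nonneg (by norm_num) (by positivity)
  have hq₀ : 0 < q := by linarith
  set b := 100 ^ (q - 1) * C * A ^ q
  have hb : 0 < b := by positivity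
  rcases hp.eq_or_lt with rfl | hp₂
  · refine ⟨100 * A ^ (2 : ℝ), by positivity, fun R hR K hK _ => ?_⟩
    have hR₀ : 0 < R := by linarith
    refine (hK.isStrongType_two hR₀ hA).mono (ENNReal.ofReal_le_ofReal ?_)
    rw [mul_assoc]
    exact le_mul_of_one_le_right (by positivity) (one_le_mul_of_one_le_of_one_le
      (Real.one_le_rpow hR hε) (le_add_of_le_of_nonneg (by norm_num) (by positivity)))
  rcases lt_trichotomy p q with hpq | rfl | hqp
  · have : 0 < p - 2 := by linarith
    have : 0 < q - p := by linarith
    refine ⟨p * (2 ^ (2 : ℝ) * (100 * A ^ (2 : ℝ)) / (p - 2) + 2 ^ q * b / (q - p)),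
      by positivity, fun R hR K hK hdec => ?_⟩
    have hR₀ : 0 < R := by linarith
    have h := IsStrongType.of_lt_critical (isSubadditive_synthesis K)
      (fun g hg => aestronglyMeasurable_synthesis K hg) hR hε hq hp₂ hpq (by positivity) hb.le
      (hK.isStrongType_two hR₀ hA) (hK.isStrongType_critical hR hβ.le hA hq₁ hC hdec)
    refine h.mono (ENNReal.ofReal_le_ofReal ?_)
    gcongr
    exact le_add_of_nonneg_right (by positivity)
  · have hexp : β * (q - 4) - 1 = 2 * β + 1 := by linarith
    refine ⟨b, hb, fun R hR K hK hdec => ?_⟩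
    refine (hK.isStrongType_critical hR hβ.le hA hq₁ hC hdec).mono (ENNReal.ofReal_le_ofReal ?_)
    rw [hexp]
    gcongr
    exact le_add_of_nonneg_left (by positivity)
  · have : 0 < p - q := by linarith
    refine ⟨p * (2 ^ q * b * (4 * A) ^ (p - q) / (p - q)), by positivity,
      fun R hR K hK hdec => ?_⟩
    have hR₀ : 0 < R := by linarith
    have h := IsStrongType.of_critical_lt (isSubadditive_synthesis K)
      (fun g hg => aestronglyMeasurable_synthesis K hg) hR₀ hq hq₀ hqp hb.le hA
      (hK.isStrongType_critical hR hβ.le hA hq₁ hC hdec)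
      fun g M hM hg => hK.norm_synthesis_le hA.le (Real.one_le_rpow hR hβ.le) hM hg
    refine h.mono (ENNReal.ofReal_le_ofReal ?_)
    gcongr
    exact le_add_of_nonneg_left (by positivity)

theorem critical_exponent_implies_general_general {C : ℝ} (hβ : 1 / 3 ≤ β) (hp : 2 ≤ p)
    (hε : 0 ≤ ε) (hC : 0 < C) : ∃ C' > 0, ∀ R, 1 ≤ R →
      SmallCapDecoupling R β (6 + 2 / β) (C * R ^ ε * R ^ (2 * β + 1)) →
      SmallCapDecoupling R β p
        (C' * R ^ ε * (R ^ (β * (p / 2 - 1)) + R ^ (β * (p - 4) - 1))) := by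
  obtain ⟨A, hA, hcutoff⟩ := exists_isCapCutoff hβ
  obtain ⟨C', hC', hstrong⟩ := exists_isStrongType_synthesis (β := β) (by linarith) hp hε hA hC
  refine ⟨C', hC', fun R hR hdec => ?_⟩
  obtain ⟨K, hK⟩ := hcutoff R hR
  have hR₀ : 0 < R := by linarith
  exact hK.smallCapDecoupling hR₀ hp (by positivity) (hstrong R hR K hK hdec)

end CriticalExponent

/-- **Proposition 3.11.** Small cap decoupling at the critical exponent `p_c = 6 + 2/β`
implies small cap decoupling for every `p ≥ 2`. -/
theorem critical_exponent_implies_general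
    (β : ℝ) (hβ : β ∈ Set.Icc (1/3 : ℝ) 1)
    (hyp : ∀ ε > (0:ℝ), ∃ C > (0:ℝ), ∀ R : ℝ, 2 ≤ R →
      ∀ f : SchwartzMap R3 ℂ, Function.support (𝓕 ⇑f) ⊆ M3 R β →
      (∫ x : R3, ‖f x‖ ^ (6 + 2/β)) ≤
        C * R ^ ε * R ^ (2*β + 1) *
          ∑ l ∈ Finset.range ⌈R ^ β⌉₊,
            ∫ x : R3, ‖fproj (smallCap R β l) (⇑f) x‖ ^ (6 + 2/β)) :
    ∀ p : ℝ, 2 ≤ p → ∀ ε > (0:ℝ), ∃ C' > (0:ℝ), ∀ R : ℝ, 2 ≤ R →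
      ∀ f : SchwartzMap R3 ℂ, Function.support (𝓕 ⇑f) ⊆ M3 R β →
      (∫ x : R3, ‖f x‖ ^ p) ≤
        C' * R ^ ε * (R ^ (β * (p/2 - 1)) + R ^ (β * (p - 4) - 1)) *
          ∑ l ∈ Finset.range ⌈R ^ β⌉₊,
            ∫ x : R3, ‖fproj (smallCap R β l) (⇑f) x‖ ^ p := by
  intro p hp ε hε
  obtain ⟨C, hC, hcrit⟩ := hyp ε hε
  obtain ⟨C', hC', hdec⟩ := critical_exponent_implies_general_general hβ.1 hp hε.le hC
  exact ⟨C', hC', fun R hR => hdec R (by linarith) (hcrit R hR)⟩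
end
end
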